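/- Let H > 0 and let Ω ⊆ ℝ² be an open connected set. Let C ⊆ ∂Ω be a nonempty relatively open arc of the boundary whose exterior curvature is at least 2H, in the sense that for every P ∈ C there exist a point z_P ∈ ℝ² with |P − z_P| = 1/(2H) and an open neighborhood V_P of P such that Ω ∩ V_P ⊆ {Q : |Q − z_P| < 1/(2H)}. Let (u_n) be a sequence of solutions of (CMC) on Ω, each continuous on Ω ∪ C, and let M ∈ ℝ be such that the oscillation of u_n on C is bounded: sup_C u_n − inf_C u_n ≤ M for every n. Then no divergence line of (u_n) has an endpoint at a point of C: for every divergence line L of (u_n), the closure of L in ℝ² does not meet C. -/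

import Mathlib

open Real MeasureTheory Filter Set

noncomputable section

/-- Euclidean norm on `ℝ × ℝ`. -/
def enorm2 (p : ℝ × ℝ) : ℝ := Real.sqrt (p.1 ^ 2 + p.2 ^ 2)

/-- Partial derivative in the `x` direction. -/
def pdx (u : ℝ × ℝ → ℝ) (p : ℝ × ℝ) : ℝ := fderiv ℝ u p (1, 0)

/-- Partial derivative in the `y` direction. -/
def pdy (u : ℝ × ℝ → ℝ) (p : ℝ × ℝ) : ℝ := fderiv ℝ u p (0, 1)

/-- The area element `W_u = √(1 + |∇u|²)`. -/
def Wgraph (u : ℝ × ℝ → ℝ) (p : ℝ × ℝ) : ℝ :=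
  Real.sqrt (1 + (pdx u p) ^ 2 + (pdy u p) ^ 2)

/-- Upward unit normal of the graph of `u`. -/
def normalVec (u : ℝ × ℝ → ℝ) (p : ℝ × ℝ) : ℝ × ℝ × ℝ :=
  (-pdx u p / Wgraph u p, -pdy u p / Wgraph u p, 1 / Wgraph u p)

/-- `u` is a (C²) solution of the constant mean curvature `H` equation on `Ω`. -/
def IsCMCSolution (H : ℝ) (Ω : Set (ℝ × ℝ)) (u : ℝ × ℝ → ℝ) : Prop :=
  ContDiffOn ℝ 2 u Ω ∧ ∀ p ∈ Ω,
    (1 + (pdy u p) ^ 2) * pdx (fun q => pdx u q) p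
      - 2 * (pdx u p) * (pdy u p) * pdy (fun q => pdx u q) p
      + (1 + (pdx u p) ^ 2) * pdy (fun q => pdy u q) p
    = 2 * H * (1 + (pdx u p) ^ 2 + (pdy u p) ^ 2) ^ ((3 : ℝ) / 2)

/-- `C` is a divergence line of the sequence `u` on `Ω`. -/
def IsDivergenceLine (H : ℝ) (Ω : Set (ℝ × ℝ)) (u : ℕ → ℝ × ℝ → ℝ)
    (C : Set (ℝ × ℝ)) : Prop :=
  ∃ z₁ : ℝ × ℝ, C ⊆ Ω ∧ (∀ q ∈ C, enorm2 (q - z₁) = 1 / (2 * H)) ∧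
    IsConnected C ∧ C.Nontrivial ∧
    ∃ φ : ℕ → ℕ, StrictMono φ ∧ ∀ Q ∈ C,
      Tendsto (fun n => normalVec (u (φ n)) Q) atTop
        (nhds (2 * H * (z₁.1 - Q.1), 2 * H * (z₁.2 - Q.2), 0))

/-!
Let `P ∈ C` be an endpoint of a divergence line `L` and put `R = 1 / (2H)`, so that `L` is an arc
of a circle of radius `R` with outward unit normal `n`. The field `X_u = ∇u / W_u` satisfies
`div X_u = 2H` and `|X_u| < 1`; its defect `1 - X_u·n ≥ 0` tends to zero on `L` along the
sequence. The idea is that bounded boundary values keep the defect away from zero, uniformly in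
`u`.

Near `P` the domain lies in a disc of radius `R` whose boundary meets `L` transversally at `P`.
Testing the equation there with a field `ζ φ(±u) (±X_u - e)`, where `ζ` and `φ` vanish near the
far sides of a small box and near `∂Ω` respectively, shows that a small defect on `L` forces `u`
to stay within bounded distance of its boundary values on half of an arc close to `P`.

Suppose the defect on `L` is at most `s²`. Testing with the field `X_u - n`, whose divergence
outside the circle of `L` is nonnegative, shows that the defect on the concentric circle at
distance `t` outside `L` is of order `(s + t)²`. Since the defect is at least of order `W⁻²`, the
area element `W` is at least of order `1 / (s + t)` on most of the arc, and so is the integral of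
`W / (1 + (u - u₀)²)` over it by the bound on `u`. In `t` this integrates to a multiple of
`log (1 / s)`. But the same integral is bounded by the divergence theorem for
`arctan (u - u₀) X_u`, so `s` is bounded from below.
-/

open scoped Topology

/-! ### Vector calculus in the plane -/

/-- Euclidean inner product on `ℝ × ℝ`, whose norm in Mathlib is the supremum norm. -/
def dot (a b : ℝ × ℝ) : ℝ := a.1 * b.1 + a.2 * b.2

/-- The gradient `∇u` as a vector field. -/
def grad (u : ℝ × ℝ → ℝ) (p : ℝ × ℝ) : ℝ × ℝ := (pdx u p, pdy u p)

/-- The divergence of a planar vector field. -/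
def dvg (F : ℝ × ℝ → ℝ × ℝ) (p : ℝ × ℝ) : ℝ :=
  (fderiv ℝ F p (1, 0)).1 + (fderiv ℝ F p (0, 1)).2

lemma dot_comm (a b : ℝ × ℝ) : dot a b = dot b a := by
  simp only [dot]; ring

lemma add_dot (a b c : ℝ × ℝ) : dot (a + b) c = dot a c + dot b c := by
  simp only [dot, Prod.fst_add, Prod.snd_add]; ring

lemma sub_dot (a b c : ℝ × ℝ) : dot (a - b) c = dot a c - dot b c := by
  simp only [dot, Prod.fst_sub, Prod.snd_sub]; ring

lemma smul_dot (r : ℝ) (a b : ℝ × ℝ) : dot (r • a) b = r * dot a b := by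
  simp only [dot, Prod.smul_fst, Prod.smul_snd, smul_eq_mul]; ring

lemma zero_dot (a : ℝ × ℝ) : dot 0 a = 0 := by simp [dot]

lemma dot_self_nonneg (a : ℝ × ℝ) : 0 ≤ dot a a :=
  add_nonneg (mul_self_nonneg _) (mul_self_nonneg _)

lemma dot_sq_le (a b : ℝ × ℝ) : dot a b ^ 2 ≤ dot a a * dot b b := by
  simp only [dot]; nlinarith [sq_nonneg (a.1 * b.2 - a.2 * b.1)]

lemma abs_dot_le {a b : ℝ × ℝ} {r s : ℝ} (hr : 0 ≤ r) (hs : 0 ≤ s) (ha : dot a a ≤ r ^ 2)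
    (hb : dot b b ≤ s ^ 2) : |dot a b| ≤ r * s := by
  refine abs_le_of_sq_le_sq ?_ (by positivity)
  calc dot a b ^ 2 ≤ dot a a * dot b b := dot_sq_le a b
    _ ≤ r ^ 2 * s ^ 2 := mul_le_mul ha hb (dot_self_nonneg b) (by positivity)
    _ = (r * s) ^ 2 := by ring

lemma abs_dot_le_one {a b : ℝ × ℝ} (ha : dot a a ≤ 1) (hb : dot b b ≤ 1) : |dot a b| ≤ 1 := by
  simpa using abs_dot_le zero_le_one zero_le_one (by simpa using ha) (by simpa using hb)

lemma enorm2_sq (p : ℝ × ℝ) : enorm2 p ^ 2 = dot p p := by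
  rw [enorm2, Real.sq_sqrt (by positivity), dot]; ring

lemma fderiv_eq_grad_dot (u : ℝ × ℝ → ℝ) (p v : ℝ × ℝ) : fderiv ℝ u p v = dot (grad u p) v := by
  have hv : v = v.1 • ((1 : ℝ), (0 : ℝ)) + v.2 • ((0 : ℝ), (1 : ℝ)) := by ext <;> simp
  rw [hv, map_add, map_smul, map_smul, ← hv]
  simp only [dot, grad, pdx, pdy, smul_eq_mul]; ring

lemma grad_eq_of_hasFDerivAt {u : ℝ × ℝ → ℝ} {p v : ℝ × ℝ} {D : ℝ × ℝ →L[ℝ] ℝ}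
    (hu : HasFDerivAt u D p) (h₁ : D (1, 0) = v.1) (h₂ : D (0, 1) = v.2) : grad u p = v := by
  simp only [grad, pdx, pdy, hu.fderiv, h₁, h₂]

lemma dvg_smul {f : ℝ × ℝ → ℝ} {F : ℝ × ℝ → ℝ × ℝ} {p : ℝ × ℝ} (hf : DifferentiableAt ℝ f p)
    (hF : DifferentiableAt ℝ F p) :
    dvg (fun q => f q • F q) p = dot (grad f p) (F p) + f p * dvg F p := by
  simp only [dvg, fderiv_fun_smul hf hF, dot, grad, pdx, pdy, add_apply,
    smul_apply, ContinuousLinearMap.smulRight_apply, Prod.fst_add,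
    Prod.snd_add, Prod.smul_fst, Prod.smul_snd, smul_eq_mul]
  ring

lemma dvg_sub {F G : ℝ × ℝ → ℝ × ℝ} {p : ℝ × ℝ} (hF : DifferentiableAt ℝ F p)
    (hG : DifferentiableAt ℝ G p) : dvg (fun q => F q - G q) p = dvg F p - dvg G p := by
  simp only [dvg, fderiv_fun_sub hF hG, sub_apply, Prod.fst_sub, Prod.snd_sub]
  ring

lemma dvg_const (v p : ℝ × ℝ) : dvg (fun _ => v) p = 0 := by
  simp [dvg]

lemma continuousAt_dvg {F : ℝ × ℝ → ℝ × ℝ} {p : ℝ × ℝ} (hF : ContDiffAt ℝ 1 F p) :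
    ContinuousAt (dvg F) p := by
  have h : ContinuousAt (fderiv ℝ F) p := (hF.fderiv_right (m := 0) (by norm_num)).continuousAt
  exact (h.clm_apply continuousAt_const).fst.add (h.clm_apply continuousAt_const).snd

lemma exists_eq_rotation_of_orthonormal {a b : ℝ × ℝ} (ha : dot a a = 1) (hb : dot b b = 1)
    (hab : dot a b = 0) : ∃ ε : ℝ, ε ^ 2 = 1 ∧ b = (-ε * a.2, ε * a.1) := by
  simp only [dot] at ha hb hab
  refine ⟨a.1 * b.2 - a.2 * b.1, ?_, Prod.ext ?_ ?_⟩
  · linear_combination ha * (b.1 * b.1 + b.2 * b.2) + hb - (a.1 * b.1 + a.2 * b.2) * hab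
  · linear_combination a.1 * hab - b.1 * ha
  · linear_combination a.2 * hab - b.2 * ha

lemma dot_sq_add_dot_sq_of_orthonormal {a b : ℝ × ℝ} (ha : dot a a = 1) (hb : dot b b = 1)
    (hab : dot a b = 0) (v : ℝ × ℝ) : dot v a ^ 2 + dot v b ^ 2 = dot v v := by
  obtain ⟨ε, hε, rfl⟩ := exists_eq_rotation_of_orthonormal ha hb hab
  simp only [dot] at ha ⊢
  linear_combination (v.1 ^ 2 + v.2 ^ 2) * ha + (v.1 * a.2 - v.2 * a.1) ^ 2 * hε

lemma dvg_eq_of_orthonormal (F : ℝ × ℝ → ℝ × ℝ) (p : ℝ × ℝ) {a b : ℝ × ℝ} (ha : dot a a = 1)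
    (hb : dot b b = 1) (hab : dot a b = 0) :
    dvg F p = dot (fderiv ℝ F p a) a + dot (fderiv ℝ F p b) b := by
  have expand (v : ℝ × ℝ) :
      fderiv ℝ F p v = v.1 • fderiv ℝ F p (1, 0) + v.2 • fderiv ℝ F p (0, 1) := by
    rw [← map_smul, ← map_smul, ← map_add]; congr 1; ext <;> simp
  obtain ⟨ε, hε, rfl⟩ := exists_eq_rotation_of_orthonormal ha hb hab
  rw [expand a, expand (-ε * a.2, ε * a.1)]
  simp only [dvg, dot, Prod.fst_add, Prod.snd_add, Prod.smul_fst, Prod.smul_snd,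
    smul_eq_mul] at ha ⊢
  generalize fderiv ℝ F p (1, 0) = x
  generalize fderiv ℝ F p (0, 1) = y
  linear_combination (-x.1 - y.2) * ha
    - (x.1 * a.2 ^ 2 + y.2 * a.1 ^ 2 - a.1 * a.2 * (x.2 + y.1)) * hε

theorem integral_le_integral_sub_integral_of_le_fderiv {f k : ℝ × ℝ → ℝ} {l : ℝ → ℝ}
    {A B α β : ℝ} (hAB : A ≤ B) (hαβ : α ≤ β)
    (hf : ∀ x ∈ Icc A B ×ˢ Icc α β, ContDiffAt ℝ 1 f x)
    (hk : ∀ x ∈ Icc A B ×ˢ Icc α β, ContDiffAt ℝ 1 k x)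
    (hα : ∀ x ∈ Icc A B, k (x, α) = 0) (hβ : ∀ x ∈ Icc A B, k (x, β) = 0)
    (hl : IntervalIntegrable l volume A B)
    (hle : ∀ x ∈ Icc A B, l x ≤
      ∫ y in α..β, fderiv ℝ f (x, y) (1, 0) + fderiv ℝ k (x, y) (0, 1)) :
    ∫ x in A..B, l x ≤ (∫ y in α..β, f (B, y)) - ∫ y in α..β, f (A, y) := by
  have hint : IntegrableOn (fun x => fderiv ℝ f x (1, 0) + fderiv ℝ k x (0, 1))
      (Icc A B ×ˢ Icc α β) :=
    ContinuousOn.integrableOn_compact (isCompact_Icc.prod isCompact_Icc) fun x hx =>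
      (((((hf x hx).fderiv_right (m := 0) (by norm_num)).continuousAt).clm_apply
        continuousAt_const).add ((((hk x hx).fderiv_right (m := 0)
          (by norm_num)).continuousAt).clm_apply continuousAt_const)).continuousWithinAt
  have hsub : Ioo A B ×ˢ Ioo α β ⊆ Icc A B ×ˢ Icc α β :=
    prod_mono Ioo_subset_Icc_self Ioo_subset_Icc_self
  have side {c : ℝ} (hc : ∀ x ∈ Icc A B, k (x, c) = 0) : ∫ x in A..B, k (x, c) = 0 := by
    rw [← uIcc_of_le hAB] at hc
    rw [intervalIntegral.integral_congr hc, intervalIntegral.integral_zero]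
  have green := integral2_divergence_prod_of_hasFDerivAt f k (fderiv ℝ f) (fderiv ℝ k) A α B β
  rw [uIcc_of_le hAB, uIcc_of_le hαβ, min_eq_left hAB, max_eq_right hAB, min_eq_left hαβ,
    max_eq_right hαβ, side hα, side hβ, sub_zero, zero_add] at green
  rw [← green (fun x hx => (hf x hx).continuousAt.continuousWithinAt)
    (fun x hx => (hk x hx).continuousAt.continuousWithinAt)
    (fun x hx => ((hf x (hsub hx)).differentiableAt one_ne_zero).hasFDerivAt)
    (fun x hx => ((hk x (hsub hx)).differentiableAt one_ne_zero).hasFDerivAt) hint]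
  refine intervalIntegral.integral_mono_on hAB hl ?_ hle
  rw [intervalIntegrable_iff_integrableOn_Icc_of_le hAB]
  rw [IntegrableOn, Measure.volume_eq_prod, ← Measure.prod_restrict] at hint
  refine hint.integral_prod_left.congr (Eventually.of_forall fun x => ?_)
  simp only [intervalIntegral.integral_of_le hαβ, integral_Icc_eq_integral_Ioc]

/-! ### Polar coordinates -/

/-- The outward unit normal of the circles around the origin at the angle `θ`. -/
def radial (θ : ℝ) : ℝ × ℝ := (cos θ, sin θ)

/-- The counterclockwise unit tangent of the circles around the origin at the angle `θ`. -/
def angular (θ : ℝ) : ℝ × ℝ := (-sin θ, cos θ)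

/-- The point with polar coordinates `(ρ, θ)`. -/
def polar (ρ θ : ℝ) : ℝ × ℝ := ρ • radial θ

lemma radial_dot_radial (θ : ℝ) : dot (radial θ) (radial θ) = 1 := by
  simp only [dot, radial]; linear_combination sin_sq_add_cos_sq θ

lemma angular_dot_angular (θ : ℝ) : dot (angular θ) (angular θ) = 1 := by
  simp only [dot, angular]; linear_combination sin_sq_add_cos_sq θ

lemma radial_dot_angular (θ : ℝ) : dot (radial θ) (angular θ) = 0 := by
  simp only [dot, radial, angular]; ring

lemma dot_radial_sq_add_dot_angular_sq (v : ℝ × ℝ) (θ : ℝ) :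
    dot v (radial θ) ^ 2 + dot v (angular θ) ^ 2 = dot v v :=
  dot_sq_add_dot_sq_of_orthonormal (radial_dot_radial θ) (angular_dot_angular θ)
    (radial_dot_angular θ) v

lemma polar_dot_polar (ρ θ : ℝ) : dot (polar ρ θ) (polar ρ θ) = ρ ^ 2 := by
  rw [polar, smul_dot, dot_comm, smul_dot, radial_dot_radial]; ring

lemma contDiff_radial : ContDiff ℝ 1 radial := by unfold radial; fun_prop

lemma contDiff_angular : ContDiff ℝ 1 angular := by unfold angular; fun_prop

lemma contDiff_polar : ContDiff ℝ 1 fun x : ℝ × ℝ => polar x.1 x.2 :=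
  contDiff_fst.smul (contDiff_radial.comp contDiff_snd)

lemma continuous_polar (ρ : ℝ) : Continuous (polar ρ) :=
  contDiff_polar.continuous.comp (Continuous.prodMk_right ρ)

lemma hasDerivAt_radial (θ : ℝ) : HasDerivAt radial (angular θ) θ :=
  (hasDerivAt_cos θ).prodMk (hasDerivAt_sin θ)

lemma hasDerivAt_angular (θ : ℝ) : HasDerivAt angular (-radial θ) θ :=
  (hasDerivAt_sin θ).neg.prodMk (hasDerivAt_cos θ)

lemma hasDerivAt_dot {a b : ℝ → ℝ × ℝ} {a' b' : ℝ × ℝ} {x : ℝ} (ha : HasDerivAt a a' x)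
    (hb : HasDerivAt b b' x) :
    HasDerivAt (fun y => dot (a y) (b y)) (dot a' (b x) + dot (a x) b') x := by
  have h := ((hasFDerivAt_fst.comp_hasDerivAt x ha).mul (hasFDerivAt_fst.comp_hasDerivAt x hb)).add
    ((hasFDerivAt_snd.comp_hasDerivAt x ha).mul (hasFDerivAt_snd.comp_hasDerivAt x hb))
  refine h.congr_deriv ?_
  simp only [Function.comp_apply, ContinuousLinearMap.coe_fst', ContinuousLinearMap.coe_snd', dot]
  ring

lemma contDiffAt_dot {E : Type*} [NormedAddCommGroup E] [NormedSpace ℝ E] {a b : E → ℝ × ℝ} {x : E}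
    (ha : ContDiffAt ℝ 1 a x) (hb : ContDiffAt ℝ 1 b x) :
    ContDiffAt ℝ 1 (fun y => dot (a y) (b y)) x :=
  (ha.fst.mul hb.fst).add (ha.snd.mul hb.snd)

lemma continuousAt_dot {E : Type*} [TopologicalSpace E] {a b : E → ℝ × ℝ} {x : E}
    (ha : ContinuousAt a x) (hb : ContinuousAt b x) : ContinuousAt (fun y => dot (a y) (b y)) x :=
  (ha.fst.mul hb.fst).add (ha.snd.mul hb.snd)

section PolarDivergence

variable {F : ℝ × ℝ → ℝ × ℝ} {w g : ℝ → ℝ} {A B α β ρ θ : ℝ}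

/-- The flux of the field `F`, weighted by `g(θ)`, through the arc `α ≤ θ ≤ β` of the circle of
radius `ρ` around the origin. -/
def arcFlux (F : ℝ × ℝ → ℝ × ℝ) (g : ℝ → ℝ) (α β ρ : ℝ) : ℝ :=
  ∫ θ in α..β, g θ * (ρ * dot (F (polar ρ θ)) (radial θ))

/-- The density, in the coordinates `(ρ, θ)`, of the divergence of the field `w(ρ) g(θ) F`. -/
def polarDvg (F : ℝ × ℝ → ℝ × ℝ) (w g : ℝ → ℝ) (ρ θ : ℝ) : ℝ :=
  w ρ * g θ * (ρ * dvg F (polar ρ θ)) + deriv w ρ * g θ * (ρ * dot (F (polar ρ θ)) (radial θ))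
    + w ρ * deriv g θ * dot (F (polar ρ θ)) (angular θ)

lemma hasDerivAt_radial_component (hF : DifferentiableAt ℝ F (polar ρ θ)) :
    HasDerivAt (fun r => dot (F (polar r θ)) (radial θ))
      (dot (fderiv ℝ F (polar ρ θ) (radial θ)) (radial θ)) ρ := by
  have hpolar : HasDerivAt (fun r => polar r θ) (radial θ) ρ := by
    simpa [polar] using (hasDerivAt_id ρ).smul_const (radial θ)
  simpa [dot] using hasDerivAt_dot (hF.hasFDerivAt.comp_hasDerivAt ρ hpolar)
    (hasDerivAt_const ρ (radial θ))

lemma hasDerivAt_angular_component (hF : DifferentiableAt ℝ F (polar ρ θ)) :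
    HasDerivAt (fun s => dot (F (polar ρ s)) (angular s))
      (ρ * dot (fderiv ℝ F (polar ρ θ) (angular θ)) (angular θ)
        - dot (F (polar ρ θ)) (radial θ)) θ := by
  have hpolar : HasDerivAt (polar ρ) (ρ • angular θ) θ := (hasDerivAt_radial θ).const_smul ρ
  refine (hasDerivAt_dot (hF.hasFDerivAt.comp_hasDerivAt θ hpolar)
    (hasDerivAt_angular θ)).congr_deriv ?_
  simp only [Function.comp_apply, map_smul, dot, Prod.smul_fst, Prod.smul_snd, smul_eq_mul,
    Prod.fst_neg, Prod.snd_neg]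
  ring

lemma fderiv_add_fderiv_eq_polarDvg {f k : ℝ × ℝ → ℝ}
    (hf : f = fun x => w x.1 * g x.2 * (x.1 * dot (F (polar x.1 x.2)) (radial x.2)))
    (hk : k = fun x => w x.1 * g x.2 * dot (F (polar x.1 x.2)) (angular x.2))
    (hfd : DifferentiableAt ℝ f (ρ, θ)) (hkd : DifferentiableAt ℝ k (ρ, θ))
    (hF : DifferentiableAt ℝ F (polar ρ θ)) (hw : DifferentiableAt ℝ w ρ)
    (hg : DifferentiableAt ℝ g θ) :
    fderiv ℝ f (ρ, θ) (1, 0) + fderiv ℝ k (ρ, θ) (0, 1) = polarDvg F w g ρ θ := by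
  have hf' : HasDerivAt (fun r => f (r, θ)) (fderiv ℝ f (ρ, θ) (1, 0)) ρ :=
    hfd.hasFDerivAt.comp_hasDerivAt ρ ((hasDerivAt_id ρ).prodMk (hasDerivAt_const ρ θ))
  have hk' : HasDerivAt (fun s => k (ρ, s)) (fderiv ℝ k (ρ, θ) (0, 1)) θ :=
    hkd.hasFDerivAt.comp_hasDerivAt θ ((hasDerivAt_const θ ρ).prodMk (hasDerivAt_id θ))
  subst hf hk
  rw [hf'.unique ((hw.hasDerivAt.mul_const (g θ)).mul
      ((hasDerivAt_id ρ).mul (hasDerivAt_radial_component hF))),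
    hk'.unique ((hg.hasDerivAt.const_mul (w ρ)).mul (hasDerivAt_angular_component hF)), polarDvg,
    dvg_eq_of_orthonormal F _ (radial_dot_radial θ) (angular_dot_angular θ) (radial_dot_angular θ)]
  simp only [id]
  ring

theorem integral_le_arcFlux_sub_arcFlux {l : ℝ → ℝ} (hAB : A ≤ B) (hαβ : α ≤ β)
    (hF : ∀ ρ ∈ Icc A B, ∀ θ ∈ Icc α β, ContDiffAt ℝ 1 F (polar ρ θ))
    (hw : ∀ ρ ∈ Icc A B, ContDiffAt ℝ 1 w ρ) (hg : ContDiff ℝ 1 g)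
    (hα : ∀ ρ ∈ Icc A B, g α * dot (F (polar ρ α)) (angular α) = 0)
    (hβ : ∀ ρ ∈ Icc A B, g β * dot (F (polar ρ β)) (angular β) = 0)
    (hl : IntervalIntegrable l volume A B)
    (hle : ∀ ρ ∈ Icc A B, l ρ ≤ ∫ θ in α..β, polarDvg F w g ρ θ) :
    ∫ ρ in A..B, l ρ ≤ w B * arcFlux F g α β B - w A * arcFlux F g α β A := by
  set f : ℝ × ℝ → ℝ := fun x => w x.1 * g x.2 * (x.1 * dot (F (polar x.1 x.2)) (radial x.2)) with hf
  set k : ℝ × ℝ → ℝ := fun x => w x.1 * g x.2 * dot (F (polar x.1 x.2)) (angular x.2) with hk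
  have hFc : ∀ x ∈ Icc A B ×ˢ Icc α β, ContDiffAt ℝ 1 (fun y : ℝ × ℝ => F (polar y.1 y.2)) x :=
    fun x hx => (hF x.1 hx.1 x.2 hx.2).comp x contDiff_polar.contDiffAt
  have hwg : ∀ x ∈ Icc A B ×ˢ Icc α β, ContDiffAt ℝ 1 (fun y : ℝ × ℝ => w y.1 * g y.2) x :=
    fun x hx => ((hw x.1 hx.1).comp x contDiffAt_fst).mul (hg.contDiffAt.comp x contDiffAt_snd)
  have hfC : ∀ x ∈ Icc A B ×ˢ Icc α β, ContDiffAt ℝ 1 f x := fun x hx => (hwg x hx).mul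
    (contDiffAt_fst.mul (contDiffAt_dot (hFc x hx) (contDiff_radial.comp contDiff_snd).contDiffAt))
  have hkC : ∀ x ∈ Icc A B ×ˢ Icc α β, ContDiffAt ℝ 1 k x := fun x hx => (hwg x hx).mul
    (contDiffAt_dot (hFc x hx) (contDiff_angular.comp contDiff_snd).contDiffAt)
  have flux (r : ℝ) : ∫ θ in α..β, f (r, θ) = w r * arcFlux F g α β r := by
    simp only [hf, arcFlux, ← intervalIntegral.integral_const_mul, mul_assoc]
  rw [← flux, ← flux]
  refine integral_le_integral_sub_integral_of_le_fderiv hAB hαβ hfC hkC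
    (fun ρ hρ => by simp only [hk, mul_assoc, hα ρ hρ, mul_zero])
    (fun ρ hρ => by simp only [hk, mul_assoc, hβ ρ hρ, mul_zero]) hl fun ρ hρ => ?_
  refine (hle ρ hρ).trans_eq (intervalIntegral.integral_congr fun θ hθ => ?_)
  rw [uIcc_of_le hαβ] at hθ
  exact (fderiv_add_fderiv_eq_polarDvg hf hk ((hfC _ ⟨hρ, hθ⟩).differentiableAt one_ne_zero)
    ((hkC _ ⟨hρ, hθ⟩).differentiableAt one_ne_zero)
    ((hF ρ hρ θ hθ).differentiableAt one_ne_zero) ((hw ρ hρ).differentiableAt one_ne_zero)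
    (hg.differentiable one_ne_zero θ)).symm

lemma continuousOn_polarDvg (hF : ∀ θ ∈ Icc α β, ContDiffAt ℝ 1 F (polar ρ θ))
    (hg : ContDiff ℝ 1 g) : ContinuousOn (polarDvg F w g ρ) (Icc α β) := by
  intro θ hθ
  have hpolar : ContinuousAt (polar ρ) θ := (continuous_polar ρ).continuousAt
  have hFθ : ContinuousAt (fun s => F (polar ρ s)) θ :=
    ContinuousAt.comp (f := polar ρ) (hF θ hθ).continuousAt hpolar
  have hdvg : ContinuousAt (fun s => dvg F (polar ρ s)) θ :=
    ContinuousAt.comp (f := polar ρ) (continuousAt_dvg (hF θ hθ)) hpolar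
  have hg' : ContinuousAt (deriv g) θ := (hg.continuous_deriv le_rfl).continuousAt
  have hgθ : ContinuousAt g θ := hg.continuous.continuousAt
  exact ((((continuousAt_const.mul hgθ).mul (continuousAt_const.mul hdvg)).add
    ((continuousAt_const.mul hgθ).mul (continuousAt_const.mul
      (continuousAt_dot hFθ contDiff_radial.continuous.continuousAt)))).add
    ((continuousAt_const.mul hg').mul
      (continuousAt_dot hFθ contDiff_angular.continuous.continuousAt))).continuousWithinAt

theorem neg_mul_le_arcFlux_sub_arcFlux {K : ℝ} (hAB : A ≤ B) (hαβ : α ≤ β)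
    (hF : ∀ ρ ∈ Icc A B, ∀ θ ∈ Icc α β, ContDiffAt ℝ 1 F (polar ρ θ))
    (hw : ∀ ρ ∈ Icc A B, ContDiffAt ℝ 1 w ρ) (hg : ContDiff ℝ 1 g)
    (hα : ∀ ρ ∈ Icc A B, g α * dot (F (polar ρ α)) (angular α) = 0)
    (hβ : ∀ ρ ∈ Icc A B, g β * dot (F (polar ρ β)) (angular β) = 0)
    (hle : ∀ ρ ∈ Icc A B, ∀ θ ∈ Icc α β, -K ≤ polarDvg F w g ρ θ) :
    -(K * ((β - α) * (B - A))) ≤ w B * arcFlux F g α β B - w A * arcFlux F g α β A := by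
  have h := integral_le_arcFlux_sub_arcFlux (l := fun _ => (β - α) * -K) hAB hαβ hF hw hg hα hβ
    intervalIntegrable_const fun ρ hρ => ?_
  · rw [intervalIntegral.integral_const, smul_eq_mul] at h
    exact le_trans (le_of_eq (by ring)) h
  · calc (β - α) * -K = ∫ _ in α..β, -K := by
          rw [intervalIntegral.integral_const, smul_eq_mul]
      _ ≤ ∫ θ in α..β, polarDvg F w g ρ θ :=
          intervalIntegral.integral_mono_on hαβ intervalIntegrable_const
            ((continuousOn_polarDvg (hF ρ hρ) hg).intervalIntegrable_of_Icc hαβ) (hle ρ hρ)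

end PolarDivergence

/-! ### The field `∇u / W` of a graph -/

/-- The field `∇u / W`, the horizontal part of the downward unit normal of the graph of `u`. -/
def fluxField (u : ℝ × ℝ → ℝ) (p : ℝ × ℝ) : ℝ × ℝ := (Wgraph u p)⁻¹ • grad u p

/-- The constant mean curvature equation in divergence form, `div (∇u / W) = 2H` on `Ω`. -/
def DivCMC (H : ℝ) (Ω : Set (ℝ × ℝ)) (u : ℝ × ℝ → ℝ) : Prop :=
  ContDiffOn ℝ 2 u Ω ∧ ∀ p ∈ Ω, dvg (fluxField u) p = 2 * H

section Graph

variable {u : ℝ × ℝ → ℝ} {p : ℝ × ℝ}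

lemma Wgraph_sq (u : ℝ × ℝ → ℝ) (p : ℝ × ℝ) : Wgraph u p ^ 2 = 1 + dot (grad u p) (grad u p) := by
  rw [Wgraph, Real.sq_sqrt (by positivity)]; simp only [dot, grad]; ring

lemma one_le_Wgraph (u : ℝ × ℝ → ℝ) (p : ℝ × ℝ) : 1 ≤ Wgraph u p := by
  rw [Wgraph, Real.one_le_sqrt]; nlinarith [sq_nonneg (pdx u p), sq_nonneg (pdy u p)]

lemma Wgraph_pos (u : ℝ × ℝ → ℝ) (p : ℝ × ℝ) : 0 < Wgraph u p :=
  one_pos.trans_le (one_le_Wgraph u p)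

lemma Wgraph_smul_fluxField (u : ℝ × ℝ → ℝ) (p : ℝ × ℝ) :
    Wgraph u p • fluxField u p = grad u p := smul_inv_smul₀ (Wgraph_pos u p).ne' _

lemma grad_dot_fluxField (u : ℝ × ℝ → ℝ) (p : ℝ × ℝ) :
    dot (grad u p) (fluxField u p) = Wgraph u p - (Wgraph u p)⁻¹ := by
  have hW := (Wgraph_pos u p).ne'
  have hgrad : dot (grad u p) (grad u p) = Wgraph u p ^ 2 - 1 := by rw [Wgraph_sq]; ring
  rw [fluxField, dot_comm, smul_dot, hgrad]
  field_simp

lemma fluxField_dot_self (u : ℝ × ℝ → ℝ) (p : ℝ × ℝ) :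
    dot (fluxField u p) (fluxField u p) = 1 - (Wgraph u p)⁻¹ ^ 2 := by
  conv_lhs => rw [fluxField, smul_dot, ← fluxField, grad_dot_fluxField]
  rw [mul_sub, inv_mul_cancel₀ (Wgraph_pos u p).ne', sq]

lemma fluxField_dot_self_le (u : ℝ × ℝ → ℝ) (p : ℝ × ℝ) :
    dot (fluxField u p) (fluxField u p) ≤ 1 := by
  rw [fluxField_dot_self]; linarith [sq_nonneg (Wgraph u p)⁻¹]

lemma contDiffAt_pdx (hu : ContDiffAt ℝ 2 u p) : ContDiffAt ℝ 1 (pdx u) p :=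
  (hu.fderiv_right (m := 1) (by norm_num)).clm_apply contDiffAt_const

lemma contDiffAt_pdy (hu : ContDiffAt ℝ 2 u p) : ContDiffAt ℝ 1 (pdy u) p :=
  (hu.fderiv_right (m := 1) (by norm_num)).clm_apply contDiffAt_const

lemma contDiffAt_Wgraph (hu : ContDiffAt ℝ 2 u p) : ContDiffAt ℝ 1 (Wgraph u) p :=
  ((contDiffAt_const.add ((contDiffAt_pdx hu).pow 2)).add ((contDiffAt_pdy hu).pow 2)).sqrt
    (by positivity)

lemma contDiffAt_fluxField (hu : ContDiffAt ℝ 2 u p) : ContDiffAt ℝ 1 (fluxField u) p :=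
  ((contDiffAt_Wgraph hu).inv (Wgraph_pos u p).ne').smul
    ((contDiffAt_pdx hu).prodMk (contDiffAt_pdy hu))

lemma pdx_pdy_eq_pdy_pdx (hu : ContDiffAt ℝ 2 u p) : pdx (pdy u) p = pdy (pdx u) p := by
  have hd : DifferentiableAt ℝ (fderiv ℝ u) p :=
    (hu.fderiv_right (m := 1) (by norm_num)).differentiableAt one_ne_zero
  have second (v w : ℝ × ℝ) :
      fderiv ℝ (fun q => fderiv ℝ u q v) p w = fderiv ℝ (fderiv ℝ u) p w v := by
    rw [fderiv_clm_apply hd (differentiableAt_const _)]; simp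
  exact (second _ _).trans ((hu.isSymmSndFDerivAt (by simp) _ _).trans (second _ _).symm)

lemma Wgraph_mul_fderiv_Wgraph (hu : ContDiffAt ℝ 2 u p) (v : ℝ × ℝ) :
    Wgraph u p * fderiv ℝ (Wgraph u) p v
      = pdx u p * fderiv ℝ (pdx u) p v + pdy u p * fderiv ℝ (pdy u) p v := by
  have hx := ((contDiffAt_pdx hu).differentiableAt one_ne_zero).hasFDerivAt
  have hy := ((contDiffAt_pdy hu).differentiableAt one_ne_zero).hasFDerivAt
  have hW := ((contDiffAt_Wgraph hu).differentiableAt one_ne_zero).hasFDerivAt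
  have hsq : (fun q => Wgraph u q ^ 2) = fun q => 1 + pdx u q ^ 2 + pdy u q ^ 2 :=
    funext fun q => by rw [Wgraph_sq]; simp only [dot, grad]; ring
  have hW2 : HasFDerivAt (fun q => Wgraph u q ^ 2) _ p := hW.pow 2
  rw [hsq] at hW2
  have h := congrArg (fun D : ℝ × ℝ →L[ℝ] ℝ => D v)
    (hW2.unique (((hx.pow 2).const_add 1).add (hy.pow 2)))
  simp only [add_apply, smul_apply, Nat.add_one_sub_one, pow_one, nsmul_eq_mul, Nat.cast_ofNat,
    smul_eq_mul] at h
  linarith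

lemma dvg_grad (hu : ContDiffAt ℝ 2 u p) : dvg (grad u) p = pdx (pdx u) p + pdy (pdy u) p := by
  have h : fderiv ℝ (grad u) p = (fderiv ℝ (pdx u) p).prod (fderiv ℝ (pdy u) p) :=
    (((contDiffAt_pdx hu).differentiableAt one_ne_zero).hasFDerivAt.prodMk
      ((contDiffAt_pdy hu).differentiableAt one_ne_zero).hasFDerivAt).fderiv
  rw [dvg, h]; rfl

lemma Wgraph_pow_three_mul_dvg_fluxField (hu : ContDiffAt ℝ 2 u p) :
    Wgraph u p ^ 3 * dvg (fluxField u) p =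
      (1 + pdy u p ^ 2) * pdx (pdx u) p - 2 * pdx u p * pdy u p * pdy (pdx u) p
        + (1 + pdx u p ^ 2) * pdy (pdy u) p := by
  have hdvg := dvg_smul ((contDiffAt_Wgraph hu).differentiableAt one_ne_zero)
    ((contDiffAt_fluxField hu).differentiableAt one_ne_zero)
  simp only [Wgraph_smul_fluxField] at hdvg
  have hdot : dot (grad (Wgraph u) p) (fluxField u p)
      = (Wgraph u p)⁻¹ * dot (grad u p) (grad (Wgraph u) p) := by
    rw [fluxField, dot_comm, smul_dot]
  rw [show dvg (fun q => grad u q) p = _ from dvg_grad hu, hdot] at hdvg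
  have hx := Wgraph_mul_fderiv_Wgraph hu (1, 0)
  have hy := Wgraph_mul_fderiv_Wgraph hu (0, 1)
  have hsymm := pdx_pdy_eq_pdy_pdx hu
  have hsq := Wgraph_sq u p
  have hWinv := mul_inv_cancel₀ (Wgraph_pos u p).ne'
  simp only [dot, grad] at hsq hdvg
  unfold pdx pdy at *
  linear_combination (-Wgraph u p ^ 2) * hdvg
    - Wgraph u p * (fderiv ℝ u p (1, 0) * fderiv ℝ (Wgraph u) p (1, 0)
      + fderiv ℝ u p (0, 1) * fderiv ℝ (Wgraph u) p (0, 1)) * hWinv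
    - fderiv ℝ u p (1, 0) * hx - fderiv ℝ u p (0, 1) * hy
    - fderiv ℝ u p (1, 0) * fderiv ℝ u p (0, 1) * hsymm
    + (fderiv ℝ (fun q => fderiv ℝ u q (1, 0)) p (1, 0)
      + fderiv ℝ (fun q => fderiv ℝ u q (0, 1)) p (0, 1)) * hsq

end Graph

lemma IsCMCSolution.divCMC {H : ℝ} {Ω : Set (ℝ × ℝ)} {u : ℝ × ℝ → ℝ} (hΩ : IsOpen Ω)
    (hu : IsCMCSolution H Ω u) : DivCMC H Ω u := by
  refine ⟨hu.1, fun p hp => ?_⟩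
  have hW := Wgraph_pos u p
  have hpow : (1 + pdx u p ^ 2 + pdy u p ^ 2) ^ ((3 : ℝ) / 2) = Wgraph u p ^ 3 := by
    rw [Wgraph, Real.sqrt_eq_rpow, ← Real.rpow_natCast _ 3, ← Real.rpow_mul (by positivity)]
    norm_num
  have heq := (Wgraph_pow_three_mul_dvg_fluxField (hu.1.contDiffAt (hΩ.mem_nhds hp))).trans
    (hu.2 p hp)
  rw [hpow, mul_comm] at heq
  exact mul_right_cancel₀ (pow_pos hW 3).ne' heq

lemma DivCMC.contDiffAt {H : ℝ} {Ω : Set (ℝ × ℝ)} {u : ℝ × ℝ → ℝ} {p : ℝ × ℝ} (hu : DivCMC H Ω u)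
    (hΩ : IsOpen Ω) (hp : p ∈ Ω) : ContDiffAt ℝ 2 u p := hu.1.contDiffAt (hΩ.mem_nhds hp)

/-! ### Rigid motions -/

/-- The affine frame with origin `z` and axes `a`, `b`; a rigid motion if `a`, `b` are
orthonormal. -/
def frame (z a b x : ℝ × ℝ) : ℝ × ℝ := z + (x.1 • a + x.2 • b)

section Frame

variable {z a b x : ℝ × ℝ}

lemma contDiff_frame {n : WithTop ℕ∞} : ContDiff ℝ n (frame z a b) := by
  unfold frame; fun_prop

lemma fderiv_frame (v : ℝ × ℝ) : fderiv ℝ (frame z a b) x v = v.1 • a + v.2 • b := by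
  have h : HasFDerivAt (frame z a b) _ x :=
    (((hasFDerivAt_fst (𝕜 := ℝ) (p := x)).smul_const a).add
      ((hasFDerivAt_snd (𝕜 := ℝ) (p := x)).smul_const b)).const_add z
  rw [h.fderiv]; rfl

lemma hasFDerivAt_frame : HasFDerivAt (frame z a b) (fderiv ℝ (frame z a b) x) x :=
  (contDiff_frame.differentiable one_ne_zero x).hasFDerivAt

lemma grad_comp_frame {u : ℝ × ℝ → ℝ} (hu : DifferentiableAt ℝ u (frame z a b x)) :
    grad (u ∘ frame z a b) x
      = (dot (grad u (frame z a b x)) a, dot (grad u (frame z a b x)) b) := by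
  refine grad_eq_of_hasFDerivAt (hu.hasFDerivAt.comp x hasFDerivAt_frame) ?_ ?_ <;>
    simp [fderiv_frame, fderiv_eq_grad_dot]

lemma dvg_comp_frame {F : ℝ × ℝ → ℝ × ℝ} (ha : dot a a = 1) (hb : dot b b = 1) (hab : dot a b = 0)
    (hF : DifferentiableAt ℝ F (frame z a b x)) :
    dvg (fun y => (dot (F (frame z a b y)) a, dot (F (frame z a b y)) b)) x
      = dvg F (frame z a b x) := by
  have hcomp := hF.hasFDerivAt.comp x hasFDerivAt_frame
  have component (c : ℝ × ℝ) :=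
    (hcomp.fst.mul_const c.1).add (hcomp.snd.mul_const c.2)
  have hfderiv : fderiv ℝ (fun y => (dot (F (frame z a b y)) a, dot (F (frame z a b y)) b)) x = _ :=
    ((component a).prodMk (component b)).fderiv
  rw [dvg_eq_of_orthonormal F _ ha hb hab, dvg, hfderiv]
  simp [fderiv_frame, dot, mul_comm]

variable {H : ℝ} {Ω : Set (ℝ × ℝ)} {u : ℝ × ℝ → ℝ}

lemma fluxField_comp_frame (ha : dot a a = 1) (hb : dot b b = 1) (hab : dot a b = 0)
    (hu : DifferentiableAt ℝ u (frame z a b x)) :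
    fluxField (u ∘ frame z a b) x
      = (dot (fluxField u (frame z a b x)) a, dot (fluxField u (frame z a b x)) b) := by
  have hgrad := grad_comp_frame (z := z) (a := a) (b := b) hu
  have hW : Wgraph (u ∘ frame z a b) x = Wgraph u (frame z a b x) := by
    rw [← sq_eq_sq₀ (Wgraph_pos _ _).le (Wgraph_pos _ _).le, Wgraph_sq, Wgraph_sq, hgrad,
      ← dot_sq_add_dot_sq_of_orthonormal ha hb hab (grad u (frame z a b x)), sq, sq]
    rfl
  rw [fluxField, hW, hgrad, fluxField, smul_dot, smul_dot]
  rfl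

lemma DivCMC.comp_frame (hu : DivCMC H Ω u) (hΩ : IsOpen Ω) (ha : dot a a = 1) (hb : dot b b = 1)
    (hab : dot a b = 0) : DivCMC H (frame z a b ⁻¹' Ω) (u ∘ frame z a b) := by
  have hopen : IsOpen (frame z a b ⁻¹' Ω) :=
    hΩ.preimage (contDiff_frame (n := 0)).continuous
  refine ⟨hu.1.comp contDiff_frame.contDiffOn fun x hx => hx, fun x hx => ?_⟩
  have heq : fluxField (u ∘ frame z a b) =ᶠ[nhds x] fun y =>
      (dot (fluxField u (frame z a b y)) a, dot (fluxField u (frame z a b y)) b) := by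
    filter_upwards [hopen.mem_nhds hx] with y hy
    exact fluxField_comp_frame ha hb hab ((hu.contDiffAt hΩ hy).differentiableAt two_ne_zero)
  rw [← hu.2 _ hx, ← dvg_comp_frame ha hb hab
    ((contDiffAt_fluxField (hu.contDiffAt hΩ hx)).differentiableAt one_ne_zero)]
  simp only [dvg, heq.fderiv_eq]

end Frame

/-! ### Cutoff functions -/

/-- The `C¹` function `(s⁺)²`, from which all cutoffs are built. -/
def sqPos (s : ℝ) : ℝ := max s 0 ^ 2

/-- A `C¹` truncation of slope at most one, which vanishes on `(-∞, c]` and takes values in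
`[1/2, 1)` on `[c + 1, ∞)`. -/
def ramp (c s : ℝ) : ℝ := sqPos (s - c) / (1 + sqPos (s - c))

/-- The quadratic polynomial with zeros `α` and `β` and maximum one. -/
def parabola (α β θ : ℝ) : ℝ := 4 * (θ - α) * (β - θ) / (β - α) ^ 2

/-- A `C¹` angular cutoff supported in `[α, β]`. -/
def bump (α β θ : ℝ) : ℝ := sqPos (parabola α β θ)

section Cutoffs

variable {s c α β θ : ℝ}

lemma sqPos_nonneg (s : ℝ) : 0 ≤ sqPos s := sq_nonneg _

lemma sqPos_of_nonpos (h : s ≤ 0) : sqPos s = 0 := by simp [sqPos, h]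

lemma sqPos_of_nonneg (h : 0 ≤ s) : sqPos s = s ^ 2 := by rw [sqPos, max_eq_left h]

lemma hasDerivAt_sqPos_of_ne_zero (hs : s ≠ 0) : HasDerivAt sqPos (2 * max s 0) s := by
  rcases hs.lt_or_gt with h | h
  · rw [max_eq_right h.le, mul_zero]
    refine (hasDerivAt_const s (0 : ℝ)).congr_of_eventuallyEq ?_
    filter_upwards [Iio_mem_nhds h] with z hz using sqPos_of_nonpos (le_of_lt hz)
  · rw [max_eq_left h.le]
    refine HasDerivAt.congr_of_eventuallyEq (f := fun z => z ^ 2)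
      (by simpa using hasDerivAt_pow 2 s) ?_
    filter_upwards [Ioi_mem_nhds h] with z hz using sqPos_of_nonneg (le_of_lt hz)

lemma hasDerivAt_sqPos (s : ℝ) : HasDerivAt sqPos (2 * max s 0) s := by
  rcases eq_or_ne s 0 with rfl | hs
  · exact hasDerivAt_of_hasDerivAt_of_ne (g := fun y => 2 * max y 0)
      (fun y hy => hasDerivAt_sqPos_of_ne_zero hy) (by unfold sqPos; fun_prop) (by fun_prop)
  · exact hasDerivAt_sqPos_of_ne_zero hs

lemma contDiff_sqPos : ContDiff ℝ 1 sqPos := by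
  refine contDiff_one_iff_deriv.2 ⟨fun s => (hasDerivAt_sqPos s).differentiableAt, ?_⟩
  rw [show deriv sqPos = fun s => 2 * max s 0 from funext fun s => (hasDerivAt_sqPos s).deriv]
  fun_prop

lemma one_add_sqPos_pos (s : ℝ) : 0 < 1 + sqPos s :=
  add_pos_of_pos_of_nonneg one_pos (sqPos_nonneg s)

lemma contDiff_ramp (c : ℝ) : ContDiff ℝ 1 (ramp c) := by
  have h : ContDiff ℝ 1 fun s => sqPos (s - c) := contDiff_sqPos.comp (by fun_prop)
  exact h.div (contDiff_const.add h) fun s => (one_add_sqPos_pos (s - c)).ne'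

lemma ramp_nonneg (c s : ℝ) : 0 ≤ ramp c s :=
  div_nonneg (sqPos_nonneg _) (one_add_sqPos_pos _).le

lemma ramp_le_one (c s : ℝ) : ramp c s ≤ 1 := by
  rw [ramp, div_le_one (one_add_sqPos_pos _)]; linarith

lemma ramp_of_le (h : s ≤ c) : ramp c s = 0 := by
  rw [ramp, sqPos_of_nonpos (sub_nonpos.2 h), zero_div]

lemma lt_of_ramp_lt (h : ramp c s < 1 / 2) : s < c + 1 := by
  by_contra! hs
  have hsq : 1 ≤ sqPos (s - c) := by
    rw [sqPos_of_nonneg (by linarith)]; nlinarith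
  rw [ramp, div_lt_iff₀ (by linarith)] at h
  linarith

lemma deriv_ramp (c s : ℝ) :
    deriv (ramp c) s = 2 * max (s - c) 0 / (1 + sqPos (s - c)) ^ 2 := by
  have h : HasDerivAt (fun s => sqPos (s - c)) (2 * max (s - c) 0) s := by
    simpa [Function.comp_def] using
      (hasDerivAt_sqPos (s - c)).comp s ((hasDerivAt_id s).sub_const c)
  exact (h.div (h.const_add 1) (one_add_sqPos_pos (s - c)).ne').deriv.trans (by ring)

lemma deriv_ramp_nonneg (c s : ℝ) : 0 ≤ deriv (ramp c) s := by
  rw [deriv_ramp]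
  exact div_nonneg (mul_nonneg two_pos.le (le_max_right _ _)) (sq_nonneg _)

lemma deriv_ramp_le_one (c s : ℝ) : deriv (ramp c) s ≤ 1 := by
  rw [deriv_ramp, div_le_one (pow_pos (one_add_sqPos_pos _) 2), sqPos]
  nlinarith [sq_nonneg (max (s - c) 0 - 1), sq_nonneg (max (s - c) 0 ^ 2)]

lemma parabola_nonpos (h : α < β) (hθ : θ ≤ α ∨ β ≤ θ) : parabola α β θ ≤ 0 := by
  refine div_nonpos_of_nonpos_of_nonneg ?_ (sq_nonneg _)
  rcases hθ with hθ | hθ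
  · nlinarith [mul_nonneg (sub_nonneg.2 hθ) (sub_nonneg.2 (hθ.trans h.le))]
  · nlinarith [mul_nonneg (sub_nonneg.2 hθ) (sub_nonneg.2 (h.le.trans hθ))]

lemma max_parabola_le_one (h : α < β) (θ : ℝ) : max (parabola α β θ) 0 ≤ 1 := by
  refine max_le ?_ zero_le_one
  rw [parabola, div_le_one (pow_pos (sub_pos.2 h) 2)]
  nlinarith [sq_nonneg (α + β - 2 * θ)]

lemma hasDerivAt_parabola (α β θ : ℝ) :
    HasDerivAt (parabola α β) (4 * (α + β - 2 * θ) / (β - α) ^ 2) θ :=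
  (((((hasDerivAt_id θ).sub_const α).const_mul 4).mul
    ((hasDerivAt_id θ).const_sub β)).div_const ((β - α) ^ 2)).congr_deriv (by simp; ring)

lemma abs_deriv_parabola_le (h : α < β) (hθ : θ ∈ Icc α β) :
    |deriv (parabola α β) θ| ≤ 4 / (β - α) := by
  have hβα : 0 < β - α := sub_pos.2 h
  have hmid : |α + β - 2 * θ| ≤ β - α := abs_le.2 ⟨by linarith [hθ.2], by linarith [hθ.1]⟩
  rw [(hasDerivAt_parabola α β θ).deriv, abs_div, abs_of_nonneg (sq_nonneg (β - α)), abs_mul,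
    abs_of_pos (four_pos (α := ℝ)), div_le_div_iff₀ (by positivity) hβα]
  nlinarith

lemma deriv_bump (α β θ : ℝ) :
    deriv (bump α β) θ = 2 * max (parabola α β θ) 0 * deriv (parabola α β) θ := by
  rw [(hasDerivAt_parabola α β θ).deriv]
  exact ((hasDerivAt_sqPos _).comp θ (hasDerivAt_parabola α β θ)).deriv

lemma contDiff_bump (α β : ℝ) : ContDiff ℝ 1 (bump α β) :=
  contDiff_sqPos.comp (by unfold parabola; fun_prop)

lemma continuous_bump (α β : ℝ) : Continuous (bump α β) := (contDiff_bump α β).continuous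

lemma bump_nonneg (α β θ : ℝ) : 0 ≤ bump α β θ := sqPos_nonneg _

lemma bump_le_one (h : α < β) (θ : ℝ) : bump α β θ ≤ 1 :=
  pow_le_one₀ (le_max_right _ _) (max_parabola_le_one h θ)

lemma bump_eq_zero (h : α < β) (hθ : θ ≤ α ∨ β ≤ θ) : bump α β θ = 0 :=
  sqPos_of_nonpos (parabola_nonpos h hθ)

lemma abs_deriv_bump_le (h : α < β) (θ : ℝ) : |deriv (bump α β) θ| ≤ 8 / (β - α) := by
  have : 0 < β - α := sub_pos.2 h
  rw [deriv_bump, abs_mul, abs_of_nonneg (mul_nonneg two_pos.le (le_max_right _ _))]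
  by_cases hθ : θ ∈ Icc α β
  · calc 2 * max (parabola α β θ) 0 * |deriv (parabola α β) θ|
        ≤ 2 * 1 * (4 / (β - α)) := by
          gcongr
          exacts [max_parabola_le_one h θ, abs_deriv_parabola_le h hθ]
      _ = 8 / (β - α) := by ring
  · have hθ' : θ ≤ α ∨ β ≤ θ := by
      by_contra! hc
      exact hθ ⟨hc.1.le, hc.2.le⟩
    rw [max_eq_right (parabola_nonpos h hθ'), mul_zero, zero_mul]
    positivity

lemma le_integral_bump (h : α < β) : (β - α) / 3 ≤ ∫ θ in α..β, bump α β θ := by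
  have hβα : β - α ≠ 0 := (sub_pos.2 h).ne'
  have lower (θ : ℝ) : 1 - 8 / (β - α) ^ 2 * (θ - (α + β) / 2) ^ 2 ≤ bump α β θ := by
    have hmid : 1 - 8 / (β - α) ^ 2 * (θ - (α + β) / 2) ^ 2 = 2 * parabola α β θ - 1 := by
      rw [parabola]; field_simp; ring
    rw [hmid, bump, sqPos]
    nlinarith [le_max_left (parabola α β θ) 0, sq_nonneg (max (parabola α β θ) 0 - 1)]
  calc (β - α) / 3 = ∫ θ in α..β, (1 - 8 / (β - α) ^ 2 * (θ - (α + β) / 2) ^ 2) := by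
        rw [intervalIntegral.integral_sub (Continuous.intervalIntegrable (by fun_prop) _ _)
            (Continuous.intervalIntegrable (by fun_prop) _ _),
          intervalIntegral.integral_const_mul,
          intervalIntegral.integral_comp_sub_right (fun x => x ^ 2), integral_pow,
          intervalIntegral.integral_const, smul_eq_mul]
        field_simp; ring
    _ ≤ ∫ θ in α..β, bump α β θ :=
        intervalIntegral.integral_mono h.le (Continuous.intervalIntegrable (by fun_prop) _ _)
          ((continuous_bump α β).intervalIntegrable _ _) lower

end Cutoffs

/-! ### The defect of the flux field -/

/-- The defect `1 - (∇u / W)·n ≥ 0` at the point with polar coordinates `(ρ, θ)`, where `n` is the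
outward normal of the circle of radius `ρ`; it is small where the graph is almost vertical along
the circle. -/
def defect (u : ℝ × ℝ → ℝ) (ρ θ : ℝ) : ℝ := 1 - dot (fluxField u (polar ρ θ)) (radial θ)

/-- The flux of the defect through the arc `α ≤ θ ≤ β` of the circle of radius `ρ`, weighted by the
cutoff `bump α β`. -/
def arcDefect (u : ℝ × ℝ → ℝ) (α β ρ : ℝ) : ℝ := ∫ θ in α..β, bump α β θ * (ρ * defect u ρ θ)

/-- The outward unit normal field of the circles around the origin. -/
def radialField (p : ℝ × ℝ) : ℝ × ℝ := (√(dot p p))⁻¹ • p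

section Defect

variable {H R α β ρ θ s t : ℝ} {Ω : Set (ℝ × ℝ)} {u : ℝ × ℝ → ℝ}

lemma defect_nonneg (u : ℝ × ℝ → ℝ) (ρ θ : ℝ) : 0 ≤ defect u ρ θ :=
  sub_nonneg.2 (abs_le.1 (abs_dot_le_one (fluxField_dot_self_le u _)
    (radial_dot_radial θ).le)).2

lemma defect_le_two (u : ℝ × ℝ → ℝ) (ρ θ : ℝ) : defect u ρ θ ≤ 2 := by
  have h := (abs_le.1 (abs_dot_le_one (fluxField_dot_self_le u (polar ρ θ))
    (radial_dot_radial θ).le)).1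
  rw [defect]; linarith

lemma dot_angular_sq_add_inv_Wgraph_sq_le (u : ℝ × ℝ → ℝ) (ρ θ : ℝ) :
    dot (fluxField u (polar ρ θ)) (angular θ) ^ 2 + (Wgraph u (polar ρ θ))⁻¹ ^ 2
      ≤ 2 * defect u ρ θ := by
  have h := dot_radial_sq_add_dot_angular_sq (fluxField u (polar ρ θ)) θ
  rw [fluxField_dot_self] at h
  rw [defect]
  nlinarith [sq_nonneg (1 - dot (fluxField u (polar ρ θ)) (radial θ))]

lemma sub_le_Wgraph_polar (u : ℝ × ℝ → ℝ) (ρ θ : ℝ) {l : ℝ} (hl : 0 < l) :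
    3 * l / 2 - l ^ 3 * defect u ρ θ ≤ Wgraph u (polar ρ θ) := by
  have h := dot_angular_sq_add_inv_Wgraph_sq_le u ρ θ
  have hW := Wgraph_pos u (polar ρ θ)
  set W := Wgraph u (polar ρ θ)
  have hinv : W⁻¹ ^ 2 / 2 ≤ defect u ρ θ := by
    nlinarith [sq_nonneg (dot (fluxField u (polar ρ θ)) (angular θ))]
  have cube : 3 * l / 2 - l ^ 3 * (W⁻¹ ^ 2 / 2) = W - (l - W) ^ 2 * (l + 2 * W) / (2 * W ^ 2) := by
    field_simp; ring
  have : 0 ≤ (l - W) ^ 2 * (l + 2 * W) / (2 * W ^ 2) := by positivity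
  linarith [mul_le_mul_of_nonneg_left hinv (pow_pos hl 3).le]

lemma DivCMC.continuousAt_defect (hu : DivCMC H Ω u) (hΩ : IsOpen Ω) (hp : polar ρ θ ∈ Ω) :
    ContinuousAt (defect u ρ) θ :=
  continuousAt_const.sub (continuousAt_dot
    (ContinuousAt.comp (f := polar ρ) (contDiffAt_fluxField (hu.contDiffAt hΩ hp)).continuousAt
      (continuous_polar ρ).continuousAt) contDiff_radial.continuous.continuousAt)

lemma contDiffAt_radialField_polar (hρ : 0 < ρ) (θ : ℝ) :
    ContDiffAt ℝ 1 radialField (polar ρ θ) := by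
  have hp : 0 < dot (polar ρ θ) (polar ρ θ) := by rw [polar_dot_polar]; positivity
  have h : ContDiffAt ℝ 1 (fun q : ℝ × ℝ => dot q q) (polar ρ θ) :=
    contDiffAt_dot contDiffAt_id contDiffAt_id
  exact ((h.sqrt hp.ne').inv (Real.sqrt_pos.2 hp).ne').smul contDiffAt_id

lemma radialField_polar (hρ : 0 < ρ) (θ : ℝ) : radialField (polar ρ θ) = radial θ := by
  rw [radialField, polar_dot_polar, Real.sqrt_sq hρ.le, polar, inv_smul_smul₀ hρ.ne']

lemma dvg_radialField_polar (hρ : 0 < ρ) (θ : ℝ) : dvg radialField (polar ρ θ) = 1 / ρ := by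
  have hd := (contDiffAt_radialField_polar hρ θ).differentiableAt one_ne_zero
  have hr : HasDerivAt (fun r => polar r θ) (radial θ) ρ := by
    simpa [polar] using (hasDerivAt_id ρ).smul_const (radial θ)
  have hθ : HasDerivAt (polar ρ) (ρ • angular θ) θ := (hasDerivAt_radial θ).const_smul ρ
  have along_radial : fderiv ℝ radialField (polar ρ θ) (radial θ) = 0 :=
    (hd.hasFDerivAt.comp_hasDerivAt ρ hr).unique <|
      (hasDerivAt_const ρ (radial θ)).congr_of_eventuallyEq <| by
        filter_upwards [Ioi_mem_nhds hρ] with r hr' using radialField_polar hr' θ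
  have along_angular : ρ • fderiv ℝ radialField (polar ρ θ) (angular θ) = angular θ := by
    rw [← map_smul]
    refine (hd.hasFDerivAt.comp_hasDerivAt θ hθ).unique ?_
    rw [show radialField ∘ polar ρ = radial from funext (radialField_polar hρ)]
    exact hasDerivAt_radial θ
  rw [dvg_eq_of_orthonormal _ _ (radial_dot_radial θ) (angular_dot_angular θ)
    (radial_dot_angular θ), along_radial, zero_dot, zero_add,
    ← (smul_right_injective _ hρ.ne').eq_iff.1 (along_angular.trans
      (smul_inv_smul₀ hρ.ne' (angular θ)).symm).symm, smul_dot, angular_dot_angular]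
  ring

lemma arcFlux_fluxField_sub_radialField (hρ : 0 < ρ) :
    arcFlux (fun p => fluxField u p - radialField p) (bump α β) α β ρ = -arcDefect u α β ρ := by
  rw [arcFlux, arcDefect, ← intervalIntegral.integral_neg]
  congr 1 with θ
  rw [sub_dot, radialField_polar hρ, radial_dot_radial, defect]
  ring

-- Completing the square in `τ` absorbs the mixed term, because `τ² ≤ 2ε`.
lemma neg_two_mul_sq_div_le (hR : 0 < R) (hRρ : R ≤ ρ) {q q' w τ ε : ℝ} (hτ : τ ^ 2 ≤ 2 * ε) :
    -(2 * q' ^ 2 / R) ≤ ρ * w ^ 2 * q ^ 2 * ε + w * (2 * q * q') * τ := by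
  have hsq : R * (w * q) ^ 2 * (τ ^ 2 / 2) ≤ ρ * (w * q) ^ 2 * ε := by
    have hρ : 0 ≤ ρ := hR.le.trans hRρ
    gcongr
    linarith
  have square : R * (w * q) ^ 2 * (τ ^ 2 / 2) + w * (2 * q * q') * τ + 2 * q' ^ 2 / R
      = (R * (w * q * τ) + 2 * q') ^ 2 / (2 * R) := by
    field_simp; ring
  have : 0 ≤ (R * (w * q * τ) + 2 * q') ^ 2 / (2 * R) := by positivity
  nlinarith

lemma DivCMC.neg_le_polarDvg (hu : DivCMC H Ω u) (hΩ : IsOpen Ω) (hR : 0 < R)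
    (hRH : 1 ≤ 2 * H * R) (hαβ : α < β) (hs : 0 < s) (hRρ : R ≤ ρ) (hθ : θ ∈ Icc α β)
    (hp : polar ρ θ ∈ Ω) :
    -(32 / ((β - α) ^ 2 * R)) ≤ polarDvg (fun p => fluxField u p - radialField p)
      (fun ρ => (s + ρ - R)⁻¹) (bump α β) ρ θ := by
  have hβα : 0 < β - α := sub_pos.2 hαβ
  have hρ : 0 < ρ := hR.trans_le hRρ
  have hweight : 0 < s + ρ - R := by linarith
  have hw' : deriv (fun ρ => (s + ρ - R)⁻¹) ρ = -((s + ρ - R)⁻¹ ^ 2) :=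
    ((((hasDerivAt_id ρ).const_add s).sub_const R).inv hweight.ne').deriv.trans
      (by simp [div_eq_mul_inv])
  rw [polarDvg, dvg_sub
      ((contDiffAt_fluxField (hu.contDiffAt hΩ hp)).differentiableAt one_ne_zero)
      ((contDiffAt_radialField_polar hρ θ).differentiableAt one_ne_zero), hu.2 _ hp,
    dvg_radialField_polar hρ, sub_dot, sub_dot, radialField_polar hρ, radial_dot_radial,
    radial_dot_angular, hw', deriv_bump, bump, sqPos]
  have hdvg : 0 ≤ (s + ρ - R)⁻¹ * max (parabola α β θ) 0 ^ 2 * (ρ * (2 * H - 1 / ρ)) := by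
    have : 0 < H := by nlinarith
    have : 0 ≤ ρ * (2 * H - 1 / ρ) := by
      rw [mul_sub, mul_one_div_cancel hρ.ne']; nlinarith
    positivity
  have hmixed := neg_two_mul_sq_div_le (q := max (parabola α β θ) 0)
    (q' := deriv (parabola α β) θ) (w := (s + ρ - R)⁻¹) hR hRρ
    ((le_add_of_nonneg_right (sq_nonneg _)).trans (dot_angular_sq_add_inv_Wgraph_sq_le u ρ θ))
  have hslope : 2 * deriv (parabola α β) θ ^ 2 / R ≤ 32 / ((β - α) ^ 2 * R) := by
    calc 2 * deriv (parabola α β) θ ^ 2 / R = 2 * |deriv (parabola α β) θ| ^ 2 / R := by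
          rw [sq_abs]
      _ ≤ 2 * (4 / (β - α)) ^ 2 / R := by gcongr; exact abs_deriv_parabola_le hαβ hθ
      _ = 32 / ((β - α) ^ 2 * R) := by field_simp; norm_num
  rw [defect] at hmixed
  linarith

-- Tests the field `∇u / W - n`, whose divergence `2H - 1 / ρ` is nonnegative as `1 ≤ 2HR`, against
-- the weight `bump / (s + ρ - R)`.
lemma DivCMC.arcDefect_div_le (hu : DivCMC H Ω u) (hΩ : IsOpen Ω) (hR : 0 < R)
    (hRH : 1 ≤ 2 * H * R) (hαβ : α < β) (hs : 0 < s) (ht : 0 ≤ t)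
    (hbox : ∀ ρ ∈ Icc R (R + t), ∀ θ ∈ Icc α β, polar ρ θ ∈ Ω) :
    arcDefect u α β (R + t) / (s + t)
      ≤ arcDefect u α β R / s + 32 / ((β - α) * R) * t := by
  have hβα : 0 < β - α := sub_pos.2 hαβ
  have hweight (ρ) (hρ : ρ ∈ Icc R (R + t)) : s + ρ - R ≠ 0 := by linarith [hρ.1]
  have flux := neg_mul_le_arcFlux_sub_arcFlux (F := fun p => fluxField u p - radialField p)
    (w := fun ρ => (s + ρ - R)⁻¹) (le_add_of_nonneg_right ht) hαβ.le
    (fun ρ hρ θ hθ => (contDiffAt_fluxField (hu.contDiffAt hΩ (hbox ρ hρ θ hθ))).sub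
      (contDiffAt_radialField_polar (hR.trans_le hρ.1) θ))
    (fun ρ hρ => ContDiffAt.inv (by fun_prop) (hweight ρ hρ)) (contDiff_bump α β)
    (fun ρ _ => by rw [bump_eq_zero hαβ (Or.inl le_rfl), zero_mul])
    (fun ρ _ => by rw [bump_eq_zero hαβ (Or.inr le_rfl), zero_mul])
    (fun ρ hρ θ hθ => hu.neg_le_polarDvg hΩ hR hRH hαβ hs hρ.1 hθ (hbox ρ hρ θ hθ))
  rw [arcFlux_fluxField_sub_radialField (by linarith), arcFlux_fluxField_sub_radialField hR,
    show s + (R + t) - R = s + t by ring, show s + R - R = s by ring, add_sub_cancel_left] at flux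
  have hK : 32 / ((β - α) * R) * t = 32 / ((β - α) ^ 2 * R) * ((β - α) * t) := by field_simp
  rw [hK, div_eq_inv_mul, div_eq_inv_mul]
  linarith

end Defect

/-! ### The truncated test field -/

/-- The cutoff `((h - e·(p - q))⁺)²`, which vanishes beyond the line at distance `h` from `q`. -/
def cutoff (e q : ℝ × ℝ) (h : ℝ) (p : ℝ × ℝ) : ℝ := sqPos (h - dot (p - q) e)

/-- The test field `ζ φ(v) (∇v / W - e)` on `Ω`, extended by zero; here `ζ` is the cutoff and `φ`
the ramp, which truncates `v` at the level `k`. -/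
def testField (Ω : Set (ℝ × ℝ)) (v : ℝ × ℝ → ℝ) (e q : ℝ × ℝ) (h k : ℝ) : ℝ × ℝ → ℝ × ℝ :=
  Ω.indicator fun p => (cutoff e q h p * ramp k (v p)) • (fluxField v p - e)

section TestField

variable {Ω : Set (ℝ × ℝ)} {v : ℝ × ℝ → ℝ} {e p q a : ℝ × ℝ} {h k K : ℝ}

lemma cutoff_nonneg (e q : ℝ × ℝ) (h : ℝ) (p : ℝ × ℝ) : 0 ≤ cutoff e q h p := sqPos_nonneg _

lemma contDiff_cutoff (e q : ℝ × ℝ) (h : ℝ) : ContDiff ℝ 1 (cutoff e q h) :=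
  contDiff_sqPos.comp (by unfold dot; fun_prop)

lemma grad_cutoff (e q : ℝ × ℝ) (h : ℝ) (p : ℝ × ℝ) :
    grad (cutoff e q h) p = -(2 * max (h - dot (p - q) e) 0) • e := by
  have hdot : HasFDerivAt (fun p : ℝ × ℝ => h - dot (p - q) e)
      (-(e.1 • ContinuousLinearMap.fst ℝ ℝ ℝ + e.2 • ContinuousLinearMap.snd ℝ ℝ ℝ)) p :=
    (((hasFDerivAt_fst.sub_const q.1).mul_const e.1).add
      ((hasFDerivAt_snd.sub_const q.2).mul_const e.2)).const_sub h
  refine grad_eq_of_hasFDerivAt ((hasDerivAt_sqPos _).comp_hasFDerivAt p hdot) ?_ ?_ <;> simp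

lemma testField_of_mem (hp : p ∈ Ω) :
    testField Ω v e q h k p = (cutoff e q h p * ramp k (v p)) • (fluxField v p - e) :=
  indicator_of_mem hp _

lemma testField_eq_zero (hp : p ∈ Ω → cutoff e q h p = 0) : testField Ω v e q h k p = 0 := by
  by_cases hpΩ : p ∈ Ω
  · rw [testField_of_mem hpΩ, hp hpΩ, zero_mul, zero_smul]
  · exact indicator_of_notMem hpΩ _

lemma testField_eventuallyEq_zero (hk : ∀ᶠ y in 𝓝 p, y ∈ Ω → v y ≤ k) :
    testField Ω v e q h k =ᶠ[𝓝 p] fun _ => 0 := by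
  filter_upwards [hk] with y hy
  by_cases hyΩ : y ∈ Ω
  · rw [testField_of_mem hyΩ, ramp_of_le (hy hyΩ), mul_zero, zero_smul]
  · exact indicator_of_notMem hyΩ _

lemma testField_eventuallyEq (hΩ : IsOpen Ω) (hp : p ∈ Ω) :
    testField Ω v e q h k =ᶠ[𝓝 p] fun y => (cutoff e q h y * ramp k (v y)) • (fluxField v y - e) :=
  (eqOn_indicator (s := Ω)).eventuallyEq_of_mem (hΩ.mem_nhds hp)

lemma contDiffAt_testField (hΩ : IsOpen Ω) (hv : ContDiffOn ℝ 2 v Ω)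
    (hk : p ∉ Ω → ∀ᶠ y in 𝓝 p, y ∈ Ω → v y ≤ k) : ContDiffAt ℝ 1 (testField Ω v e q h k) p := by
  by_cases hp : p ∈ Ω
  · have hvp : ContDiffAt ℝ 2 v p := hv.contDiffAt (hΩ.mem_nhds hp)
    exact (((contDiff_cutoff e q h).contDiffAt.mul
      ((contDiff_ramp k).contDiffAt.comp p (hvp.of_le (by norm_num)))).smul
        ((contDiffAt_fluxField hvp).sub contDiffAt_const)).congr_of_eventuallyEq
          (testField_eventuallyEq hΩ hp)
  · exact contDiffAt_const.congr_of_eventuallyEq (testField_eventuallyEq_zero (hk hp))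

lemma grad_cutoff_mul_ramp (hv : DifferentiableAt ℝ v p) :
    grad (fun y => cutoff e q h y * ramp k (v y)) p
      = ramp k (v p) • grad (cutoff e q h) p +
        (cutoff e q h p * deriv (ramp k) (v p)) • grad v p := by
  have hcut := ((contDiff_cutoff e q h).differentiable one_ne_zero p).hasFDerivAt
  have hramp := (((contDiff_ramp k).differentiable one_ne_zero (v p)).hasDerivAt).comp_hasFDerivAt p
    hv.hasFDerivAt
  refine grad_eq_of_hasFDerivAt (hcut.mul hramp) ?_ ?_ <;>
  simp only [grad, pdx, pdy, add_apply, smul_apply, smul_eq_mul, Prod.fst_add,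
    Prod.snd_add, Prod.smul_fst, Prod.smul_snd] <;> ring

-- The truncation contributes `∇v·(∇v/W - e) ≥ -1/W`, so its steepness does not matter.
lemma neg_one_le_grad_dot_fluxField_sub (he : dot e e = 1) :
    -1 ≤ dot (grad v p) (fluxField v p - e) := by
  have hWp := Wgraph_pos v p
  have hX : dot (fluxField v p) e ≤ 1 :=
    (abs_le.1 (abs_dot_le_one (fluxField_dot_self_le v p) he.le)).2
  have hgrad : dot (grad v p) e = Wgraph v p * dot (fluxField v p) e := by
    rw [← smul_dot, Wgraph_smul_fluxField]
  rw [dot_comm, sub_dot, dot_comm, grad_dot_fluxField, dot_comm e, hgrad]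
  nlinarith [inv_le_one_of_one_le₀ (one_le_Wgraph v p)]

lemma grad_cutoff_dot_fluxField_sub_nonneg (he : dot e e = 1) :
    0 ≤ dot (grad (cutoff e q h) p) (fluxField v p - e) := by
  have hX : dot (fluxField v p) e ≤ 1 :=
    (abs_le.1 (abs_dot_le_one (fluxField_dot_self_le v p) he.le)).2
  rw [grad_cutoff, smul_dot, dot_comm e, sub_dot (fluxField v p), he]
  nlinarith [le_max_right (h - dot (p - q) e) 0]

lemma neg_cutoff_mul_le_dvg_testField (hΩ : IsOpen Ω) (hv : DivCMC K Ω v) (he : dot e e = 1)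
    (hk : p ∉ Ω → ∀ᶠ y in 𝓝 p, y ∈ Ω → v y ≤ k) :
    -(cutoff e q h p * (2 * |K| + 1)) ≤ dvg (testField Ω v e q h k) p := by
  have hcut := cutoff_nonneg e q h p
  by_cases hp : p ∈ Ω
  · have hvp := hv.contDiffAt hΩ hp
    have hdv : DifferentiableAt ℝ v p := hvp.differentiableAt two_ne_zero
    have hX : DifferentiableAt ℝ (fluxField v) p :=
      (contDiffAt_fluxField hvp).differentiableAt one_ne_zero
    have hf : DifferentiableAt ℝ (fun y => cutoff e q h y * ramp k (v y)) p :=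
      ((contDiff_cutoff e q h).differentiable one_ne_zero p).mul
        (((contDiff_ramp k).differentiable one_ne_zero (v p)).comp p hdv)
    rw [show dvg (testField Ω v e q h k) p = _ from congrArg (fun D : ℝ × ℝ →L[ℝ] ℝ × ℝ =>
        (D (1, 0)).1 + (D (0, 1)).2) (testField_eventuallyEq hΩ hp).fderiv_eq, ← dvg,
      dvg_smul hf (hX.sub_const e), dvg_sub hX (differentiableAt_const e), dvg_const, sub_zero,
      hv.2 p hp, grad_cutoff_mul_ramp hdv, add_dot, smul_dot, smul_dot]
    have hφ := ramp_nonneg k (v p)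
    have cutoff_term := mul_nonneg hφ
      (grad_cutoff_dot_fluxField_sub_nonneg (v := v) (p := p) (q := q) (h := h) he)
    have ramp_term : -(cutoff e q h p) ≤ cutoff e q h p * deriv (ramp k) (v p) *
        dot (grad v p) (fluxField v p - e) := by
      have hprod : 0 ≤ cutoff e q h p * deriv (ramp k) (v p) :=
        mul_nonneg hcut (deriv_ramp_nonneg k (v p))
      have := mul_le_mul_of_nonneg_left (deriv_ramp_le_one k (v p)) hcut
      nlinarith [neg_one_le_grad_dot_fluxField_sub (v := v) (p := p) he]
    have curvature_term : -(cutoff e q h p * (2 * |K|)) ≤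
        cutoff e q h p * ramp k (v p) * (2 * K) := by
      have hprod : 0 ≤ cutoff e q h p * ramp k (v p) := mul_nonneg hcut hφ
      have := mul_le_mul_of_nonneg_left (ramp_le_one k (v p)) hcut
      nlinarith [neg_abs_le K, abs_nonneg K]
    linarith
  · rw [dvg, (testField_eventuallyEq_zero (hk hp)).fderiv_eq]
    simp only [fderiv_const_apply, zero_apply, Prod.fst_zero, Prod.snd_zero, add_zero]
    exact neg_nonpos.2 (by positivity)

lemma abs_testField_dot_le (he : dot e e = 1) (ha : dot a a = 1) :
    |dot (testField Ω v e q h k p) a| ≤ 2 * cutoff e q h p := by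
  have hcut := cutoff_nonneg e q h p
  by_cases hp : p ∈ Ω
  · have hsub : |dot (fluxField v p - e) a| ≤ 2 := by
      rw [sub_dot]
      linarith [abs_sub (dot (fluxField v p) a) (dot e a), abs_dot_le_one he.le ha.le,
        abs_dot_le_one (fluxField_dot_self_le v p) ha.le]
    rw [testField_of_mem hp, smul_dot, abs_mul, abs_of_nonneg (mul_nonneg hcut (ramp_nonneg _ _))]
    nlinarith [mul_le_mul_of_nonneg_left (ramp_le_one k (v p)) hcut, ramp_nonneg k (v p),
      abs_nonneg (dot (fluxField v p - e) a)]
  · rw [testField, indicator_of_notMem hp, zero_dot, abs_zero]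
    positivity

end TestField

/-! ### Polar boxes about the endpoint -/

/-- The polar box of size `δ` about the point `polar R 0 = (R, 0)` of the circle of radius `R`. -/
def polarBox (R δ : ℝ) : Set (ℝ × ℝ) :=
  image2 polar (Icc (R - R * δ) (R + R * δ)) (Icc (-δ) δ)

section PolarBox

variable {R δ δ' ρ θ : ℝ} {p : ℝ × ℝ}

lemma polarBox_subset_polarBox (hR : 0 ≤ R) (h : δ ≤ δ') : polarBox R δ ⊆ polarBox R δ' := by
  have := mul_le_mul_of_nonneg_left h hR
  exact image2_subset (Icc_subset_Icc (by linarith) (by linarith))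
    (Icc_subset_Icc (by linarith) h)

lemma polar_mem_polarBox (hR : 0 ≤ R) (hθ : |θ| ≤ δ) : polar R θ ∈ polarBox R δ :=
  have := mul_nonneg hR ((abs_nonneg θ).trans hθ)
  mem_image2_of_mem ⟨by linarith, by linarith⟩ (abs_le.1 hθ)

lemma dot_polar_sub_polar_zero (ρ R θ : ℝ) :
    dot (polar ρ θ - polar R 0) (polar ρ θ - polar R 0)
      = (ρ - R) ^ 2 + 2 * (ρ * R) * (1 - cos θ) := by
  simp only [dot, polar, radial, Prod.fst_sub, Prod.snd_sub, Prod.smul_fst, Prod.smul_snd,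
    smul_eq_mul, cos_zero, sin_zero]
  linear_combination ρ ^ 2 * sin_sq_add_cos_sq θ

lemma dot_sub_polar_zero_le (hR : 0 ≤ R) (hδ : δ ≤ 1) (hp : p ∈ polarBox R δ) :
    dot (p - polar R 0) (p - polar R 0) ≤ (2 * R * δ) ^ 2 := by
  obtain ⟨ρ, hρ, θ, hθ, rfl⟩ := hp
  have : 0 ≤ δ := by linarith [hθ.1, hθ.2]
  have hρδ : (ρ - R) ^ 2 ≤ (R * δ) ^ 2 := sq_le_sq' (by linarith [hρ.1]) (by linarith [hρ.2])
  have hθδ : θ ^ 2 ≤ δ ^ 2 := sq_le_sq' hθ.1 hθ.2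
  have hcos : 1 - cos θ ≤ δ ^ 2 / 2 := by linarith [one_sub_sq_div_two_le_cos (x := θ)]
  have hρR : ρ * R ≤ 2 * R * R := by
    gcongr
    linarith [hρ.2, mul_le_of_le_one_right hR hδ]
  have hprod : ρ * R * (1 - cos θ) ≤ 2 * R * R * (δ ^ 2 / 2) := by
    have : 0 ≤ 1 - cos θ := by linarith [cos_le_one θ]
    gcongr
  rw [dot_polar_sub_polar_zero]
  nlinarith [sq_nonneg (R * δ)]

lemma le_dot_polar_sub_polar_zero (hR : 0 ≤ R) (hδ : δ ≤ 1 / 2)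
    (hρ : ρ ∈ Icc (R - R * δ) (R + R * δ))
    (h : |ρ - R| = R * δ ∨ |θ| = δ) :
    (R * δ / 3) ^ 2 ≤ dot (polar ρ θ - polar R 0) (polar ρ θ - polar R 0) := by
  have hρR : R / 2 ≤ ρ := by linarith [hρ.1, mul_le_mul_of_nonneg_left hδ hR]
  have hcos : 0 ≤ 1 - cos θ := by linarith [cos_le_one θ]
  rw [dot_polar_sub_polar_zero]
  rcases h with h | h
  · have : 0 ≤ ρ * R * (1 - cos θ) := mul_nonneg (mul_nonneg (by linarith) hR) hcos
    rw [← sq_abs (ρ - R), h]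
    linarith [sq_nonneg (R * δ)]
  · have hπ : (1 : ℝ) / 8 ≤ 2 / π ^ 2 := by
      rw [div_le_div_iff₀ (by norm_num) (by positivity)]
      nlinarith [pi_pos, pi_lt_four]
    have hδcos : δ ^ 2 / 8 ≤ 1 - cos θ := by
      have := cos_le_one_sub_mul_cos_sq (x := θ) (by rw [h]; linarith [pi_gt_three])
      have := mul_le_mul_of_nonneg_right hπ (sq_nonneg θ)
      rw [← h, sq_abs]
      linarith
    have : R / 2 * R * (δ ^ 2 / 8) ≤ ρ * R * (1 - cos θ) := by
      have : 0 ≤ ρ * R := mul_nonneg (by linarith) hR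
      gcongr
    nlinarith [sq_nonneg (ρ - R), sq_nonneg (R * δ)]

end PolarBox

section Bisector

variable {R l h D σ : ℝ} {m e y p q : ℝ × ℝ}

lemma exists_bisector (hm : dot m m = 1) (hm2 : 0 < m.2) (hσ : σ ^ 2 = 1) :
    ∃ l : ℝ, ∃ e : ℝ × ℝ, 0 < l ∧ l ≤ 2 - m.2 ^ 2 / 4 ∧ l • e = (σ, 0) + m ∧ dot e e = 1 ∧
      σ * e.1 = l / 2 := by
  simp only [dot] at hm
  have hma : |σ * m.1| < 1 := by
    rw [← sq_lt_one_iff_abs_lt_one]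
    nlinarith
  have hpos : 0 < 2 + 2 * (σ * m.1) := by linarith [(abs_lt.1 hma).1]
  have hl : 0 < √(2 + 2 * (σ * m.1)) := sqrt_pos.2 hpos
  have hls : √(2 + 2 * (σ * m.1)) ^ 2 = 2 + 2 * (σ * m.1) := sq_sqrt hpos.le
  set l := √(2 + 2 * (σ * m.1))
  have hl2 : l ≤ 2 - m.2 ^ 2 / 4 := by
    have hσm : (σ * m.1) ^ 2 = 1 - m.2 ^ 2 := by linear_combination m.1 ^ 2 * hσ + hm
    have : σ * m.1 ≤ 1 - m.2 ^ 2 / 2 := by nlinarith [sq_nonneg (σ * m.1 - 1)]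
    refine le_of_sq_le_sq ?_ (by nlinarith [sq_nonneg m.1])
    nlinarith [sq_nonneg (m.2 ^ 2)]
  refine ⟨l, l⁻¹ • ((σ, 0) + m), hl, hl2, smul_inv_smul₀ hl.ne' _, ?_, ?_⟩ <;>
  · simp only [dot, Prod.smul_fst, Prod.smul_snd, Prod.fst_add, Prod.snd_add, smul_eq_mul]
    field_simp
    nlinarith

lemma mul_enorm2_le_of_abs_le {B : ℝ} (hm : dot m m = 1) (hm2 : 0 ≤ m.2) (hy : |y.1| ≤ B)
    (hym : |dot y m| ≤ B) : m.2 * enorm2 y ≤ 3 * B := by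
  simp only [dot] at hm
  have hm1 : |m.1| ≤ 1 := abs_le_one_iff_mul_self_le_one.2 (by nlinarith)
  have hm2_le : m.2 ≤ 1 := by nlinarith [mul_self_nonneg m.1]
  have hy2 : m.2 * |y.2| ≤ 2 * B := by
    calc m.2 * |y.2| = |dot y m - m.1 * y.1| := by
          rw [show dot y m - m.1 * y.1 = m.2 * y.2 by rw [dot]; ring, abs_mul, abs_of_nonneg hm2]
      _ ≤ |dot y m| + |m.1 * y.1| := abs_sub _ _
      _ ≤ B + 1 * B := by rw [abs_mul]; gcongr
      _ = 2 * B := by ring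
  calc m.2 * enorm2 y ≤ m.2 * (|y.1| + |y.2|) := by
        gcongr
        refine sqrt_le_iff.2 ⟨by positivity, ?_⟩
        rw [← sq_abs y.1, ← sq_abs y.2, add_sq]
        linarith [mul_nonneg (abs_nonneg y.1) (abs_nonneg y.2)]
    _ ≤ 3 * B := by linarith [mul_le_of_le_one_left (abs_nonneg y.1) hm2_le]

-- A point of the disc on the `σ`-side of the circle satisfies `m·y ≥ 0` and `σ y₁ ≥ -|y|² / 2R`,
-- while `l e·y = σ y₁ + m·y`; so `e·y < h` bounds both `y₁` and `m·y`, hence `y`.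
lemma mul_enorm2_le_of_dot_lt (hR : 0 < R) (hm : dot m m = 1) (hm2 : 0 < m.2) (hσ : |σ| = 1)
    (hl : 0 < l) (hl2 : l ≤ 2) (he : l • e = (σ, 0) + m) (hh : 0 < h)
    (hdisc : dot y y < 2 * R * dot y m) (hside : 0 ≤ σ * (2 * R * y.1 + dot y y))
    (hlt : dot y e < h) (hsmall : enorm2 y ≤ m.2 * R / 4) : m.2 * enorm2 y ≤ 12 * h := by
  rw [← enorm2_sq y] at hdisc hside
  have hr0 : 0 ≤ enorm2 y := sqrt_nonneg _
  set r := enorm2 y with hr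
  obtain ⟨q, hq⟩ : ∃ q, 2 * R * q = r ^ 2 := ⟨r ^ 2 / (2 * R), by field_simp⟩
  have hq0 : 0 ≤ q := by nlinarith [sq_nonneg r]
  have hqr : 8 * q ≤ m.2 * r := by nlinarith
  have normal : q < dot y m := by nlinarith
  have tangential : -q ≤ σ * y.1 := by
    have hσr : σ * r ^ 2 ≤ r ^ 2 := mul_le_of_le_one_left (sq_nonneg r) (hσ ▸ le_abs_self σ)
    nlinarith
  have hsum : σ * y.1 + dot y m < 2 * h := by
    have : σ * y.1 + dot y m = l * dot y e := by
      have he1 : l * e.1 = σ + m.1 := congrArg Prod.fst he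
      have he2 : l * e.2 = m.2 := (congrArg Prod.snd he).trans (zero_add _)
      simp only [dot]
      linear_combination (-y.1) * he1 - y.2 * he2
    rw [this]
    nlinarith
  have hy : |y.1| ≤ 2 * h + q := by
    rw [← one_mul |y.1|, ← hσ, ← abs_mul, abs_le]
    constructor <;> linarith
  have hym : |dot y m| ≤ 2 * h + q := abs_le.2 ⟨by linarith, by linarith⟩
  linarith [hr ▸ mul_enorm2_le_of_abs_le hm hm2.le hy hym]

lemma cutoff_le (he : dot e e = 1) (hh : 0 ≤ h) (hD : 0 ≤ D)
    (hp : dot (p - q) (p - q) ≤ D ^ 2) : cutoff e q h p ≤ (h + D) ^ 2 := by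
  have hpe := abs_le.1 (abs_dot_le (s := 1) hD zero_le_one hp (by rw [he, one_pow]))
  have hmax : max (h - dot (p - q) e) 0 ≤ h + D := max_le (by linarith) (by linarith)
  exact pow_le_pow_left₀ (le_max_right _ _) hmax 2

lemma le_cutoff (he : dot e e = 1) (hh : 0 ≤ h) (hp : dot (p - q) (p - q) ≤ (h / 2) ^ 2) :
    h ^ 2 / 4 ≤ cutoff e q h p := by
  have hpe := abs_le.1 (abs_dot_le (s := 1) (by positivity) zero_le_one hp (by rw [he, one_pow]))
  have hmax : h / 2 ≤ max (h - dot (p - q) e) 0 := le_max_of_le_left (by linarith)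
  calc h ^ 2 / 4 = (h / 2) ^ 2 := by ring
    _ ≤ cutoff e q h p := pow_le_pow_left₀ (by positivity) hmax 2

end Bisector

section FluxBalance

variable {F : ℝ × ℝ → ℝ × ℝ} {g : ℝ → ℝ} {A B R δ ρ κ K Z t α β : ℝ}

lemma arcFlux_eq_zero (h : ∀ θ ∈ uIcc α β, F (polar ρ θ) = 0) : arcFlux F g α β ρ = 0 := by
  refine (intervalIntegral.integral_congr fun θ hθ => ?_).trans intervalIntegral.integral_zero
  simp only [h θ hθ, zero_dot, mul_zero]

lemma continuousOn_arcFlux_integrand (hF : ∀ θ ∈ Icc α β, ContDiffAt ℝ 1 F (polar ρ θ))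
    (hg : Continuous g) :
    ContinuousOn (fun θ => g θ * (ρ * dot (F (polar ρ θ)) (radial θ))) (Icc α β) := by
  intro θ hθ
  have hFθ : ContinuousAt (fun s => F (polar ρ s)) θ :=
    ContinuousAt.comp (f := polar ρ) (hF θ hθ).continuousAt (continuous_polar ρ).continuousAt
  exact (hg.continuousAt.mul (continuousAt_const.mul
    (continuousAt_dot hFθ contDiff_radial.continuous.continuousAt))).continuousWithinAt

lemma arcFlux_add_arcFlux_one_sub (hαβ : α ≤ β)
    (hF : ∀ θ ∈ Icc α β, ContDiffAt ℝ 1 F (polar ρ θ)) (hg : Continuous g) :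
    arcFlux F g α β ρ + arcFlux F (fun θ => 1 - g θ) α β ρ = arcFlux F (fun _ => 1) α β ρ := by
  rw [arcFlux, arcFlux, arcFlux, ← intervalIntegral.integral_add]
  · exact intervalIntegral.integral_congr fun θ _ => by ring
  · exact (continuousOn_arcFlux_integrand hF hg).intervalIntegrable_of_Icc hαβ
  · exact (continuousOn_arcFlux_integrand hF (continuous_const.sub hg)).intervalIntegrable_of_Icc
      hαβ

lemma neg_mul_le_arcFlux_sub_of_polarBox (hR : 0 ≤ R) (hAB : A ≤ B) (hA : R - R * δ ≤ A)
    (hB : B ≤ R + R * δ) (hδ : 0 ≤ δ) (hδ1 : δ ≤ 1) (hκ : 0 ≤ κ)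
    (hF : ∀ p ∈ polarBox R δ, ContDiffAt ℝ 1 F p) (hdiv : ∀ p ∈ polarBox R δ, -κ ≤ dvg F p)
    (htan : ∀ p ∈ polarBox R δ, ∀ a, dot a a = 1 → |dot (F p) a| ≤ Z)
    (hg : ContDiff ℝ 1 g) (hg0 : ∀ θ, 0 ≤ g θ) (hg1 : ∀ θ, g θ ≤ 1) (hg' : ∀ θ, |deriv g θ| ≤ K)
    (hside : ∀ ρ ∈ Icc A B, ∀ θ, |θ| = δ → g θ = 0 ∨ F (polar ρ θ) = 0) :
    -((2 * R * κ + K * Z) * (2 * δ * (B - A))) ≤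
      arcFlux F g (-δ) δ B - arcFlux F g (-δ) δ A := by
  have hbox : ∀ ρ ∈ Icc A B, ∀ θ ∈ Icc (-δ) δ, polar ρ θ ∈ polarBox R δ := fun ρ hρ θ hθ =>
    mem_image2_of_mem ⟨hA.trans hρ.1, hρ.2.trans hB⟩ hθ
  have hRδ : R * δ ≤ R := mul_le_of_le_one_right hR hδ1
  have hedge : ∀ ρ ∈ Icc A B, ∀ θ, |θ| = δ → g θ * dot (F (polar ρ θ)) (angular θ) = 0 := by
    intro ρ hρ θ hθ
    rcases hside ρ hρ θ hθ with h | h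
    · rw [h, zero_mul]
    · rw [h, zero_dot, mul_zero]
  have main := neg_mul_le_arcFlux_sub_arcFlux (w := fun _ => 1) (K := 2 * R * κ + K * Z) hAB
    (neg_le_self hδ) (fun ρ hρ θ hθ => hF _ (hbox ρ hρ θ hθ)) (fun _ _ => contDiffAt_const) hg
    (fun ρ hρ => hedge ρ hρ _ (by rw [abs_neg, abs_of_nonneg hδ]))
    (fun ρ hρ => hedge ρ hρ _ (abs_of_nonneg hδ)) fun ρ hρ θ hθ => ?_
  · calc _ = -((2 * R * κ + K * Z) * ((δ - -δ) * (B - A))) := by ring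
      _ ≤ _ := main
      _ = _ := by ring
  · have hρ0 : 0 ≤ ρ := by linarith [hρ.1]
    have hρ2 : ρ ≤ 2 * R := by linarith [hρ.2]
    have angular_term : |deriv g θ * dot (F (polar ρ θ)) (angular θ)| ≤ K * Z := by
      rw [abs_mul]
      exact mul_le_mul (hg' θ) (htan _ (hbox ρ hρ θ hθ) _ (angular_dot_angular θ)) (abs_nonneg _)
        ((abs_nonneg _).trans (hg' θ))
    have div_term : -(2 * R * κ) ≤ g θ * (ρ * dvg F (polar ρ θ)) := by
      have h1 : g θ * ρ * κ ≤ 1 * (2 * R) * κ := by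
        have := hg1 θ
        gcongr
      have h2 := mul_le_mul_of_nonneg_left (hdiv _ (hbox ρ hρ θ hθ)) (mul_nonneg (hg0 θ) hρ0)
      linarith
    simp only [polarDvg, deriv_const, zero_mul, add_zero, one_mul]
    linarith [(abs_le.1 angular_term).1]

/-- The vanishing of `F` on the `σ`-side of the circle of radius `R`, on the far arc and on the
straight sides of the polar box. -/
def VanishesOnFarSide (F : ℝ × ℝ → ℝ × ℝ) (σ R δ : ℝ) : Prop :=
  ∀ ρ ∈ Icc (R - R * δ) (R + R * δ), ∀ θ ∈ Icc (-δ) δ, 0 ≤ σ * (ρ - R) →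
    (|ρ - R| = R * δ ∨ |θ| = δ) → F (polar ρ θ) = 0

lemma VanishesOnFarSide.mul_arcFlux_one_le {σ : ℝ} (hfar : VanishesOnFarSide F σ R δ)
    (hσ : σ = 1 ∨ σ = -1) (hR : 0 ≤ R) (hδ : 0 ≤ δ) (hδ1 : δ ≤ 1) (hκ : 0 ≤ κ)
    (hF : ∀ p ∈ polarBox R δ, ContDiffAt ℝ 1 F p) (hdiv : ∀ p ∈ polarBox R δ, -κ ≤ dvg F p)
    (htan : ∀ p ∈ polarBox R δ, ∀ a, dot a a = 1 → |dot (F p) a| ≤ Z)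
    (hρ : ρ ∈ Icc (R - R * δ) (R + R * δ)) (hρσ : 0 ≤ σ * (ρ - R)) :
    σ * arcFlux F (fun _ => 1) (-δ) δ ρ ≤ 2 * R * κ * (2 * δ * (R * δ - σ * (ρ - R))) := by
  have hRδ : 0 ≤ R * δ := mul_nonneg hR hδ
  have hzero (r : ℝ) (hr : r ∈ Icc (R - R * δ) (R + R * δ)) (hrσ : 0 ≤ σ * (r - R))
      (hrδ : |r - R| = R * δ) : arcFlux F (fun _ => 1) (-δ) δ r = 0 := arcFlux_eq_zero fun θ hθ =>
    hfar r hr θ (uIcc_of_le (neg_le_self hδ) ▸ hθ) hrσ (Or.inl hrδ)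
  have flux {A B : ℝ} (hAB : A ≤ B) (hA : R - R * δ ≤ A) (hB : B ≤ R + R * δ)
      (hABσ : ∀ r ∈ Icc A B, 0 ≤ σ * (r - R)) : -(2 * R * κ * (2 * δ * (B - A))) ≤
        arcFlux F (fun _ => 1) (-δ) δ B - arcFlux F (fun _ => 1) (-δ) δ A := by
    simpa only [zero_mul, add_zero] using neg_mul_le_arcFlux_sub_of_polarBox (g := fun _ => 1)
      (K := 0) hR hAB hA hB hδ hδ1 hκ hF hdiv htan contDiff_const (fun _ => zero_le_one)
      (fun _ => le_rfl) (fun θ => by simp) fun r hr θ hθ => Or.inr <|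
        hfar r ⟨hA.trans hr.1, hr.2.trans hB⟩ θ (abs_le.1 hθ.le) (hABσ r hr) (Or.inr hθ)
  rcases hσ with rfl | rfl
  · have := flux hρ.2 hρ.1 le_rfl fun r hr => by linarith [hr.1]
    rw [hzero (R + R * δ) ⟨by linarith, le_rfl⟩ (by linarith)
      (by rw [add_sub_cancel_left, abs_of_nonneg hRδ])] at this
    linarith
  · have := flux hρ.1 le_rfl hρ.2 fun r hr => by linarith [hr.2]
    rw [hzero (R - R * δ) ⟨le_rfl, by linarith⟩ (by linarith)
      (by rw [sub_sub_cancel_left, abs_neg, abs_of_nonneg hRδ])] at this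
    linarith

-- The arc `ρ = R`, moved outward to `ρ = R + t` according to the weight `bump α β`, closes up with
-- the far arc and the straight sides on its `σ`-side; the field has no flux through the latter.
lemma mul_arcFlux_add_arcFlux_le {σ : ℝ} (hσ : σ = 1 ∨ σ = -1) (hR : 0 ≤ R) (hδ : 0 ≤ δ)
    (hδ1 : δ ≤ 1) (ht : 0 ≤ t) (htδ : t ≤ R * δ) (hαβ : α < β) (hα : -δ ≤ α) (hβ : β ≤ δ)
    (hκ : 0 ≤ κ) (hF : ∀ p ∈ polarBox R δ, ContDiffAt ℝ 1 F p)
    (hdiv : ∀ p ∈ polarBox R δ, -κ ≤ dvg F p)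
    (htan : ∀ p ∈ polarBox R δ, ∀ a, dot a a = 1 → |dot (F p) a| ≤ Z)
    (hfar : VanishesOnFarSide F σ R δ) :
    σ * (arcFlux F (bump α β) (-δ) δ (R + t) + arcFlux F (fun θ => 1 - bump α β θ) (-δ) δ R)
      ≤ 2 * δ * (2 * R * κ * (R * δ + t) + 8 / (β - α) * Z * t) := by
  have hsplit (ρ : ℝ) (hρ : ρ ∈ Icc (R - R * δ) (R + R * δ)) :
      arcFlux F (bump α β) (-δ) δ ρ + arcFlux F (fun θ => 1 - bump α β θ) (-δ) δ ρ
        = arcFlux F (fun _ => 1) (-δ) δ ρ :=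
    arcFlux_add_arcFlux_one_sub (neg_le_self hδ)
      (fun θ hθ => hF _ (mem_image2_of_mem hρ hθ)) (continuous_bump α β)
  have far (ρ : ℝ) := hfar.mul_arcFlux_one_le hσ hR hδ hδ1 hκ hF hdiv htan (ρ := ρ)
  have hκt : 0 ≤ δ * (R * κ * t) := by positivity
  rcases hσ with rfl | rfl
  · have near := neg_mul_le_arcFlux_sub_of_polarBox (A := R) (B := R + t) (K := 8 / (β - α))
      (g := fun θ => 1 - bump α β θ) hR (by linarith) (by linarith) (by linarith) hδ hδ1 hκ hF
      hdiv htan (contDiff_const.sub (contDiff_bump α β)) (fun θ => by linarith [bump_le_one hαβ θ])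
      (fun θ => by linarith [bump_nonneg α β θ])
      (fun θ => by rw [deriv_const_sub, abs_neg]; exact abs_deriv_bump_le hαβ θ)
      fun ρ hρ θ hθ => Or.inr <| hfar ρ ⟨by linarith [hρ.1], by linarith [hρ.2]⟩ θ
        (abs_le.1 hθ.le) (by linarith [hρ.1]) (Or.inr hθ)
    have hRt : R + t ∈ Icc (R - R * δ) (R + R * δ) := ⟨by linarith, by linarith⟩
    linarith [far (R + t) hRt (by linarith), hsplit (R + t) hRt]
  · have near := neg_mul_le_arcFlux_sub_of_polarBox (A := R) (B := R + t) (K := 8 / (β - α)) hR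
      (by linarith) (by linarith) (by linarith) hδ hδ1 hκ hF hdiv htan (contDiff_bump α β)
      (bump_nonneg α β) (bump_le_one hαβ) (abs_deriv_bump_le hαβ) fun ρ _ θ hθ => Or.inl <|
        bump_eq_zero hαβ <| (eq_or_eq_neg_of_abs_eq hθ).symm.imp (fun h => h.trans_le hα)
          fun h => hβ.trans_eq h.symm
    have hRmem : R ∈ Icc (R - R * δ) (R + R * δ) := ⟨by linarith, by linarith⟩
    linarith [far R hRmem (by linarith), hsplit R hRmem]

end FluxBalance

/-! ### Flux estimate near the endpoint -/

/-- The configuration at an endpoint `(R, 0)` of a divergence line, in coordinates centred at the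
centre of the line: the open set `Ω` contains the arc `0 < θ ≤ c` of the circle of radius `R`, while
near the endpoint it lies in the disc of radius `R` centred at `(R, 0) + R m`. The constant `c`
measures both the size of the configuration and the angle between the two circles. -/
structure Endpoint (R c : ℝ) (m : ℝ × ℝ) (Ω : Set (ℝ × ℝ)) : Prop where
  R_pos : 0 < R
  c_pos : 0 < c
  dot_self : dot m m = 1
  le_snd : 400 * c ≤ m.2
  isOpen : IsOpen Ω
  disc : ∀ p ∈ Ω, p ∈ polarBox R c →
    dot (p - polar R 0) (p - polar R 0) < 2 * R * dot (p - polar R 0) m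
  arc : ∀ θ ∈ Ioc 0 c, polar R θ ∈ Ω

section FluxEstimate

variable {H R c δ σ t h k ρ θ : ℝ} {m e p q : ℝ × ℝ} {Ω : Set (ℝ × ℝ)} {u v : ℝ × ℝ → ℝ}

namespace Endpoint

lemma snd_le_one (E : Endpoint R c m Ω) : m.2 ≤ 1 := by
  have := E.dot_self
  simp only [dot] at this
  nlinarith [mul_self_nonneg m.1]

lemma c_le (E : Endpoint R c m Ω) : c ≤ 1 / 400 := by linarith [E.le_snd, E.snd_le_one]

lemma notMem (E : Endpoint R c m Ω) (hθ : θ ∈ Icc (-c) 0) : polar R θ ∉ Ω := by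
  intro hΩ
  have hR := E.R_pos
  have hc := E.c_le
  have hdisc := E.disc _ hΩ (polar_mem_polarBox hR.le (abs_le.2 ⟨hθ.1, hθ.2.trans E.c_pos.le⟩))
  have hm := E.dot_self
  rw [dot_polar_sub_polar_zero] at hdisc
  simp only [dot, polar, radial, Prod.fst_sub, Prod.snd_sub, Prod.smul_fst, Prod.smul_snd,
    smul_eq_mul, cos_zero, sin_zero] at hdisc hm
  have hsin : sin θ ≤ 0 := sin_nonpos_of_nonpos_of_neg_pi_le hθ.2 (by linarith [hθ.1, pi_gt_three])
  have hm1 : -1 ≤ m.1 := by nlinarith [mul_self_nonneg m.2]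
  have tangential : 0 ≤ (1 - cos θ) * (1 + m.1) :=
    mul_nonneg (by linarith [cos_le_one θ]) (by linarith)
  have normal : m.2 * sin θ ≤ 0 :=
    mul_nonpos_of_nonneg_of_nonpos (by linarith [E.le_snd, E.c_pos]) hsin
  have := mul_le_mul_of_nonneg_left (normal.trans tangential) (mul_self_nonneg R)
  linarith

lemma dot_sub_le_sq (E : Endpoint R c m Ω) (hδ : δ ∈ Ioc 0 c) (hp : p ∈ polarBox R δ) :
    dot (p - polar R 0) (p - polar R 0) ≤ (2 * R * δ) ^ 2 :=
  dot_sub_polar_zero_le E.R_pos.le (by linarith [hδ.2, E.c_le]) hp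

lemma cutoff_le (E : Endpoint R c m Ω) (he : dot e e = 1) (hδ : δ ∈ Ioc 0 c)
    (hp : p ∈ polarBox R δ) : cutoff e (polar R 0) (8 * c * R * δ) p ≤ 9 * R ^ 2 * δ ^ 2 := by
  have hRδ : 0 < R * δ := mul_pos E.R_pos hδ.1
  have hc := E.c_pos
  have hcRδ : c * (R * δ) ≤ 1 / 400 * (R * δ) := mul_le_mul_of_nonneg_right E.c_le hRδ.le
  calc cutoff e (polar R 0) (8 * c * R * δ) p ≤ (8 * c * R * δ + 2 * R * δ) ^ 2 :=
        _root_.cutoff_le he (by nlinarith) (by linarith) (E.dot_sub_le_sq hδ hp)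
    _ ≤ (3 * (R * δ)) ^ 2 := by
        gcongr
        · nlinarith
        · linarith
    _ = 9 * R ^ 2 * δ ^ 2 := by ring

lemma le_of_mem_Icc (E : Endpoint R c m Ω) (hδ : δ ∈ Ioc 0 c) (ht : t ∈ Icc 0 (2 * c * R * δ)) :
    t ≤ R * δ := by
  have := mul_le_mul_of_nonneg_right E.c_le (mul_pos E.R_pos hδ.1).le
  linarith [ht.2, mul_pos E.R_pos hδ.1]

lemma polar_add_mem_polarBox (E : Endpoint R c m Ω) (hδ : δ ∈ Ioc 0 c)
    (ht : t ∈ Icc 0 (2 * c * R * δ)) (hθ : θ ∈ Icc (c * δ) (2 * c * δ)) :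
    polar (R + t) θ ∈ polarBox R δ := by
  have hRδ := mul_pos E.R_pos hδ.1
  have hcδ := mul_pos E.c_pos hδ.1
  have := mul_le_mul_of_nonneg_right E.c_le hδ.1.le
  exact mem_image2_of_mem ⟨by linarith [ht.1], by linarith [E.le_of_mem_Icc hδ ht]⟩
    ⟨by linarith [hθ.1], by linarith [hθ.2, hδ.1]⟩

lemma le_cutoff (E : Endpoint R c m Ω) (he : dot e e = 1) (hδ : δ ∈ Ioc 0 c)
    (ht : t ∈ Icc 0 (2 * c * R * δ)) (hθ : θ ∈ Icc (c * δ) (2 * c * δ)) :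
    16 * c ^ 2 * R ^ 2 * δ ^ 2 ≤ cutoff e (polar R 0) (8 * c * R * δ) (polar (R + t) θ) := by
  have hR := E.R_pos
  have hc := E.c_pos
  have hcδ : 0 < c * δ := mul_pos hc hδ.1
  have htR : t ≤ R := by nlinarith [E.le_of_mem_Icc hδ ht, hδ.2, E.c_le]
  refine le_of_eq_of_le (by ring) (_root_.le_cutoff he (by linarith [mul_pos hcδ hR]) ?_)
  rw [dot_polar_sub_polar_zero]
  have ht2 : t ^ 2 ≤ (2 * c * R * δ) ^ 2 := pow_le_pow_left₀ ht.1 ht.2 2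
  have hcos : 1 - cos θ ≤ (2 * c * δ) ^ 2 / 2 := by
    linarith [one_sub_sq_div_two_le_cos (x := θ),
      pow_le_pow_left₀ (hcδ.le.trans hθ.1) hθ.2 2]
  have : (R + t) * R * (1 - cos θ) ≤ 2 * R * R * ((2 * c * δ) ^ 2 / 2) := by
    have : 0 ≤ 1 - cos θ := by linarith [cos_le_one θ]
    gcongr
    linarith
  nlinarith

-- On the far side `|y| ≥ Rδ / 3`, while a point of `Ω` in the support of the cutoff has
-- `m₂ |y| ≤ 12 h`.
lemma vanishesOnFarSide_testField (E : Endpoint R c m Ω) (hσ : |σ| = 1) {l : ℝ} (hl : 0 < l)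
    (hl2 : l ≤ 2) (hle : l • e = (σ, 0) + m) (hδ : δ ∈ Ioc 0 c) :
    VanishesOnFarSide (testField Ω v e (polar R 0) (8 * c * R * δ) k) σ R δ := by
  intro ρ hρ θ hθ hside hfar
  have hR := E.R_pos
  have hm := E.le_snd
  have hRδ : 0 < R * δ := mul_pos hR hδ.1
  have hbox : polar ρ θ ∈ polarBox R δ := mem_image2_of_mem hρ hθ
  refine testField_eq_zero fun hpΩ => ?_
  by_contra hcut
  have hlt : dot (polar ρ θ - polar R 0) e < 8 * c * R * δ := by
    by_contra! hge
    exact hcut (sqPos_of_nonpos (sub_nonpos.2 hge))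
  have hupper : enorm2 (polar ρ θ - polar R 0) ≤ 2 * R * δ :=
    le_of_sq_le_sq ((enorm2_sq _).trans_le (E.dot_sub_le_sq hδ hbox)) (by linarith)
  have hlower : R * δ / 3 ≤ enorm2 (polar ρ θ - polar R 0) :=
    le_of_sq_le_sq ((le_dot_polar_sub_polar_zero hR.le (by linarith [hδ.2, E.c_le]) hρ
      hfar).trans_eq (enorm2_sq _).symm) (sqrt_nonneg _)
  have hcδ : R * δ ≤ R * c := mul_le_mul_of_nonneg_left hδ.2 hR.le
  have hσside : 0 ≤ σ * (2 * R * (polar ρ θ - polar R 0).1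
      + dot (polar ρ θ - polar R 0) (polar ρ θ - polar R 0)) := by
    have hsum : 0 ≤ ρ + R := by nlinarith [hρ.1, E.c_le]
    rw [dot_polar_sub_polar_zero]
    simp only [polar, radial, Prod.fst_sub, Prod.smul_fst, smul_eq_mul, cos_zero]
    linarith [mul_nonneg hside hsum]
  have := mul_enorm2_le_of_dot_lt hR E.dot_self (by linarith [E.c_pos]) hσ hl hl2 hle
    (by have := mul_pos E.c_pos hRδ; linarith)
    (E.disc _ hpΩ (polarBox_subset_polarBox hR.le hδ.2 hbox)) hσside hlt (by nlinarith)
  nlinarith [mul_le_mul hm hlower (by positivity) (by linarith [E.c_pos]), mul_pos E.c_pos hRδ]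

lemma exists_direction (E : Endpoint R c m Ω) (hσ : |σ| = 1) :
    ∃ e : ℝ × ℝ, dot e e = 1 ∧ (∀ θ ∈ Icc 0 (2 * c ^ 2), c ^ 2 ≤ 1 - σ * dot e (radial θ)) ∧
      ∀ δ ∈ Ioc 0 c, ∀ v k,
        VanishesOnFarSide (testField Ω v e (polar R 0) (8 * c * R * δ) k) σ R δ := by
  have hm := E.le_snd
  have hc := E.c_pos
  obtain ⟨l, e, hl, hl2, hle, he, hσe⟩ := exists_bisector E.dot_self (by linarith)
    (by rw [← sq_abs, hσ, one_pow])
  refine ⟨e, he, fun θ hθ => ?_, fun δ hδ v k =>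
    E.vanishesOnFarSide_testField hσ hl (by nlinarith [sq_nonneg m.2]) hle hδ⟩
  have he2 : |e.2| ≤ 1 := by
    simp only [dot] at he
    exact abs_le_one_iff_mul_self_le_one.2 (by nlinarith [mul_self_nonneg e.1])
  have normal : σ * e.1 * cos θ ≤ l / 2 := by
    rw [hσe]
    exact mul_le_of_le_one_right (by linarith) (cos_le_one θ)
  have tangential : σ * e.2 * sin θ ≤ 2 * c ^ 2 := by
    calc σ * e.2 * sin θ ≤ |σ * e.2 * sin θ| := le_abs_self _
      _ ≤ 1 * 1 * θ := by
        rw [abs_mul, abs_mul, hσ]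
        gcongr
        exact abs_sin_le_abs.trans_eq (abs_of_nonneg hθ.1)
      _ ≤ 2 * c ^ 2 := by linarith [hθ.2]
  have hm2 : (400 * c) ^ 2 ≤ m.2 ^ 2 := pow_le_pow_left₀ (by positivity) hm 2
  simp only [dot, radial]
  linarith [sq_nonneg c]

end Endpoint

lemma fluxField_const_mul (hσ : σ ^ 2 = 1) (u : ℝ × ℝ → ℝ) (p : ℝ × ℝ) :
    fluxField (fun p => σ * u p) p = σ • fluxField u p := by
  have hgrad : grad (fun p => σ * u p) p = σ • grad u p := by
    have hD : fderiv ℝ (fun p => σ * u p) p = σ • fderiv ℝ u p :=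
      congrFun (fderiv_const_smul_field σ) p
    simp only [grad, pdx, pdy, hD, smul_apply, Prod.smul_mk]
  have hW : Wgraph (fun p => σ * u p) p = Wgraph u p := by
    refine (pow_left_inj₀ (Wgraph_pos _ p).le (Wgraph_pos u p).le two_ne_zero).1 ?_
    rw [Wgraph_sq, Wgraph_sq, hgrad, smul_dot, dot_comm, smul_dot, ← mul_assoc, ← sq, hσ, one_mul]
  rw [fluxField, fluxField, hW, hgrad, smul_comm]

lemma DivCMC.const_mul (hu : DivCMC H Ω u) (hΩ : IsOpen Ω) (hσ : σ ^ 2 = 1) :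
    DivCMC (σ * H) Ω fun p => σ * u p := by
  refine ⟨contDiffOn_const.mul hu.1, fun p hp => ?_⟩
  have hX := (contDiffAt_fluxField (hu.contDiffAt hΩ hp)).differentiableAt one_ne_zero
  rw [show fluxField (fun p => σ * u p) = fun p => σ • fluxField u p from
    funext (fluxField_const_mul hσ u), dvg_smul (differentiableAt_const σ) hX, hu.2 p hp]
  simp only [grad, pdx, pdy, fderiv_const_apply, dot, zero_apply, zero_mul, add_zero, zero_add]
  ring

lemma mul_testField_dot_radial (hσ : σ ^ 2 = 1) (hp : polar ρ θ ∈ Ω) :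
    σ * dot (testField Ω (fun p => σ * u p) e q h k (polar ρ θ)) (radial θ)
      = cutoff e q h (polar ρ θ) * ramp k (σ * u (polar ρ θ))
        * (1 - σ * dot e (radial θ) - defect u ρ θ) := by
  rw [testField_of_mem hp, fluxField_const_mul hσ, smul_dot, sub_dot, smul_dot, defect]
  linear_combination cutoff e q h (polar ρ θ) * ramp k (σ * u (polar ρ θ))
    * dot (fluxField u (polar ρ θ)) (radial θ) * hσ

lemma arcFlux_bump_eq {F : ℝ × ℝ → ℝ × ℝ} {A B α β : ℝ} (hαβ : α < β) (hα : A ≤ α) (hβ : β ≤ B) :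
    arcFlux F (bump α β) A B ρ = arcFlux F (bump α β) α β ρ := by
  have hsupp : Function.support (fun θ => bump α β θ * (ρ * dot (F (polar ρ θ)) (radial θ)))
      ⊆ Ioc α β := by
    refine fun θ hθ => ⟨?_, ?_⟩ <;> by_contra! h
    · exact hθ (by simp only [bump_eq_zero hαβ (Or.inl h), zero_mul])
    · exact hθ (by simp only [bump_eq_zero hαβ (Or.inr h.le), zero_mul])
  rw [arcFlux, arcFlux, intervalIntegral.integral_eq_integral_of_support_subset hsupp,
    intervalIntegral.integral_eq_integral_of_support_subset (hsupp.trans (Ioc_subset_Ioc hα hβ))]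

lemma DivCMC.continuousOn_defect {S : Set ℝ} (hu : DivCMC H Ω u) (hΩ : IsOpen Ω)
    (hS : ∀ θ ∈ S, polar ρ θ ∈ Ω) : ContinuousOn (defect u ρ) S :=
  fun θ hθ => (hu.continuousAt_defect hΩ (hS θ hθ)).continuousWithinAt

lemma DivCMC.intervalIntegrable_bump_mul_defect {α β : ℝ} (hu : DivCMC H Ω u) (hΩ : IsOpen Ω)
    (hαβ : α ≤ β) (harc : ∀ θ ∈ Icc α β, polar ρ θ ∈ Ω) :
    IntervalIntegrable (fun θ => bump α β θ * (ρ * defect u ρ θ)) volume α β :=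
  ((continuous_bump α β).continuousOn.mul (continuousOn_const.mul
    (hu.continuousOn_defect hΩ harc))).intervalIntegrable_of_Icc hαβ

lemma intervalIntegrable_bump_mul_ramp {α β : ℝ} (hu : ContinuousOn u Ω) (hαβ : α ≤ β)
    (harc : ∀ θ ∈ Icc α β, polar ρ θ ∈ Ω) :
    IntervalIntegrable (fun θ => bump α β θ * ramp k (σ * u (polar ρ θ))) volume α β :=
  ((continuous_bump α β).continuousOn.mul ((contDiff_ramp k).continuous.comp_continuousOn
    (continuousOn_const.mul (hu.comp (continuous_polar ρ).continuousOn
      harc)))).intervalIntegrable_of_Icc hαβ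

lemma Endpoint.intervalIntegrable_defect (E : Endpoint R c m Ω) (hu : DivCMC H Ω u)
    (hδ : δ ∈ Ioc 0 c) : IntervalIntegrable (defect u R) volume 0 δ := by
  have hcont : ContinuousOn (defect u R) (Ioc 0 δ) :=
    hu.continuousOn_defect E.isOpen fun θ hθ => E.arc θ ⟨hθ.1, hθ.2.trans hδ.2⟩
  rw [intervalIntegrable_iff_integrableOn_Ioc_of_le hδ.1.le]
  refine IntegrableOn.of_bound (C := 2) (by simp) (hcont.aestronglyMeasurable measurableSet_Ioc)
    (ae_of_all _ fun θ => ?_)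
  rw [norm_eq_abs, abs_of_nonneg (defect_nonneg u R θ)]
  exact defect_le_two u R θ

namespace Endpoint

lemma neg_defect_le_mul_testField_dot (E : Endpoint R c m Ω) (hσ : |σ| = 1) (he : dot e e = 1)
    (hδ : δ ∈ Ioc 0 c) (hbox : polar ρ θ ∈ polarBox R δ) (hp : polar ρ θ ∈ Ω) :
    -(9 * R ^ 2 * δ ^ 2 * defect u ρ θ) ≤
      σ * dot (testField Ω (fun p => σ * u p) e (polar R 0) (8 * c * R * δ) k (polar ρ θ))
        (radial θ) := by
  have hζ := cutoff_nonneg e (polar R 0) (8 * c * R * δ) (polar ρ θ)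
  have hφ := ramp_nonneg k (σ * u (polar ρ θ))
  have hd := defect_nonneg u ρ θ
  have hA : 0 ≤ 1 - σ * dot e (radial θ) := by
    have : |σ * dot e (radial θ)| ≤ 1 := by
      rw [abs_mul, hσ, one_mul]
      exact abs_dot_le_one he.le (radial_dot_radial θ).le
    linarith [(abs_le.1 this).2]
  rw [mul_testField_dot_radial (by rw [← sq_abs, hσ, one_pow]) hp, mul_sub]
  have upper : cutoff e (polar R 0) (8 * c * R * δ) (polar ρ θ) * ramp k (σ * u (polar ρ θ))
      * defect u ρ θ ≤ 9 * R ^ 2 * δ ^ 2 * 1 * defect u ρ θ := by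
    have := ramp_le_one k (σ * u (polar ρ θ))
    gcongr
    exact E.cutoff_le he hδ hbox
  linarith [mul_nonneg (mul_nonneg hζ hφ) hA]

lemma sub_le_mul_testField_dot (E : Endpoint R c m Ω) (hσ : |σ| = 1) (he : dot e e = 1)
    (hδ : δ ∈ Ioc 0 c) (hen : c ^ 2 ≤ 1 - σ * dot e (radial θ))
    (ht : t ∈ Icc 0 (2 * c * R * δ)) (hθ : θ ∈ Icc (c * δ) (2 * c * δ))
    (hp : polar (R + t) θ ∈ Ω) :
    R ^ 2 * δ ^ 2 * (16 * c ^ 4 * ramp k (σ * u (polar (R + t) θ)) - 9 * defect u (R + t) θ) ≤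
      σ * dot (testField Ω (fun p => σ * u p) e (polar R 0) (8 * c * R * δ) k (polar (R + t) θ))
        (radial θ) := by
  have hφ := ramp_nonneg k (σ * u (polar (R + t) θ))
  have hφ1 := ramp_le_one k (σ * u (polar (R + t) θ))
  have hd := defect_nonneg u (R + t) θ
  have hbox := E.polar_add_mem_polarBox hδ ht hθ
  have hζ := cutoff_nonneg e (polar R 0) (8 * c * R * δ) (polar (R + t) θ)
  rw [mul_testField_dot_radial (by rw [← sq_abs, hσ, one_pow]) hp, mul_sub]
  have lower : 16 * c ^ 2 * R ^ 2 * δ ^ 2 * ramp k (σ * u (polar (R + t) θ)) * c ^ 2 ≤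
      cutoff e (polar R 0) (8 * c * R * δ) (polar (R + t) θ) * ramp k (σ * u (polar (R + t) θ))
        * (1 - σ * dot e (radial θ)) := by
    gcongr
    exact E.le_cutoff he hδ ht hθ
  have upper : cutoff e (polar R 0) (8 * c * R * δ) (polar (R + t) θ)
      * ramp k (σ * u (polar (R + t) θ)) * defect u (R + t) θ
      ≤ 9 * R ^ 2 * δ ^ 2 * 1 * defect u (R + t) θ := by
    gcongr
    exact E.cutoff_le he hδ hbox
  linarith

lemma sub_le_mul_arcFlux (E : Endpoint R c m Ω) (hu : DivCMC H Ω u) (hσ : |σ| = 1)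
    (he : dot e e = 1) (hδ : δ ∈ Ioc 0 c)
    (hen : ∀ θ ∈ Icc 0 (2 * c ^ 2), c ^ 2 ≤ 1 - σ * dot e (radial θ))
    (ht : t ∈ Icc 0 (2 * c * R * δ)) (harc : ∀ θ ∈ Icc (c * δ) (2 * c * δ), polar (R + t) θ ∈ Ω)
    (hF : ∀ p ∈ polarBox R δ, ContDiffAt ℝ 1
      (testField Ω (fun p => σ * u p) e (polar R 0) (8 * c * R * δ) k) p) :
    R ^ 2 * δ ^ 2 * (16 * c ^ 4 * R * (∫ θ in c * δ..2 * c * δ,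
        bump (c * δ) (2 * c * δ) θ * ramp k (σ * u (polar (R + t) θ)))
        - 9 * arcDefect u (c * δ) (2 * c * δ) (R + t)) ≤
      σ * arcFlux (testField Ω (fun p => σ * u p) e (polar R 0) (8 * c * R * δ) k)
        (bump (c * δ) (2 * c * δ)) (-δ) δ (R + t) := by
  have hcδ : 0 < c * δ := mul_pos E.c_pos hδ.1
  have hδδ : c * δ ≤ 1 / 400 * δ := mul_le_mul_of_nonneg_right E.c_le hδ.1.le
  have hflux := continuousOn_arcFlux_integrand
    (fun θ hθ => hF _ (E.polar_add_mem_polarBox hδ ht hθ)) (continuous_bump (c * δ) (2 * c * δ))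
  have hle : c * δ ≤ 2 * c * δ := by linarith
  have hint1 := (intervalIntegrable_bump_mul_ramp (k := k) (σ := σ) hu.1.continuousOn hle
    harc).const_mul (16 * c ^ 4 * R)
  have hint2 := (hu.intervalIntegrable_bump_mul_defect E.isOpen hle harc).const_mul 9
  rw [arcFlux_bump_eq (by linarith) (by linarith) (by linarith), arcFlux, arcDefect,
    ← intervalIntegral.integral_const_mul, ← intervalIntegral.integral_const_mul,
    ← intervalIntegral.integral_sub hint1 hint2, ← intervalIntegral.integral_const_mul,
    ← intervalIntegral.integral_const_mul]
  refine intervalIntegral.integral_mono_on hle ((hint1.sub hint2).const_mul _)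
    ((hflux.intervalIntegrable_of_Icc hle).const_mul σ) fun θ hθ => ?_
  have hb := bump_nonneg (c * δ) (2 * c * δ) θ
  have hR := E.R_pos
  have hcδc : c * δ ≤ c * c := mul_le_mul_of_nonneg_left hδ.2 E.c_pos.le
  have pointwise := mul_le_mul_of_nonneg_left (E.sub_le_mul_testField_dot (k := k) (u := u) hσ he hδ
    (hen θ ⟨hcδ.le.trans hθ.1, by linarith [hθ.2]⟩) ht hθ (harc θ hθ))
    (mul_nonneg hb (by linarith [ht.1] : 0 ≤ R + t))
  have radius : 0 ≤ R ^ 2 * δ ^ 2 * (16 * c ^ 4 * t * (bump (c * δ) (2 * c * δ) θ *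
      ramp k (σ * u (polar (R + t) θ)))) := by
    have := ht.1
    have := ramp_nonneg k (σ * u (polar (R + t) θ))
    positivity
  linarith

lemma neg_integral_defect_le_mul_arcFlux (E : Endpoint R c m Ω) (hu : DivCMC H Ω u)
    (hσ : |σ| = 1) (he : dot e e = 1) (hδ : δ ∈ Ioc 0 c) {g : ℝ → ℝ} (hg : Continuous g)
    (hg0 : ∀ θ, 0 ≤ g θ) (hg1 : ∀ θ, g θ ≤ 1)
    (hF : ∀ p ∈ polarBox R δ, ContDiffAt ℝ 1
      (testField Ω (fun p => σ * u p) e (polar R 0) (8 * c * R * δ) k) p) :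
    -(R ^ 2 * δ ^ 2 * (9 * R * ∫ θ in 0..δ, defect u R θ)) ≤
      σ * arcFlux (testField Ω (fun p => σ * u p) e (polar R 0) (8 * c * R * δ) k) g (-δ) δ R := by
  set F := testField Ω (fun p => σ * u p) e (polar R 0) (8 * c * R * δ) k
  have hR := E.R_pos
  have hflux := (continuousOn_arcFlux_integrand (α := -δ) (β := δ)
    (fun θ hθ => hF _ (polar_mem_polarBox hR.le (abs_le.2 hθ))) hg).intervalIntegrable_of_Icc
      (μ := volume) (neg_le_self hδ.1.le)
  have hint : ∀ {a b}, a ∈ Icc (-δ) δ → b ∈ Icc (-δ) δ → IntervalIntegrable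
      (fun θ => g θ * (R * dot (F (polar R θ)) (radial θ))) volume a b := fun ha hb =>
    hflux.mono_set (uIcc_subset_uIcc (Icc_subset_uIcc ha) (Icc_subset_uIcc hb))
  have h0 : (0 : ℝ) ∈ Icc (-δ) δ := ⟨by linarith [hδ.1], hδ.1.le⟩
  have outer : ∫ θ in (-δ)..0, g θ * (R * dot (F (polar R θ)) (radial θ)) = 0 := by
    refine arcFlux_eq_zero fun θ hθ => indicator_of_notMem (E.notMem ?_) _
    rw [uIcc_of_le (neg_nonpos.2 hδ.1.le)] at hθ
    exact ⟨by linarith [hθ.1, hδ.2], hθ.2⟩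
  rw [arcFlux, ← intervalIntegral.integral_add_adjacent_intervals
    (hint ⟨le_rfl, neg_le_self hδ.1.le⟩ h0) (hint h0 ⟨neg_le_self hδ.1.le, le_rfl⟩), outer,
    zero_add, ← mul_assoc, ← intervalIntegral.integral_const_mul,
    ← intervalIntegral.integral_neg, ← intervalIntegral.integral_const_mul]
  refine intervalIntegral.integral_mono_on_of_le_Ioo hδ.1.le
    ((E.intervalIntegrable_defect hu hδ).const_mul _).neg
    ((hint h0 ⟨neg_le_self hδ.1.le, le_rfl⟩).const_mul σ) fun θ hθ => ?_
  have hd := mul_nonneg (mul_nonneg hR.le (sq_nonneg (R * δ))) (defect_nonneg u R θ)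
  have pointwise := mul_le_mul_of_nonneg_left (E.neg_defect_le_mul_testField_dot (k := k) (u := u)
    hσ he hδ (polar_mem_polarBox hR.le (abs_le.2 ⟨by linarith [hθ.1, hδ.1], hθ.2.le⟩))
    (E.arc θ ⟨hθ.1, hθ.2.le.trans hδ.2⟩)) (mul_nonneg (hg0 θ) hR.le)
  have weight := mul_le_mul_of_nonneg_right (hg1 θ) hd
  linarith

lemma neg_le_dvg_testField (E : Endpoint R c m Ω) (hu : DivCMC H Ω u) (hσ : |σ| = 1)
    (he : dot e e = 1) (hδ : δ ∈ Ioc 0 c) (hp : p ∈ polarBox R δ)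
    (hk : p ∉ Ω → ∀ᶠ y in 𝓝 p, y ∈ Ω → σ * u y ≤ k) :
    -(9 * R ^ 2 * δ ^ 2 * (2 * |H| + 1)) ≤
      dvg (testField Ω (fun p => σ * u p) e (polar R 0) (8 * c * R * δ) k) p := by
  have hdvg := neg_cutoff_mul_le_dvg_testField (e := e) (q := polar R 0) (h := 8 * c * R * δ)
    E.isOpen (hu.const_mul E.isOpen (by rw [← sq_abs, hσ, one_pow])) he hk
  rw [abs_mul, hσ, one_mul] at hdvg
  have := mul_le_mul_of_nonneg_right (E.cutoff_le he hδ hp) (by positivity : 0 ≤ 2 * |H| + 1)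
  linarith

lemma integral_bump_mul_ramp_le (E : Endpoint R c m Ω) (hu : DivCMC H Ω u) (hσ : |σ| = 1)
    (hδ : δ ∈ Ioc 0 c) (ht : t ∈ Icc 0 (2 * c * R * δ))
    (harc : ∀ θ ∈ Icc (c * δ) (2 * c * δ), polar (R + t) θ ∈ Ω)
    (hk : ∀ p ∈ polarBox R c, p ∉ Ω → ∀ᶠ y in 𝓝 p, y ∈ Ω → σ * u y ≤ k) :
    16 * c ^ 4 * R * (∫ θ in c * δ..2 * c * δ,
        bump (c * δ) (2 * c * δ) θ * ramp k (σ * u (polar (R + t) θ))) ≤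
      9 * (arcDefect u (c * δ) (2 * c * δ) (R + t) + R * ∫ θ in 0..δ, defect u R θ)
        + 72 * R ^ 2 * (2 * |H| + 1) * δ ^ 2 + 288 / c * t := by
  have hR := E.R_pos
  have hc := E.c_pos
  have hcδ : 0 < c * δ := mul_pos hc hδ.1
  have hδδ : c * δ ≤ 1 / 400 * δ := mul_le_mul_of_nonneg_right E.c_le hδ.1.le
  obtain ⟨e, he, hen, hfar⟩ := E.exists_direction hσ
  have hbdry : ∀ p ∈ polarBox R δ, p ∉ Ω → ∀ᶠ y in 𝓝 p, y ∈ Ω → σ * u y ≤ k := fun p hp =>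
    hk p (polarBox_subset_polarBox hR.le hδ.2 hp)
  have hF : ∀ p ∈ polarBox R δ, ContDiffAt ℝ 1
      (testField Ω (fun p => σ * u p) e (polar R 0) (8 * c * R * δ) k) p := fun p hp =>
    contDiffAt_testField E.isOpen
      (hu.const_mul E.isOpen (by rw [← sq_abs, hσ, one_pow])).1 (hbdry p hp)
  have moved := E.sub_le_mul_arcFlux hu hσ he hδ hen ht harc hF
  have rest := E.neg_integral_defect_le_mul_arcFlux hu hσ he hδ
    (g := fun θ => 1 - bump (c * δ) (2 * c * δ) θ) (continuous_const.sub (continuous_bump _ _))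
    (fun θ => by linarith [bump_le_one (by linarith : c * δ < 2 * c * δ) θ])
    (fun θ => by linarith [bump_nonneg (c * δ) (2 * c * δ) θ]) hF
  have balance := mul_arcFlux_add_arcFlux_le (κ := 9 * R ^ 2 * δ ^ 2 * (2 * |H| + 1))
    (Z := 2 * (9 * R ^ 2 * δ ^ 2)) (eq_or_eq_neg_of_abs_eq hσ) hR.le hδ.1.le
    (by linarith [hδ.2, E.c_le]) ht.1 (E.le_of_mem_Icc hδ ht) (by linarith : c * δ < 2 * c * δ)
    (by linarith) (by linarith) (by positivity) hF
    (fun p hp => E.neg_le_dvg_testField hu hσ he hδ hp (hbdry p hp))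
    (fun p hp a ha => (abs_testField_dot_le he ha).trans
      (mul_le_mul_of_nonneg_left (E.cutoff_le he hδ hp) two_pos.le))
    (hfar δ hδ (fun p => σ * u p) k)
  have hRδ : 0 < R ^ 2 * δ ^ 2 := mul_pos (pow_pos hR 2) (pow_pos hδ.1 2)
  have htime := mul_le_mul_of_nonneg_left (E.le_of_mem_Icc hδ ht)
    (by have := hδ.1; positivity : 0 ≤ 36 * R ^ 3 * δ ^ 3 * (2 * |H| + 1))
  have hslope : 8 / (2 * c * δ - c * δ) * δ = 8 / c := by
    have := hδ.1.ne'
    rw [show 2 * c * δ - c * δ = c * δ by ring]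
    field_simp
  refine le_of_mul_le_mul_left ?_ hRδ
  linear_combination moved + rest + balance + htime + 36 * R ^ 2 * δ ^ 2 * t * hslope

end Endpoint

end FluxEstimate

/-! ### Logarithmic growth -/

/-- The area element `W`, damped by the factor `1 / (1 + (u - u₀)²)`. -/
def dampedArea (u : ℝ × ℝ → ℝ) (u₀ : ℝ) (p : ℝ × ℝ) : ℝ := Wgraph u p / (1 + (u p - u₀) ^ 2)

/-- The bounded field `arctan (u - u₀) ∇u / W`, whose divergence is `dampedArea u u₀` up to a
bounded term. -/
def arctanField (u : ℝ × ℝ → ℝ) (u₀ : ℝ) (p : ℝ × ℝ) : ℝ × ℝ :=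
  arctan (u p - u₀) • fluxField u p

section LogarithmicGrowth

variable {H M R α β δ ρ θ a l s t u₀ : ℝ} {p : ℝ × ℝ} {Ω : Set (ℝ × ℝ)} {u : ℝ × ℝ → ℝ}

lemma dampedArea_nonneg (u : ℝ × ℝ → ℝ) (u₀ : ℝ) (p : ℝ × ℝ) : 0 ≤ dampedArea u u₀ p :=
  div_nonneg (Wgraph_pos u p).le (by positivity)

lemma abs_arctan_le_two (x : ℝ) : |arctan x| ≤ 2 :=
  abs_le.2 ⟨by linarith [neg_pi_div_two_lt_arctan x, pi_lt_four],
    by linarith [arctan_lt_pi_div_two x, pi_lt_four]⟩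

lemma abs_arctanField_dot_le {b : ℝ × ℝ} (hb : dot b b = 1) :
    |dot (arctanField u u₀ p) b| ≤ 2 := by
  rw [arctanField, smul_dot, abs_mul]
  exact (mul_le_mul (abs_arctan_le_two _) (abs_dot_le_one (fluxField_dot_self_le u p) hb.le)
    (abs_nonneg _) two_pos.le).trans_eq (mul_one 2)

lemma grad_arctan_sub (hu : DifferentiableAt ℝ u p) :
    grad (fun q => arctan (u q - u₀)) p = (1 + (u p - u₀) ^ 2)⁻¹ • grad u p := by
  have h := (hasDerivAt_arctan (u p - u₀)).comp_hasFDerivAt p (hu.hasFDerivAt.sub_const u₀)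
  exact grad_eq_of_hasFDerivAt h (by simp [grad, pdx]) (by simp [grad, pdy])

lemma DivCMC.contDiffAt_arctanField (hu : DivCMC H Ω u) (hΩ : IsOpen Ω) (hp : p ∈ Ω) :
    ContDiffAt ℝ 1 (arctanField u u₀) p :=
  (((hu.contDiffAt hΩ hp).of_le one_le_two).sub contDiffAt_const).arctan.smul
    (contDiffAt_fluxField (hu.contDiffAt hΩ hp))

lemma DivCMC.dampedArea_sub_le_dvg (hu : DivCMC H Ω u) (hΩ : IsOpen Ω) (hp : p ∈ Ω) :
    dampedArea u u₀ p - (1 + 4 * |H|) ≤ dvg (arctanField u u₀) p := by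
  have hc := hu.contDiffAt hΩ hp
  have hd := hc.differentiableAt two_ne_zero
  have hX := (contDiffAt_fluxField hc).differentiableAt one_ne_zero
  have hdvg : dvg (arctanField u u₀) p = dampedArea u u₀ p
      - (1 + (u p - u₀) ^ 2)⁻¹ * (Wgraph u p)⁻¹ + arctan (u p - u₀) * (2 * H) := by
    rw [show arctanField u u₀ = fun q => arctan (u q - u₀) • fluxField u q from rfl,
      dvg_smul (hd.sub_const u₀).arctan hX, hu.2 p hp, grad_arctan_sub hd, smul_dot,
      grad_dot_fluxField, dampedArea]
    ring
  have damping : (1 + (u p - u₀) ^ 2)⁻¹ * (Wgraph u p)⁻¹ ≤ 1 :=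
    mul_le_one₀ (inv_le_one_of_one_le₀ (by linarith [sq_nonneg (u p - u₀)]))
      (inv_nonneg.2 (Wgraph_pos u p).le) (inv_le_one_of_one_le₀ (one_le_Wgraph u p))
  have curvature : |arctan (u p - u₀) * (2 * H)| ≤ 2 * (2 * |H|) := by
    rw [abs_mul, abs_mul, abs_two]
    exact mul_le_mul_of_nonneg_right (abs_arctan_le_two _) (by positivity)
  linarith [(abs_le.1 curvature).1]

lemma DivCMC.continuousOn_dampedArea (hu : DivCMC H Ω u) (hΩ : IsOpen Ω) :
    ContinuousOn (dampedArea u u₀) Ω := fun p hp =>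
  ((contDiffAt_Wgraph (hu.contDiffAt hΩ hp)).continuousAt.div
    (continuousAt_const.add (((hu.contDiffAt hΩ hp).continuousAt.sub continuousAt_const).pow 2))
    (by positivity : 1 + (u p - u₀) ^ 2 ≠ 0)).continuousWithinAt

lemma DivCMC.intervalIntegrable_bump_mul_dampedArea (hu : DivCMC H Ω u) (hΩ : IsOpen Ω)
    (hαβ : α ≤ β) (harc : ∀ θ ∈ Icc α β, polar ρ θ ∈ Ω) :
    IntervalIntegrable (fun θ => bump α β θ * dampedArea u u₀ (polar ρ θ)) volume α β :=
  ((continuous_bump α β).continuousOn.mul ((hu.continuousOn_dampedArea hΩ).comp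
    (continuous_polar ρ).continuousOn harc)).intervalIntegrable_of_Icc hαβ

lemma DivCMC.sub_le_polarDvg_arctanField (hu : DivCMC H Ω u) (hΩ : IsOpen Ω) (hR : 0 ≤ R)
    (hαβ : α < β) (hρ : ρ ∈ Icc R (R + R)) (hp : polar ρ θ ∈ Ω) :
    R * (bump α β θ * dampedArea u u₀ (polar ρ θ)) - (2 * R * (1 + 4 * |H|) + 16 / (β - α)) ≤
      polarDvg (arctanField u u₀) (fun _ => 1) (bump α β) ρ θ := by
  have hb := bump_nonneg α β θ
  have hb1 := bump_le_one hαβ θ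
  have hρ0 : 0 ≤ ρ := hR.trans hρ.1
  have hdvg := mul_le_mul_of_nonneg_left (hu.dampedArea_sub_le_dvg (u₀ := u₀) hΩ hp)
    (mul_nonneg hb hρ0)
  have radius : R * (bump α β θ * dampedArea u u₀ (polar ρ θ))
      ≤ ρ * (bump α β θ * dampedArea u u₀ (polar ρ θ)) :=
    mul_le_mul_of_nonneg_right hρ.1 (mul_nonneg hb (dampedArea_nonneg u u₀ _))
  have bounded : bump α β θ * ρ * (1 + 4 * |H|) ≤ 1 * (2 * R) * (1 + 4 * |H|) := by
    gcongr
    linarith [hρ.2]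
  have slope : |deriv (bump α β) θ * dot (arctanField u u₀ (polar ρ θ)) (angular θ)|
      ≤ 16 / (β - α) := by
    rw [abs_mul]
    exact (mul_le_mul (abs_deriv_bump_le hαβ θ)
      (abs_arctanField_dot_le (angular_dot_angular θ)) (abs_nonneg _)
      (div_nonneg (by norm_num) (sub_pos.2 hαβ).le)).trans_eq (by ring)
  have := (abs_le.1 slope).1
  simp only [polarDvg, deriv_const, zero_mul, add_zero, one_mul]
  linarith

lemma abs_arcFlux_arctanField_le (hαβ : α < β) (hρ : 0 ≤ ρ) :
    |arcFlux (arctanField u u₀) (bump α β) α β ρ| ≤ 2 * ρ * (β - α) := by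
  have h := intervalIntegral.norm_integral_le_of_norm_le_const (a := α) (b := β)
    (f := fun θ => bump α β θ * (ρ * dot (arctanField u u₀ (polar ρ θ)) (radial θ))) (C := 2 * ρ)
    fun θ _ => ?_
  · rwa [norm_eq_abs, abs_of_pos (sub_pos.2 hαβ)] at h
  · rw [norm_eq_abs, abs_mul, abs_of_nonneg (bump_nonneg α β θ), abs_mul, abs_of_nonneg hρ]
    calc bump α β θ * (ρ * |dot (arctanField u u₀ (polar ρ θ)) (radial θ)|) ≤ 1 * (ρ * 2) := by
          gcongr
          exacts [bump_le_one hαβ θ, abs_arctanField_dot_le (radial_dot_radial θ)]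
      _ = 2 * ρ := by ring

lemma continuousOn_div_add_sub (hs : 0 < s) (a R B : ℝ) :
    ContinuousOn (fun ρ => a / (s + (ρ - R))) (Icc R B) :=
  continuousOn_const.div (by fun_prop) fun ρ hρ => by linarith [hρ.1]

lemma integral_div_add_sub (hs : 0 < s) (hδ : 0 < δ) (a R : ℝ) :
    ∫ ρ in R..R + δ, a / (s + (ρ - R)) = a * log ((s + δ) / s) := by
  simp_rw [div_eq_mul_inv a, ← add_sub_assoc, add_sub_right_comm s _ R]
  rw [intervalIntegral.integral_const_mul, intervalIntegral.integral_comp_add_left (·⁻¹),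
    integral_inv_of_pos (by linarith) (by linarith)]
  congr 3 <;> ring

theorem DivCMC.mul_log_le (hu : DivCMC H Ω u) (hΩ : IsOpen Ω) (hR : 0 < R) (hαβ : α < β)
    (hδ : 0 < δ) (hδR : δ ≤ R) (hs : 0 < s)
    (hbox : ∀ ρ ∈ Icc R (R + δ), ∀ θ ∈ Icc α β, polar ρ θ ∈ Ω)
    (ha : ∀ ρ ∈ Icc R (R + δ), a / (s + (ρ - R)) ≤
      ∫ θ in α..β, bump α β θ * dampedArea u u₀ (polar ρ θ)) :
    R * a * log ((s + δ) / s) ≤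
      (β - α) * (2 * R * (1 + 4 * |H|) + 16 / (β - α)) * δ + 6 * R * (β - α) := by
  set K := 2 * R * (1 + 4 * |H|) + 16 / (β - α)
  have hF : ∀ ρ ∈ Icc R (R + δ), ∀ θ ∈ Icc α β, ContDiffAt ℝ 1 (arctanField u u₀) (polar ρ θ) :=
    fun ρ hρ θ hθ => hu.contDiffAt_arctanField hΩ (hbox ρ hρ θ hθ)
  have hint : IntervalIntegrable (fun ρ => R * (a / (s + (ρ - R)))) volume R (R + δ) :=
    ((continuousOn_div_add_sub hs a R _).intervalIntegrable_of_Icc (by linarith)).const_mul R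
  have slice : ∀ ρ ∈ Icc R (R + δ), R * (a / (s + (ρ - R))) - (β - α) * K
      ≤ ∫ θ in α..β, polarDvg (arctanField u u₀) (fun _ => 1) (bump α β) ρ θ := by
    intro ρ hρ
    have hW := (hu.intervalIntegrable_bump_mul_dampedArea (u₀ := u₀) hΩ hαβ.le
      (hbox ρ hρ)).const_mul R
    have mono := intervalIntegral.integral_mono_on (μ := volume) hαβ.le
      (hW.sub (intervalIntegrable_const (c := K)))
      ((continuousOn_polarDvg (w := fun _ => 1) (hF ρ hρ)
        (contDiff_bump α β)).intervalIntegrable_of_Icc hαβ.le)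
      fun θ hθ => hu.sub_le_polarDvg_arctanField hΩ hR.le hαβ ⟨hρ.1, by linarith [hρ.2]⟩
        (hbox ρ hρ θ hθ)
    rw [intervalIntegral.integral_sub hW intervalIntegrable_const,
      intervalIntegral.integral_const_mul, intervalIntegral.integral_const, smul_eq_mul] at mono
    linarith [mul_le_mul_of_nonneg_left (ha ρ hρ) hR.le]
  have flux := integral_le_arcFlux_sub_arcFlux (w := fun _ => 1) (by linarith) hαβ.le hF
    (fun _ _ => contDiffAt_const) (contDiff_bump α β)
    (fun ρ _ => by rw [bump_eq_zero hαβ (Or.inl le_rfl), zero_mul])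
    (fun ρ _ => by rw [bump_eq_zero hαβ (Or.inr le_rfl), zero_mul])
    (hint.sub intervalIntegrable_const) slice
  rw [intervalIntegral.integral_sub hint intervalIntegrable_const,
    intervalIntegral.integral_const_mul, integral_div_add_sub hs hδ,
    intervalIntegral.integral_const, smul_eq_mul] at flux
  have inner := (abs_le.1 (abs_arcFlux_arctanField_le (u := u) (u₀ := u₀) hαβ hR.le)).1
  have outer := (abs_le.1 (abs_arcFlux_arctanField_le (u := u) (u₀ := u₀) hαβ
    (by linarith : 0 ≤ R + δ))).2
  have := mul_le_mul_of_nonneg_right hδR (sub_pos.2 hαβ).le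
  linarith

lemma le_dampedArea_polar (u : ℝ × ℝ → ℝ) (u₀ M : ℝ) (hl : 0 < l) (ρ θ : ℝ) :
    3 * l / 2 * (1 + (M + 1) ^ 2)⁻¹ * (1 - 2 * ramp (1 * u₀ + M) (1 * u (polar ρ θ))
        - 2 * ramp (-1 * u₀ + M) (-1 * u (polar ρ θ))) - l ^ 3 * defect u ρ θ
      ≤ dampedArea u u₀ (polar ρ θ) := by
  set φ := ramp (1 * u₀ + M) (1 * u (polar ρ θ))
  set ψ := ramp (-1 * u₀ + M) (-1 * u (polar ρ θ))
  have hφ0 : 0 ≤ φ := ramp_nonneg _ _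
  have hψ0 : 0 ≤ ψ := ramp_nonneg _ _
  have hk1 : (1 + (M + 1) ^ 2)⁻¹ ≤ 1 := inv_le_one_of_one_le₀ (by linarith [sq_nonneg (M + 1)])
  have hd : 0 ≤ l ^ 3 * defect u ρ θ := mul_nonneg (pow_pos hl 3).le (defect_nonneg u ρ θ)
  have hlk : 0 ≤ 3 * l / 2 * (1 + (M + 1) ^ 2)⁻¹ := by positivity
  by_cases hsmall : φ < 1 / 2 ∧ ψ < 1 / 2
  · have hsq : (u (polar ρ θ) - u₀) ^ 2 ≤ (M + 1) ^ 2 :=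
      sq_le_sq' (by linarith [lt_of_ramp_lt hsmall.2]) (by linarith [lt_of_ramp_lt hsmall.1])
    calc _ ≤ (1 + (M + 1) ^ 2)⁻¹ * (3 * l / 2 - l ^ 3 * defect u ρ θ) := by
          linarith [mul_le_mul_of_nonneg_right hk1 hd, mul_nonneg hlk hφ0, mul_nonneg hlk hψ0]
      _ ≤ (1 + (M + 1) ^ 2)⁻¹ * Wgraph u (polar ρ θ) := by
          gcongr
          exact sub_le_Wgraph_polar u ρ θ hl
      _ ≤ dampedArea u u₀ (polar ρ θ) := by
          rw [inv_mul_eq_div, dampedArea]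
          have := (Wgraph_pos u (polar ρ θ)).le
          gcongr
  · have hneg : 1 - 2 * φ - 2 * ψ ≤ 0 := by
      by_contra! h
      exact hsmall ⟨by linarith, by linarith⟩
    linarith [mul_nonpos_of_nonneg_of_nonpos hlk hneg, dampedArea_nonneg u u₀ (polar ρ θ)]

lemma DivCMC.le_integral_bump_mul_dampedArea (hu : DivCMC H Ω u) (hΩ : IsOpen Ω) (hρ : 0 < ρ)
    (hαβ : α < β) (hl : 0 < l) (harc : ∀ θ ∈ Icc α β, polar ρ θ ∈ Ω)
    (hΨ : ∀ σ : ℝ, |σ| = 1 →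
      ∫ θ in α..β, bump α β θ * ramp (σ * u₀ + M) (σ * u (polar ρ θ)) ≤ (β - α) / 24) :
    (1 + (M + 1) ^ 2)⁻¹ * (β - α) / 4 * l - l ^ 3 * (arcDefect u α β ρ / ρ) ≤
      ∫ θ in α..β, bump α β θ * dampedArea u u₀ (polar ρ θ) := by
  have hb := (continuous_bump α β).intervalIntegrable (μ := volume) α β
  have hφ (σ : ℝ) := (intervalIntegrable_bump_mul_ramp (k := σ * u₀ + M) (σ := σ)
    hu.1.continuousOn hαβ.le harc).const_mul 2
  have hd := (hu.intervalIntegrable_bump_mul_defect hΩ hαβ.le harc).const_mul (l ^ 3 / ρ)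
  have mono := intervalIntegral.integral_mono_on hαβ.le
    ((((hb.sub (hφ 1)).sub (hφ (-1))).const_mul (3 * l / 2 * (1 + (M + 1) ^ 2)⁻¹)).sub hd)
    (hu.intervalIntegrable_bump_mul_dampedArea (u₀ := u₀) hΩ hαβ.le harc) fun θ _ => by
      refine le_of_eq_of_le ?_ (mul_le_mul_of_nonneg_left (le_dampedArea_polar u u₀ M hl ρ θ)
        (bump_nonneg α β θ))
      field_simp
  rw [intervalIntegral.integral_sub (((hb.sub (hφ 1)).sub (hφ (-1))).const_mul _) hd,
    intervalIntegral.integral_const_mul, intervalIntegral.integral_const_mul, ← arcDefect,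
    intervalIntegral.integral_sub (hb.sub (hφ 1)) (hφ (-1)),
    intervalIntegral.integral_sub hb (hφ 1), intervalIntegral.integral_const_mul,
    intervalIntegral.integral_const_mul] at mono
  have hmass : (β - α) / 6 ≤ (∫ θ in α..β, bump α β θ)
      - 2 * (∫ θ in α..β, bump α β θ * ramp (1 * u₀ + M) (1 * u (polar ρ θ)))
      - 2 * ∫ θ in α..β, bump α β θ * ramp (-1 * u₀ + M) (-1 * u (polar ρ θ)) := by
    linarith [le_integral_bump hαβ, hΨ 1 abs_one, hΨ (-1) (by rw [abs_neg, abs_one])]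
  have := mul_le_mul_of_nonneg_left hmass
    (by positivity : 0 ≤ 3 * l / 2 * (1 + (M + 1) ^ 2)⁻¹)
  refine le_trans (le_trans (le_of_eq ?_) (sub_le_sub_right this _)) mono
  ring

lemma DivCMC.arcDefect_le_mul_sq (hu : DivCMC H Ω u) (hΩ : IsOpen Ω) (hR : 0 < R)
    (hRH : 1 ≤ 2 * H * R) (hαβ : α < β) (hs : 0 < s) (ht : 0 ≤ t)
    (hbox : ∀ ρ ∈ Icc R (R + t), ∀ θ ∈ Icc α β, polar ρ θ ∈ Ω)
    (harc : arcDefect u α β R ≤ R * s ^ 2) :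
    arcDefect u α β (R + t) ≤ (R + 32 / ((β - α) * R)) * (s + t) ^ 2 := by
  have growth := hu.arcDefect_div_le hΩ hR hRH hαβ hs ht hbox
  have start : arcDefect u α β R / s ≤ R * s := (div_le_iff₀ hs).2 (harc.trans_eq (by ring))
  have hst : 0 < s + t := by linarith
  have hK : 0 ≤ 32 / ((β - α) * R) := by have := sub_pos.2 hαβ; positivity
  rw [sq, ← mul_assoc, ← div_le_iff₀ hst]
  linarith [mul_nonneg hK hs.le, mul_nonneg hR.le ht]

end LogarithmicGrowth

/-! ### Lower bound for the defect -/

section DefectLowerBound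

variable {H R c δ A K a x α β η τ : ℝ} {m : ℝ × ℝ} {Ω : Set (ℝ × ℝ)} {u : ℝ × ℝ → ℝ}

namespace Endpoint

lemma integral_defect_le (E : Endpoint R c m Ω) (hu : DivCMC H Ω u) (hδ : δ ∈ Ioc 0 c) :
    ∫ θ in 0..δ, defect u R θ ≤ ∫ θ in 0..c, defect u R θ :=
  intervalIntegral.integral_mono_interval le_rfl hδ.1.le hδ.2
    (Eventually.of_forall fun θ => defect_nonneg u R θ)
    (E.intervalIntegrable_defect hu ⟨E.c_pos, le_rfl⟩)

lemma arcDefect_le (E : Endpoint R c m Ω) (hu : DivCMC H Ω u) (hα : 0 < α) (hαβ : α < β)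
    (hβ : β ≤ c) : arcDefect u α β R ≤ R * ∫ θ in 0..c, defect u R θ := by
  have harc : ∀ θ ∈ Icc α β, polar R θ ∈ Ω := fun θ hθ =>
    E.arc θ ⟨hα.trans_le hθ.1, hθ.2.trans hβ⟩
  have hdef := hu.continuousOn_defect E.isOpen harc
  calc arcDefect u α β R ≤ ∫ θ in α..β, R * defect u R θ :=
        intervalIntegral.integral_mono_on hαβ.le
          (((continuous_bump α β).continuousOn.mul
            (continuousOn_const.mul hdef)).intervalIntegrable_of_Icc hαβ.le)
          ((continuousOn_const.mul hdef).intervalIntegrable_of_Icc hαβ.le)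
          fun θ _ => mul_le_of_le_one_left (mul_nonneg E.R_pos.le (defect_nonneg u R θ))
            (bump_le_one hαβ θ)
    _ = R * ∫ θ in α..β, defect u R θ := intervalIntegral.integral_const_mul ..
    _ ≤ R * ∫ θ in 0..c, defect u R θ := by
        gcongr
        · exact E.R_pos.le
        · exact intervalIntegral.integral_mono_interval hα.le hαβ.le hβ
            (Eventually.of_forall fun θ => defect_nonneg u R θ)
            (E.intervalIntegrable_defect hu ⟨E.c_pos, le_rfl⟩)

lemma exists_forall_integral_bump_mul_ramp_le (E : Endpoint R c m Ω) (H : ℝ) :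
    ∃ δ ∈ Ioc 0 c, ∃ η > 0, ∀ (u : ℝ × ℝ → ℝ) (k σ t : ℝ), DivCMC H Ω u → |σ| = 1 →
      t ∈ Icc 0 η → (∀ θ ∈ Icc (c * δ) (2 * c * δ), polar (R + t) θ ∈ Ω) →
      (∀ p ∈ polarBox R c \ Ω, ∀ᶠ y in 𝓝[Ω] p, σ * u y ≤ k) →
      arcDefect u (c * δ) (2 * c * δ) (R + t) ≤ η → ∫ θ in 0..c, defect u R θ ≤ η →
      ∫ θ in c * δ..2 * c * δ, bump (c * δ) (2 * c * δ) θ * ramp k (σ * u (polar (R + t) θ)) ≤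
        (2 * c * δ - c * δ) / 24 := by
  have hR := E.R_pos
  have hc := E.c_pos
  obtain ⟨δ, hδ, hδc, hδH⟩ : ∃ δ : ℝ, 0 < δ ∧ δ ≤ c ∧
      72 * R ^ 2 * (2 * |H| + 1) * δ ≤ c ^ 5 * R / 3 := by
    refine ⟨min c (c ^ 5 * R / 3 / (72 * R ^ 2 * (2 * |H| + 1))), by positivity, min_le_left .., ?_⟩
    rw [← le_div_iff₀' (by positivity)]
    exact min_le_right ..
  obtain ⟨η, hη, hηδ, hηc⟩ : ∃ η : ℝ, 0 < η ∧ η ≤ 2 * c * R * δ ∧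
      (9 * (1 + R) + 288 / c) * η ≤ c ^ 5 * R * δ / 3 := by
    refine ⟨min (2 * c * R * δ) (c ^ 5 * R * δ / 3 / (9 * (1 + R) + 288 / c)), by positivity,
      min_le_left .., ?_⟩
    rw [← le_div_iff₀' (by positivity)]
    exact min_le_right ..
  refine ⟨δ, ⟨hδ, hδc⟩, η, hη, fun u k σ t hu hσ ht harc hk hDt hD => ?_⟩
  have estimate := E.integral_bump_mul_ramp_le hu hσ ⟨hδ, hδc⟩ ⟨ht.1, ht.2.trans hηδ⟩ harc
    fun p hp hpΩ => eventually_nhdsWithin_iff.1 (hk p ⟨hp, hpΩ⟩)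
  refine le_of_mul_le_mul_left (estimate.trans ?_) (by positivity : 0 < 16 * c ^ 4 * R)
  calc _ ≤ 9 * (η + R * η) + 72 * R ^ 2 * (2 * |H| + 1) * δ * δ + 288 / c * η := by
        rw [sq δ, ← mul_assoc _ δ δ]
        gcongr
        · exact (E.integral_defect_le hu ⟨hδ, hδc⟩).trans hD
        · exact ht.2
    _ = (9 * (1 + R) + 288 / c) * η + 72 * R ^ 2 * (2 * |H| + 1) * δ * δ := by ring
    _ ≤ c ^ 5 * R * δ / 3 + c ^ 5 * R / 3 * δ := by gcongr
    _ = 16 * c ^ 4 * R * ((2 * c * δ - c * δ) / 24) := by ring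

end Endpoint

lemma exists_forall_polar_mem (hΩ : IsOpen Ω) (h : ∀ θ ∈ Icc α β, polar R θ ∈ Ω) :
    ∃ τ > 0, ∀ ρ ∈ Icc R (R + τ), ∀ θ ∈ Icc α β, polar ρ θ ∈ Ω := by
  have near : ∀ᶠ ρ in 𝓝 R, ∀ θ ∈ Icc α β, polar ρ θ ∈ Ω :=
    isCompact_Icc.eventually_forall_of_forall_eventually fun θ hθ =>
      contDiff_polar.continuous.continuousAt.eventually (hΩ.mem_nhds (h θ hθ))
  obtain ⟨ε, hε, hball⟩ := Metric.eventually_nhds_iff.1 near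
  refine ⟨ε / 2, half_pos hε, fun ρ hρ => hball ?_⟩
  rw [dist_eq, abs_of_nonneg (sub_nonneg.2 hρ.1)]
  linarith [hρ.2]

lemma exists_pos_div_le_sub_cube (hA : 0 < A) (hK : 0 < K) :
    ∃ a > 0, ∀ x > 0, ∀ D ≤ K * x ^ 2, ∃ l > 0, a / x ≤ A * l - l ^ 3 * D := by
  obtain ⟨κ, hκ, hκK⟩ : ∃ κ > 0, κ ^ 2 * K = A / 2 :=
    ⟨√(A / 2 / K), by positivity, by rw [sq_sqrt (by positivity)]; field_simp⟩
  refine ⟨κ * A / 2, by positivity, fun x hx D hD => ⟨κ / x, by positivity, ?_⟩⟩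
  have cube := mul_le_mul_of_nonneg_left hD (by positivity : 0 ≤ (κ / x) ^ 3)
  have value : (κ / x) ^ 3 * (K * x ^ 2) = κ * A / 2 / x := by
    field_simp
    linear_combination 2 * hκK
  calc κ * A / 2 / x = A * (κ / x) - κ * A / 2 / x := by ring
    _ ≤ A * (κ / x) - (κ / x) ^ 3 * D := by linarith

lemma exists_mem_Ioc_mul_sq_le (hx : 0 < x) (hη : 0 < η) (K : ℝ) :
    ∃ τ ∈ Ioc 0 x, K * τ ^ 2 ≤ η := by
  have lim : Tendsto (fun τ => K * τ ^ 2) (𝓝[>] 0) (𝓝 0) :=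
    ((continuous_const.mul (continuous_pow 2)).tendsto' 0 0 (by simp)).mono_left
      nhdsWithin_le_nhds
  obtain ⟨τ, hτη, hτ⟩ := ((lim.eventually_le_const hη).and (Ioc_mem_nhdsGT hx)).exists
  exact ⟨τ, hτ, hτη⟩

lemma exists_lt_mul_log (ha : 0 < a) (hτ : 0 < τ) (B : ℝ) :
    ∃ s ∈ Ioc 0 τ, B < a * log ((s + τ) / s) := by
  have lim : Tendsto (fun x => a * log x) atTop atTop := tendsto_log_atTop.const_mul_atTop ha
  obtain ⟨x, hxB, hx⟩ := ((lim.eventually_gt_atTop B).and (eventually_ge_atTop 2)).exists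
  have hx1 : 0 < x - 1 := by linarith
  refine ⟨τ / (x - 1), ⟨by positivity, div_le_self hτ.le (by linarith)⟩, ?_⟩
  rwa [show (τ / (x - 1) + τ) / (τ / (x - 1)) = x by field_simp; ring]

lemma mul_le_mul_add_of_abs_sub_le {σ y : ℝ} (hσ : |σ| = 1) (h : |y - x| ≤ a) :
    σ * y ≤ σ * x + a := by
  calc σ * y = σ * x + σ * (y - x) := by ring
    _ ≤ σ * x + |σ| * |y - x| := by rw [← abs_mul]; gcongr; exact le_abs_self _
    _ ≤ σ * x + a := by rw [hσ, one_mul]; gcongr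

namespace Endpoint

lemma exists_forall_div_le_integral (E : Endpoint R c m Ω) (hRH : 1 ≤ 2 * H * R) (M : ℝ) :
    ∃ α β a τ : ℝ, α < β ∧ 0 < a ∧ τ ∈ Ioc 0 R ∧
      (∀ ρ ∈ Icc R (R + τ), ∀ θ ∈ Icc α β, polar ρ θ ∈ Ω) ∧
      ∀ s ∈ Ioc 0 τ, ∀ t ∈ Icc 0 τ, ∀ (u : ℝ × ℝ → ℝ) (u₀ : ℝ), DivCMC H Ω u →
        (∀ p ∈ polarBox R c \ Ω, ∀ᶠ y in 𝓝[Ω] p, |u y - u₀| ≤ M) →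
        ∫ θ in 0..c, defect u R θ ≤ s ^ 2 →
        a / (s + t) ≤ ∫ θ in α..β, bump α β θ * dampedArea u u₀ (polar (R + t) θ) := by
  have hR := E.R_pos
  obtain ⟨δ, hδ, η, hη, hΨ⟩ := E.exists_forall_integral_bump_mul_ramp_le H
  have hcδ : 0 < c * δ := mul_pos E.c_pos hδ.1
  have hβ : 2 * c * δ ≤ c := by nlinarith [E.c_le, hδ.2, E.c_pos]
  have hα := hcδ
  have hαβ : c * δ < 2 * c * δ := by linarith
  set α := c * δ
  set β := 2 * c * δ
  obtain ⟨τ₀, hτ₀, hbox⟩ := exists_forall_polar_mem E.isOpen fun θ (hθ : θ ∈ Icc α β) =>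
    E.arc θ ⟨hα.trans_le hθ.1, hθ.2.trans hβ⟩
  set K := R + 32 / ((β - α) * R)
  have hK : 0 < K := add_pos hR (div_pos (by norm_num) (mul_pos (sub_pos.2 hαβ) hR))
  obtain ⟨a, ha, hcube⟩ := exists_pos_div_le_sub_cube
    (by have := sub_pos.2 hαβ; positivity : 0 < (1 + (M + 1) ^ 2)⁻¹ * (β - α) / 4) (div_pos hK hR)
  obtain ⟨τ, ⟨hτ, hτx⟩, hτK⟩ :=
    exists_mem_Ioc_mul_sq_le (lt_min hR (lt_min hτ₀ hη)) hη (4 * K + 1)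
  obtain ⟨hτR, hττ₀, hτη⟩ : τ ≤ R ∧ τ ≤ τ₀ ∧ τ ≤ η := by simpa only [le_min_iff] using hτx
  have hKτ : K * (τ + τ) ^ 2 ≤ η := by linarith [sq_nonneg τ]
  have hτη2 : τ ^ 2 ≤ η := by linarith [mul_nonneg hK.le (sq_nonneg τ)]
  have hbox_le {t : ℝ} (ht : t ≤ τ) : ∀ ρ ∈ Icc R (R + t), ∀ θ ∈ Icc α β, polar ρ θ ∈ Ω :=
    fun ρ hρ => hbox ρ ⟨hρ.1, by linarith [hρ.2]⟩
  refine ⟨α, β, a, τ, hαβ, ha, ⟨hτ, hτR⟩, hbox_le le_rfl, fun s hs t ht u u₀ hu hbd hD => ?_⟩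
  have hs0 := hs.1
  have ht0 := ht.1
  have harc := hbox_le ht.2 (R + t) ⟨by linarith, le_rfl⟩
  have harcD : arcDefect u α β (R + t) ≤ K * (s + t) ^ 2 :=
    hu.arcDefect_le_mul_sq E.isOpen hR hRH hαβ hs0 ht0 (hbox_le ht.2)
      ((E.arcDefect_le hu hα hαβ hβ).trans (mul_le_mul_of_nonneg_left hD hR.le))
  have harcη : arcDefect u α β (R + t) ≤ η :=
    harcD.trans (le_trans (by gcongr; exacts [hs.2, ht.2]) hKτ)
  obtain ⟨l, hl, hal⟩ := hcube (s + t) (by linarith) (arcDefect u α β (R + t) / (R + t)) <| by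
    rw [div_mul_eq_mul_div]
    gcongr
    linarith
  refine hal.trans (hu.le_integral_bump_mul_dampedArea E.isOpen (by linarith) hαβ hl harc
    fun σ hσ => hΨ u _ σ t hu hσ ⟨ht0, ht.2.trans hτη⟩ harc (fun p hp => ?_) harcη
      (hD.trans (le_trans (by gcongr; exact hs.2) hτη2)))
  filter_upwards [hbd p hp] with y hy using mul_le_mul_add_of_abs_sub_le hσ hy

theorem exists_lt_integral_defect (E : Endpoint R c m Ω) (hRH : 1 ≤ 2 * H * R) (M : ℝ) :
    ∃ s > 0, ∀ (u : ℝ × ℝ → ℝ) (u₀ : ℝ), DivCMC H Ω u →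
      (∀ p ∈ polarBox R c \ Ω, ∀ᶠ y in 𝓝[Ω] p, |u y - u₀| ≤ M) →
      s < ∫ θ in 0..c, defect u R θ := by
  have hR := E.R_pos
  obtain ⟨α, β, a, τ, hαβ, ha, hτ, hbox, hle⟩ := E.exists_forall_div_le_integral hRH M
  obtain ⟨s, hs, hlog⟩ := exists_lt_mul_log (mul_pos hR ha) hτ.1
    ((β - α) * (2 * R * (1 + 4 * |H|) + 16 / (β - α)) * τ + 6 * R * (β - α))
  refine ⟨s ^ 2, pow_pos hs.1 2, fun u u₀ hu hbd => ?_⟩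
  by_contra! hD
  refine hlog.not_ge (hu.mul_log_le (u₀ := u₀) E.isOpen hR hαβ hτ.1 hτ.2 hs.1 hbox fun ρ hρ => ?_)
  have := hle s hs (ρ - R) ⟨by linarith [hρ.1], by linarith [hρ.2]⟩ u u₀ hu hbd hD
  rwa [add_sub_cancel] at this

end Endpoint

end DefectLowerBound

/-! ### Endpoints of a divergence line -/

/-- The polar angle of a point, in `(0, 2π)` off the positive horizontal axis. -/
def angle (q : ℝ × ℝ) : ℝ := Complex.arg ⟨-q.1, -q.2⟩ + π

section Angle

variable {R : ℝ} {q : ℝ × ℝ} {L : Set (ℝ × ℝ)}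

lemma neg_mem_slitPlane (hR : 0 < R) (hq : dot q q = R ^ 2) (hne : q ≠ polar R 0) :
    (⟨-q.1, -q.2⟩ : ℂ) ∈ Complex.slitPlane := by
  by_contra h
  simp only [Complex.mem_slitPlane_iff, not_or, not_lt, not_not, neg_nonpos, neg_eq_zero] at h
  refine hne (Prod.ext ?_ ?_)
  · simp only [dot, h.2] at hq
    have : q.1 = R := by
      rw [← sq_eq_sq₀ h.1 hR.le]; linarith
    simpa [polar, radial] using this
  · simpa [polar, radial] using h.2

lemma angle_mem_Ioo (hR : 0 < R) (hq : dot q q = R ^ 2) (hne : q ≠ polar R 0) :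
    angle q ∈ Ioo 0 (2 * π) := by
  have hlt := (Complex.mem_slitPlane_iff_arg.1 (neg_mem_slitPlane hR hq hne)).1
  have hle := Complex.arg_le_pi ⟨-q.1, -q.2⟩
  exact ⟨by linarith [Complex.neg_pi_lt_arg ⟨-q.1, -q.2⟩, angle.eq_def q],
    by linarith [hle.lt_of_ne hlt, angle.eq_def q]⟩

lemma continuousAt_angle (hR : 0 < R) (hq : dot q q = R ^ 2) (hne : q ≠ polar R 0) :
    ContinuousAt angle q := by
  have hneg : Continuous fun p : ℝ × ℝ => (⟨-p.1, -p.2⟩ : ℂ) :=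
    Complex.equivRealProdCLM.symm.continuous.comp (by fun_prop : Continuous fun p : ℝ × ℝ => -p)
  exact (ContinuousAt.comp (f := fun p : ℝ × ℝ => (⟨-p.1, -p.2⟩ : ℂ))
    (Complex.continuousAt_arg (neg_mem_slitPlane hR hq hne)) hneg.continuousAt).add_const π

lemma polar_angle (hR : 0 < R) (hq : dot q q = R ^ 2) : polar R (angle q) = q := by
  have hnorm : ‖(⟨-q.1, -q.2⟩ : ℂ)‖ = R := by
    rw [← sq_eq_sq₀ (norm_nonneg _) hR.le, Complex.sq_norm, Complex.normSq_mk, ← hq, dot]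
    ring
  have hne : (⟨-q.1, -q.2⟩ : ℂ) ≠ 0 := norm_pos_iff.1 (hnorm ▸ hR)
  simp only [polar, radial, angle, cos_add_pi, sin_add_pi, Complex.cos_arg hne, Complex.sin_arg,
    hnorm]
  ext <;> simp [field]

-- The sign `ε` records the side of the endpoint on which the arc lies.
lemma exists_forall_polar_mem_of_mem_closure (hR : 0 < R) (hL : IsConnected L)
    (hcirc : ∀ q ∈ L, dot q q = R ^ 2) (hP : polar R 0 ∉ L) (hPL : polar R 0 ∈ closure L) :
    ∃ ε : ℝ, (ε = 1 ∨ ε = -1) ∧ ∃ c > 0, ∀ θ ∈ Ioc 0 c, polar R (ε * θ) ∈ L := by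
  have hne : ∀ q ∈ L, q ≠ polar R 0 := fun q hq h => hP (h ▸ hq)
  have hIoo : ∀ q ∈ L, angle q ∈ Ioo 0 (2 * π) := fun q hq =>
    angle_mem_Ioo hR (hcirc q hq) (hne q hq)
  have hmem : ∀ θ ∈ angle '' L, polar R θ ∈ L := by
    rintro - ⟨q, hq, rfl⟩
    rwa [polar_angle hR (hcirc q hq)]
  have hconn : OrdConnected (angle '' L) := (hL.image angle fun q hq =>
    (continuousAt_angle hR (hcirc q hq) (hne q hq)).continuousWithinAt).isPreconnected.ordConnected
  have accumulate (η : ℝ) (hη : 0 < η) : ∃ q ∈ L, angle q < η ∨ 2 * π - η < angle q := by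
    by_contra! h
    have hsub : L ⊆ polar R '' Icc η (2 * π - η) := fun q hq =>
      ⟨angle q, h q hq, polar_angle hR (hcirc q hq)⟩
    obtain ⟨θ, hθ, hθP⟩ := closure_minimal hsub
      (isCompact_Icc.image (continuous_polar R)).isClosed hPL
    have hcos : cos θ = 1 := by simpa [polar, radial, hR.ne'] using congrArg Prod.fst hθP
    have := (cos_eq_one_iff_of_lt_of_lt (by linarith [hθ.1, pi_pos]) (by linarith [hθ.2])).1 hcos
    linarith [hθ.1]
  obtain ⟨q₀, hq₀⟩ := hL.nonempty
  by_cases hside : ∀ η > 0, ∃ q ∈ L, angle q < η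
  · refine ⟨1, Or.inl rfl, angle q₀, (hIoo q₀ hq₀).1, fun θ hθ => ?_⟩
    obtain ⟨q, hq, hqθ⟩ := hside θ hθ.1
    rw [one_mul]
    exact hmem θ (hconn.out (mem_image_of_mem _ hq) (mem_image_of_mem _ hq₀) ⟨hqθ.le, hθ.2⟩)
  · push Not at hside
    obtain ⟨η, hη, hside⟩ := hside
    refine ⟨-1, Or.inr rfl, 2 * π - angle q₀, sub_pos.2 (hIoo q₀ hq₀).2, fun θ hθ => ?_⟩
    obtain ⟨q, hq, hqη⟩ := accumulate (min η θ) (lt_min hη hθ.1)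
    have hqθ : 2 * π - θ < angle q := by
      rcases hqη with hqη | hqη
      · exact absurd (hqη.trans_le (min_le_left _ _)) (hside q hq).not_gt
      · linarith [min_le_right η θ]
    have := hmem (2 * π - θ) (hconn.out (mem_image_of_mem _ hq₀) (mem_image_of_mem _ hq)
      ⟨by linarith [hθ.2], hqθ.le⟩)
    rwa [polar, radial, cos_two_pi_sub, sin_two_pi_sub, ← cos_neg, ← sin_neg, ← neg_one_mul,
      ← radial, ← polar] at this

end Angle

section EndpointOfArc

variable {R : ℝ} {z P a b : ℝ × ℝ} {L : Set (ℝ × ℝ)}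

lemma frame_dot_dot (ha : dot a a = 1) (hb : dot b b = 1) (hab : dot a b = 0) (z q : ℝ × ℝ) :
    frame z a b (dot (q - z) a, dot (q - z) b) = q := by
  obtain ⟨ε, hε, rfl⟩ := exists_eq_rotation_of_orthonormal ha hb hab
  simp only [dot] at ha
  ext <;> simp only [frame, dot, Prod.fst_add, Prod.snd_add, Prod.fst_sub, Prod.snd_sub,
    Prod.smul_fst, Prod.smul_snd, smul_eq_mul]
  · linear_combination (q.1 - z.1) * ha + ((q.1 - z.1) * a.2 - (q.2 - z.2) * a.1) * a.2 * hε
  · linear_combination (q.2 - z.2) * ha + ((q.2 - z.2) * a.1 - (q.1 - z.1) * a.2) * a.1 * hε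

lemma frame_sub_frame_dot (z a b x y v : ℝ × ℝ) :
    dot (frame z a b x - frame z a b y) v = dot (x - y) (dot a v, dot b v) := by
  simp only [frame, dot, Prod.fst_add, Prod.snd_add, Prod.fst_sub, Prod.snd_sub,
    Prod.smul_fst, Prod.smul_snd, smul_eq_mul]
  ring

lemma frame_sub_frame_dot_self (ha : dot a a = 1) (hb : dot b b = 1) (hab : dot a b = 0)
    (z x y : ℝ × ℝ) :
    dot (frame z a b x - frame z a b y) (frame z a b x - frame z a b y) = dot (x - y) (x - y) := by
  simp only [dot] at ha hb hab
  simp only [frame, dot, Prod.fst_add, Prod.snd_add, Prod.fst_sub, Prod.snd_sub,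
    Prod.smul_fst, Prod.smul_snd, smul_eq_mul]
  linear_combination (x.1 - y.1) ^ 2 * ha + (x.2 - y.2) ^ 2 * hb
    + 2 * (x.1 - y.1) * (x.2 - y.2) * hab

lemma exists_frame_polar_zero_eq (hR : 0 < R) (hP : enorm2 (P - z) = R) :
    ∃ a b, dot a a = 1 ∧ dot b b = 1 ∧ dot a b = 0 ∧ frame z a b (polar R 0) = P := by
  have hPR : dot (P - z) (P - z) = R ^ 2 := by rw [← enorm2_sq, hP]
  have ha : dot (R⁻¹ • (P - z)) (R⁻¹ • (P - z)) = 1 := by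
    rw [smul_dot, dot_comm, smul_dot, hPR]; field_simp
  set a := R⁻¹ • (P - z) with ha_def
  refine ⟨a, (-a.2, a.1), ha, ?_, ?_, ?_⟩
  · rw [← ha]; simp only [dot]; ring
  · simp only [dot]; ring
  · simp [frame, polar, radial, ha_def, hR.ne']

lemma exists_frame_forall_polar_mem (hR : 0 < R) (hL : IsConnected L)
    (hcirc : ∀ q ∈ L, enorm2 (q - z) = R) (hP : P ∉ L) (hPL : P ∈ closure L) :
    ∃ a b, dot a a = 1 ∧ dot b b = 1 ∧ dot a b = 0 ∧ frame z a b (polar R 0) = P ∧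
      ∃ c > 0, ∀ θ ∈ Ioc 0 c, frame z a b (polar R θ) ∈ L := by
  have hPz : enorm2 (P - z) = R := closure_minimal hcirc
    (isClosed_eq (by unfold enorm2; fun_prop) continuous_const) hPL
  obtain ⟨a, b, ha, hb, hab, rfl⟩ := exists_frame_polar_zero_eq hR hPz
  set coord : ℝ × ℝ → ℝ × ℝ := fun q => (dot (q - z) a, dot (q - z) b) with hcoord
  have hframe : ∀ q, frame z a b (coord q) = q := frame_dot_dot ha hb hab z
  have coord_frame (x : ℝ × ℝ) : coord (frame z a b x) = x := by
    have hz : frame z a b 0 = z := by simp [frame]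
    have hx := frame_sub_frame_dot z a b x 0
    rw [hz, sub_zero] at hx
    simp only [hcoord, hx, ha, hb, hab, dot_comm b a]
    simp [dot]
  have hcont : Continuous coord := by simp only [hcoord, dot]; fun_prop
  have mem_image {x : ℝ × ℝ} (hx : x ∈ coord '' L) : frame z a b x ∈ L := by
    obtain ⟨q, hq, rfl⟩ := hx
    rwa [hframe]
  obtain ⟨ε, hε, c, hc, harc⟩ := exists_forall_polar_mem_of_mem_closure hR
    (hL.image coord hcont.continuousOn) (by
      rintro - ⟨q, hq, rfl⟩
      rw [← hcirc q hq, enorm2_sq, ← dot_sq_add_dot_sq_of_orthonormal ha hb hab (q - z),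
        sq, sq]
      rfl)
    (fun h => hP (mem_image h))
    (coord_frame (polar R 0) ▸ image_closure_subset_closure_image hcont (mem_image_of_mem _ hPL))
  refine ⟨a, ε • b, ha, ?_, ?_, ?_, c, hc, fun θ hθ => ?_⟩
  · rw [smul_dot, dot_comm, smul_dot, hb]; rcases hε with rfl | rfl <;> norm_num
  · rw [dot_comm, smul_dot, dot_comm, hab, mul_zero]
  · simp [frame, polar, radial]
  · have h := mem_image (harc θ hθ)
    rcases hε with rfl | rfl
    · simpa using h
    · simpa [frame, polar, radial] using h

end EndpointOfArc

section Conclusion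

variable {H R c θ M u₀ : ℝ} {z P w a b m p q : ℝ × ℝ} {Ω U V : Set (ℝ × ℝ)} {v : ℝ × ℝ → ℝ}

lemma snd_pos_of_arc_subset_disc (hR : 0 < R) (hm : dot m m = 1) (hθ : θ ∈ Ioo 0 π)
    (h : dot (polar R θ - polar R 0) (polar R θ - polar R 0) <
      2 * R * dot (polar R θ - polar R 0) m) : 0 < m.2 := by
  have hsin := sin_pos_of_mem_Ioo hθ
  rw [dot_polar_sub_polar_zero] at h
  simp only [dot, polar, radial, Prod.fst_sub, Prod.snd_sub, Prod.smul_fst, Prod.smul_snd,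
    smul_eq_mul, cos_zero, sin_zero] at h hm
  have hm1 : -1 ≤ m.1 := by nlinarith [mul_self_nonneg m.2]
  have tangential : 0 ≤ R ^ 2 * ((1 - cos θ) * (1 + m.1)) :=
    mul_nonneg (sq_nonneg R) (mul_nonneg (by linarith [cos_le_one θ]) (by linarith))
  have normal : 0 < m.2 * (R ^ 2 * sin θ) := by linarith
  exact pos_of_mul_pos_left normal (by positivity)

lemma eventually_polarBox_subset (hV : V ∈ 𝓝 (polar R 0)) : ∀ᶠ c in 𝓝[>] 0, polarBox R c ⊆ V := by
  have hpre : (fun x : ℝ × ℝ => polar x.1 x.2) ⁻¹' V ∈ 𝓝 (R, 0) :=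
    contDiff_polar.continuous.continuousAt hV
  obtain ⟨r, hr, hball⟩ := Metric.mem_nhds_iff.1 hpre
  have small : ∀ᶠ c in 𝓝[>] (0 : ℝ), |R| * c < r ∧ c < r :=
    Eventually.filter_mono nhdsWithin_le_nhds <|
      ((continuous_const.mul continuous_id).tendsto' 0 0 (mul_zero |R|)).eventually_lt_const hr
        |>.and (eventually_lt_nhds hr)
  filter_upwards [small, self_mem_nhdsWithin] with c ⟨hRc, hc⟩ hc0
  rintro - ⟨ρ, hρ, θ, hθ, rfl⟩
  refine hball (show (ρ, θ) ∈ _ from ?_)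
  rw [Metric.mem_ball, Prod.dist_eq, max_lt_iff, dist_eq, dist_eq, sub_zero]
  have := mul_le_mul_of_nonneg_right (le_abs_self R) (le_of_lt hc0)
  exact ⟨(abs_le.2 ⟨by linarith [hρ.1], by linarith [hρ.2]⟩).trans_lt hRc,
    (abs_le.2 hθ).trans_lt hc⟩

lemma Endpoint.exists_of_arc (hΩ : IsOpen Ω) (hR : 0 < R) (hm : dot m m = 1)
    (hV : V ∈ 𝓝 (polar R 0)) (hdisc : ∀ p ∈ Ω ∩ V,
      dot (p - polar R 0) (p - polar R 0) < 2 * R * dot (p - polar R 0) m)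
    (hc : 0 < c) (harc : ∀ θ ∈ Ioc 0 c, polar R θ ∈ Ω) :
    ∃ δ ∈ Ioc 0 c, polarBox R δ ⊆ V ∧ Endpoint R δ m Ω := by
  have small : ∀ᶠ δ in 𝓝[>] (0 : ℝ), polarBox R δ ⊆ V ∧ δ ∈ Ioc 0 (min c 1) :=
    (eventually_polarBox_subset hV).and (Ioc_mem_nhdsGT (lt_min hc one_pos))
  obtain ⟨δ₀, hboxδ₀, hδ₀⟩ := small.exists
  have hδ₀c := hδ₀.2.trans (min_le_left _ _)
  have hm2 : 0 < m.2 := snd_pos_of_arc_subset_disc hR hm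
    ⟨hδ₀.1, by linarith [hδ₀.2.trans (min_le_right _ _), pi_gt_three]⟩
    (hdisc _ ⟨harc δ₀ ⟨hδ₀.1, hδ₀c⟩,
      hboxδ₀ (polar_mem_polarBox hR.le (abs_of_pos hδ₀.1).le)⟩)
  set δ := min δ₀ (m.2 / 400)
  have hδ : 0 < δ := lt_min hδ₀.1 (by positivity)
  have hδc : δ ≤ c := (min_le_left _ _).trans hδ₀c
  have hbox : polarBox R δ ⊆ V :=
    (polarBox_subset_polarBox hR.le (min_le_left _ _)).trans hboxδ₀
  exact ⟨δ, ⟨hδ, hδc⟩, hbox, hR, hδ, hm, by linarith [min_le_right δ₀ (m.2 / 400)], hΩ,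
    fun p hp hpδ => hdisc p ⟨hp, hbox hpδ⟩, fun θ hθ => harc θ ⟨hθ.1, hθ.2.trans hδc⟩⟩

lemma Endpoint.exists_of_frame (hR : 0 < R) (hΩ : IsOpen Ω) (ha : dot a a = 1) (hb : dot b b = 1)
    (hab : dot a b = 0) (hP : frame z a b (polar R 0) = P) (hw : enorm2 (P - w) = R)
    (hV : V ∈ 𝓝 P) (hdisc : Ω ∩ V ⊆ {q | enorm2 (q - w) < R}) (hc : 0 < c)
    (harc : ∀ θ ∈ Ioc 0 c, frame z a b (polar R θ) ∈ Ω) :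
    ∃ δ ∈ Ioc 0 c, ∃ m, polarBox R δ ⊆ frame z a b ⁻¹' V ∧
      Endpoint R δ m (frame z a b ⁻¹' Ω) := by
  have hcont : Continuous (frame z a b) := (contDiff_frame (n := 0)).continuous
  set e := R⁻¹ • (w - P) with he_def
  have hRe : w - P = R • e := by rw [he_def, smul_inv_smul₀ hR.ne']
  have hPw : dot (P - w) (P - w) = R ^ 2 := by rw [← enorm2_sq, hw]
  have he : dot e e = 1 := by
    rw [← neg_sub, hRe] at hPw
    simp only [dot, Prod.fst_neg, Prod.snd_neg, Prod.smul_fst, Prod.smul_snd, smul_eq_mul] at hPw ⊢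
    exact mul_left_cancel₀ (pow_ne_zero 2 hR.ne') (by linarith)
  have hm : dot (dot a e, dot b e) (dot a e, dot b e) = 1 := by
    rw [← he, ← dot_sq_add_dot_sq_of_orthonormal ha hb hab e, sq, sq, dot_comm e a, dot_comm e b]
    rfl
  have hpre : frame z a b ⁻¹' V ∈ 𝓝 (polar R 0) := hcont.continuousAt (by rwa [hP])
  suffices ∀ p ∈ frame z a b ⁻¹' Ω ∩ frame z a b ⁻¹' V,
      dot (p - polar R 0) (p - polar R 0) <
        2 * R * dot (p - polar R 0) (dot a e, dot b e) by
    obtain ⟨δ, hδ, hbox, E⟩ :=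
      Endpoint.exists_of_arc (hΩ.preimage hcont) hR hm hpre this hc harc
    exact ⟨δ, hδ, _, hbox, E⟩
  intro p hp
  have hlt : dot (frame z a b p - w) (frame z a b p - w) < R ^ 2 := by
    rw [← enorm2_sq]
    exact pow_lt_pow_left₀ (hdisc hp) (sqrt_nonneg _) two_ne_zero
  have hsplit : frame z a b p - w = (frame z a b p - P) - R • e := by rw [← hRe]; abel
  rw [← frame_sub_frame_dot, ← frame_sub_frame_dot_self ha hb hab z, hP]
  rw [hsplit] at hlt
  simp only [dot, Prod.fst_sub, Prod.snd_sub, Prod.smul_fst, Prod.smul_snd, smul_eq_mul]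
    at hlt he ⊢
  linarith [congrArg (R ^ 2 * ·) he]

lemma tendsto_fluxField {u : ℕ → ℝ × ℝ → ℝ}
    (h : Tendsto (fun n => normalVec (u n) q) atTop
      (𝓝 (2 * H * (z.1 - q.1), 2 * H * (z.2 - q.2), 0))) :
    Tendsto (fun n => fluxField (u n) q) atTop (𝓝 ((2 * H) • (q - z))) := by
  have hcont : Continuous fun x : ℝ × ℝ × ℝ => (-x.1, -x.2.1) := by fun_prop
  convert (hcont.tendsto _).comp h using 1
  · funext n
    ext <;> simp only [fluxField, grad, normalVec, Function.comp_apply, Prod.smul_fst,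
      Prod.smul_snd, smul_eq_mul] <;> ring
  · congr 1
    ext <;> simp only [Prod.smul_fst, Prod.smul_snd, Prod.fst_sub, Prod.snd_sub, smul_eq_mul] <;>
      ring

lemma tendsto_defect_comp_frame (ha : dot a a = 1) (hb : dot b b = 1) (hab : dot a b = 0)
    (hHR : 2 * H * R = 1) {u : ℕ → ℝ × ℝ → ℝ}
    (hu : ∀ n, DifferentiableAt ℝ (u n) (frame z a b (polar R θ)))
    (hlim : Tendsto (fun n => fluxField (u n) (frame z a b (polar R θ))) atTop
      (𝓝 ((2 * H) • (frame z a b (polar R θ) - z)))) :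
    Tendsto (fun n => defect (u n ∘ frame z a b) R θ) atTop (𝓝 0) := by
  set q := frame z a b (polar R θ) with hq
  set e := cos θ • a + sin θ • b with he_def
  have hqz : (2 * H) • (q - z) = e := by
    rw [hq, frame, add_sub_cancel_left, smul_add, smul_smul, smul_smul]
    simp only [polar, radial, Prod.smul_mk, smul_eq_mul, ← mul_assoc, hHR, one_mul, he_def]
  have he : dot e e = 1 := by
    simp only [dot, he_def, Prod.fst_add, Prod.snd_add, Prod.smul_fst, Prod.smul_snd,
      smul_eq_mul] at ha hb hab ⊢
    linear_combination cos θ ^ 2 * ha + sin θ ^ 2 * hb + 2 * cos θ * sin θ * hab +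
      sin_sq_add_cos_sq θ
  have hdefect (n : ℕ) : defect (u n ∘ frame z a b) R θ = 1 - dot (fluxField (u n) q) e := by
    rw [defect, fluxField_comp_frame ha hb hab (hu n)]
    simp only [dot, he_def, radial, Prod.fst_add, Prod.snd_add, Prod.smul_fst, Prod.smul_snd,
      smul_eq_mul]
    ring
  simp_rw [hdefect]
  have hcont : Continuous fun x => 1 - dot x e := by unfold dot; fun_prop
  exact ((hcont.tendsto' e 0 (by rw [he, sub_self])).comp (hqz ▸ hlim) :)

lemma tendsto_integral_defect (hHR : 2 * H * R = 1) (hΩ : IsOpen Ω) (ha : dot a a = 1)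
    (hb : dot b b = 1) (hab : dot a b = 0) (hc : 0 ≤ c)
    (harc : ∀ θ ∈ Ioc 0 c, frame z a b (polar R θ) ∈ Ω) {u : ℕ → ℝ × ℝ → ℝ}
    (hu : ∀ n, DivCMC H Ω (u n))
    (hlim : ∀ θ ∈ Ioc 0 c, Tendsto (fun n => fluxField (u n) (frame z a b (polar R θ))) atTop
      (𝓝 ((2 * H) • (frame z a b (polar R θ) - z)))) :
    Tendsto (fun n => ∫ θ in 0..c, defect (u n ∘ frame z a b) R θ) atTop (𝓝 0) := by
  have hopen : IsOpen (frame z a b ⁻¹' Ω) := hΩ.preimage (contDiff_frame (n := 0)).continuous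
  suffices Tendsto (fun n => ∫ θ in 0..c, defect (u n ∘ frame z a b) R θ) atTop
      (𝓝 (∫ _ in 0..c, 0)) by rwa [intervalIntegral.integral_zero] at this
  refine intervalIntegral.tendsto_integral_filter_of_dominated_convergence (fun _ => 2)
    (Eventually.of_forall fun n => ?_)
    (Eventually.of_forall fun n => Eventually.of_forall fun θ _ => ?_)
    intervalIntegrable_const (Eventually.of_forall fun θ hθ => ?_)
  · rw [uIoc_of_le hc]
    exact (((hu n).comp_frame hΩ ha hb hab).continuousOn_defect hopen harc).aestronglyMeasurable
      measurableSet_Ioc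
  · rw [norm_eq_abs, abs_of_nonneg (defect_nonneg _ _ _)]
    exact defect_le_two _ _ _
  · rw [uIoc_of_le hc] at hθ
    exact tendsto_defect_comp_frame ha hb hab hHR
      (fun n => ((hu n).contDiffAt hΩ (harc θ hθ)).differentiableAt two_ne_zero) (hlim θ hθ)

lemma eventually_abs_sub_le (hΩ : IsOpen Ω)
    (hv : ContinuousOn v (Ω ∪ frontier Ω ∩ U)) (hM : ∀ q ∈ frontier Ω ∩ U, |v q - u₀| ≤ M)
    (hp : p ∈ U \ Ω) : ∀ᶠ y in 𝓝[Ω] p, |v y - u₀| ≤ M + 1 := by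
  by_cases hpc : p ∈ closure Ω
  · have hpF : p ∈ frontier Ω ∩ U := ⟨hΩ.frontier_eq ▸ ⟨hpc, hp.2⟩, hp.1⟩
    have hcont : Tendsto v (𝓝[Ω] p) (𝓝 (v p)) :=
      (hv p (Or.inr hpF)).mono_left (nhdsWithin_mono p subset_union_left)
    exact (hcont.sub_const u₀).abs.eventually_le_const (by linarith [hM p hpF])
  · rw [mem_closure_iff_nhdsWithin_neBot, not_neBot] at hpc
    simp [hpc]

end Conclusion

theorem stmt_14_general {H : ℝ} (hH : 0 < H) {Ω U V : Set (ℝ × ℝ)} (hΩ : IsOpen Ω) (hU : IsOpen U)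
    {P w : ℝ × ℝ} (hPΩ : P ∉ Ω) (hPU : P ∈ U) (hPw : enorm2 (P - w) = 1 / (2 * H))
    (hV : IsOpen V) (hPV : P ∈ V) (hcurv : Ω ∩ V ⊆ {q | enorm2 (q - w) < 1 / (2 * H)})
    {u : ℕ → ℝ × ℝ → ℝ} (hu : ∀ n, IsCMCSolution H Ω (u n))
    (hcont : ∀ n, ContinuousOn (u n) (Ω ∪ frontier Ω ∩ U)) {M : ℝ}
    (hM : ∀ n, ∀ Q ∈ frontier Ω ∩ U, |u n Q - u n P| ≤ M) {L : Set (ℝ × ℝ)}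
    (hL : IsDivergenceLine H Ω u L) : P ∉ closure L := by
  intro hPL
  obtain ⟨z, hLΩ, hcirc, hconn, -, φ, -, hlim⟩ := hL
  have hR : 0 < 1 / (2 * H) := by positivity
  have hHR : 2 * H * (1 / (2 * H)) = 1 := mul_one_div_cancel (by positivity)
  set R := 1 / (2 * H)
  obtain ⟨a, b, ha, hb, hab, hP, c, hc, harc⟩ :=
    exists_frame_forall_polar_mem hR hconn hcirc (fun h => hPΩ (hLΩ h)) hPL
  obtain ⟨δ, hδ, m, hbox, E⟩ := Endpoint.exists_of_frame hR hΩ ha hb hab hP hPw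
    (inter_mem (hV.mem_nhds hPV) (hU.mem_nhds hPU)) (fun q hq => hcurv ⟨hq.1, hq.2.1⟩) hc
    fun θ hθ => hLΩ (harc θ hθ)
  have hdiv (n : ℕ) : DivCMC H Ω (u n) := (hu n).divCMC hΩ
  have htendsto := tendsto_integral_defect hHR hΩ ha hb hab hδ.1.le (fun θ hθ => E.arc θ hθ)
    (fun n => hdiv (φ n)) fun θ hθ =>
      tendsto_fluxField (hlim _ (harc θ ⟨hθ.1, hθ.2.trans hδ.2⟩))
  obtain ⟨s, hs, hlt⟩ := E.exists_lt_integral_defect hHR.ge (M + 1)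
  obtain ⟨n, hn⟩ := (htendsto.eventually_lt_const hs).exists
  refine hn.not_gt (hlt _ (u (φ n) P) ((hdiv (φ n)).comp_frame hΩ ha hb hab) fun p hp => ?_)
  have hcontF := (contDiff_frame (n := 0) (z := z) (a := a) (b := b)).continuous
  exact (hcontF.continuousWithinAt.tendsto_nhdsWithin (mapsTo_preimage _ Ω)).eventually
    (eventually_abs_sub_le hΩ (hcont (φ n)) (hM (φ n)) ⟨(hbox hp.1).2, hp.2⟩)

/-- if the oscillations of the `u_n` on a boundary arc `C` of exterior
curvature at least `2H` are uniformly bounded, then no divergence line has an endpoint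
on `C`. -/
theorem stmt_14 (H : ℝ) (hH : 0 < H) (Ω : Set (ℝ × ℝ)) (hΩ : IsOpen Ω)
    (hΩconn : IsConnected Ω) (C : Set (ℝ × ℝ)) (hCne : C.Nonempty)
    (hCconn : IsPreconnected C)
    (hCopen : ∃ U : Set (ℝ × ℝ), IsOpen U ∧ C = frontier Ω ∩ U)
    (hcurv : ∀ P ∈ C, ∃ z : ℝ × ℝ, enorm2 (P - z) = 1 / (2 * H) ∧
      ∃ V : Set (ℝ × ℝ), IsOpen V ∧ P ∈ V ∧
        Ω ∩ V ⊆ {q : ℝ × ℝ | enorm2 (q - z) < 1 / (2 * H)})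
    (u : ℕ → ℝ × ℝ → ℝ) (hu : ∀ n, IsCMCSolution H Ω (u n))
    (hcont : ∀ n, ContinuousOn (u n) (Ω ∪ C))
    (M : ℝ) (hM : ∀ n, ∀ P ∈ C, ∀ Q ∈ C, u n P - u n Q ≤ M) :
    ∀ L : Set (ℝ × ℝ), IsDivergenceLine H Ω u L → closure L ∩ C = ∅ := by
  intro L hL
  obtain ⟨U, hU, rfl⟩ := hCopen
  refine eq_empty_of_forall_notMem fun P ⟨hPL, hP⟩ => ?_
  obtain ⟨w, hw, V, hV, hPV, hdisc⟩ := hcurv P hP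
  exact stmt_14_general hH hΩ hU (hΩ.frontier_eq ▸ hP.1 : P ∈ closure Ω \ Ω).2 hP.2 hw hV hPV hdisc
    hu hcont (fun n Q hQ => abs_sub_le_iff.2 ⟨hM n Q hQ P hP, hM n P hP Q hQ⟩) hL hPL
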